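/- There exists A such that for every odd integer a ≥ A the following holds, with r = ⌊a·exp(−√(log a))⌋: there exist real numbers ε_a, ε″_a, ω_a, φ_a with 0 < ε″_a < ε_a ≤ 2^{6(r+1)}/r^{2(a−6r)} < 1 and φ_a ≢ π/2 (mod π), and real sequences u_n → 0, v_n → 0, w_n → 0 (as n → ∞) such that for all sufficiently large n, |S_n| = ε_a^{n(1+u_n)} and |S″_n| = (ε″_a)^{n(1+v_n)} · |cos(nω_a + φ_a) + w_n|. -/

import Mathlib

open scoped BigOperators

/-- Real Pochhammer product: (x)_m = x(x+1)⋯(x+m−1). -/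
noncomputable def poch (x : ℝ) (m : ℕ) : ℝ := ∏ j ∈ Finset.range m, (x + j)

/-- The rational function of t appearing in the series defining S_n and S″_n. -/
noncomputable def Sfun (a r n : ℕ) : ℝ → ℝ := fun t =>
  (poch (t - ((2 * r + 1) * n : ℕ)) (2 * r * n)) ^ 3 *
    (poch (t + (n : ℕ) + 1) (2 * r * n)) ^ 3 /
      (poch (t - (n : ℕ)) (2 * n + 1)) ^ a

/-- S_n = (2n)!^{a−6r} Σ_{t=n+1}^∞ (t−(2r+1)n)_{2rn}³ (t+n+1)_{2rn}³ / (t−n)_{2n+1}^a. -/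
noncomputable def S (a r n : ℕ) : ℝ :=
  ((2 * n).factorial : ℝ) ^ (a - 6 * r) * ∑' m : ℕ, Sfun a r n ((n : ℝ) + 1 + m)

/-- S″_n = ½ (2n)!^{a−6r} Σ_{t=n+1}^∞ d²/dt² [ (t−(2r+1)n)_{2rn}³ (t+n+1)_{2rn}³ / (t−n)_{2n+1}^a ]. -/
noncomputable def Sder (a r n : ℕ) : ℝ :=
  (1 / 2) * ((2 * n).factorial : ℝ) ^ (a - 6 * r) *
    ∑' m : ℕ, deriv (deriv (Sfun a r n)) ((n : ℝ) + 1 + m)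

/-
On the real axis the summand of `S a r n` at `t = n x` is `exp (n (g x + o(1)))` with `g` =
`growthRate a r`, and all summands are nonnegative, so `log |S a r n| / n` tends to the maximum of
`g`. For `Sder`, the kernel `∑ m, (t + m)⁻³` turns the sum of second derivatives into the integral
of a rational function times the kernel over a vertical line `Re t ≈ n c`. By Stirling's formula the
integrand at `t = n x` is `exp (n f(x))` with `f` = `phase a r`, up to explicit factors. There is a
saddle point of `f` extremely close to `2r + 1`, found by a contraction argument, and Laplace's
method on the line through it gives the asymptotics. Only the real part of the integral matters,
whence the cosine; its phase is that of the saddle amplitude, which is not purely imaginary because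
its square times `f''` at the saddle point is nearly real and negative, while `f''` there stays away
from the real axis. Finally, `Re f` increases along the ray from the saddle point to the real point
`2r + 1`, where `Re f` and `g` agree up to the common constant coming from the factorials.
-/

namespace OddZeta

open Complex MeasureTheory Filter Topology Set
open scoped Real ComplexConjugate

section VerticalLines

/-- `f` is holomorphic on the closed half-plane `q ≤ re t` and is `O(|t|⁻²)` there; this is what
shifting a vertical contour to the right requires. -/
structure HalfPlaneDecay (f : ℂ → ℂ) (q : ℝ) : Prop where
  differentiableAt : ∀ t : ℂ, q ≤ t.re → DifferentiableAt ℂ f t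
  bound : ∃ C R : ℝ, ∀ t : ℂ, q ≤ t.re → R ≤ ‖t‖ → ‖f t‖ ≤ C / ‖t‖ ^ 2

variable {f : ℂ → ℂ} {q w : ℝ}

lemma vertical_sub_ne_zero (h : q ≠ w) (s : ℝ) : (q : ℂ) + s * I - w ≠ 0 := by
  intro h'
  have := congrArg Complex.re h'
  simp only [sub_re, add_re, ofReal_re, re_ofReal_mul, I_re, mul_zero, add_zero, zero_re] at this
  exact h (by linarith)

lemma abs_sub_le_norm_vertical_sub (q w s : ℝ) : |q - w| ≤ ‖(q : ℂ) + s * I - w‖ := by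
  simpa using Complex.abs_re_le_norm ((q : ℂ) + s * I - w)

lemma abs_le_norm_vertical (q s : ℝ) : |s| ≤ ‖(q : ℂ) + s * I‖ := by
  simpa using Complex.abs_im_le_norm ((q : ℂ) + s * I)

lemma continuous_vertical (hf : ∀ t : ℂ, q ≤ t.re → DifferentiableAt ℂ f t) :
    Continuous (fun s : ℝ => f (q + s * I)) :=
  continuous_iff_continuousAt.2 fun s =>
    ContinuousAt.comp (f := fun s : ℝ => (q : ℂ) + s * I)
      (hf (q + s * I) (by simp)).continuousAt (by fun_prop)

-- Cauchy's theorem on the rectangle with vertices `q ± iR`, `R ± iR`.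
lemma norm_integral_vertical_le (hf : ∀ t : ℂ, q ≤ t.re → DifferentiableAt ℂ f t) {R M : ℝ}
    (hR : 0 < R) (hqR : q ≤ R) (hM : ∀ t : ℂ, q ≤ t.re → R ≤ ‖t‖ → ‖f t‖ ≤ M) :
    ‖∫ s in (-R)..R, f (q + s * I)‖ ≤ 2 * M * (R - q) + 2 * M * R := by
  have hrect := Complex.integral_boundary_rect_eq_zero_of_differentiableOn f
    (⟨q, -R⟩ : ℂ) (⟨R, R⟩ : ℂ) fun t ht => by
      have hre := ht.1
      simp only [mem_preimage, uIcc_of_le hqR] at hre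
      exact (hf t hre.1).differentiableWithinAt
  simp only [smul_eq_mul] at hrect
  have horizontal : ∀ y : ℝ, |y| = R → ‖∫ x : ℝ in q..R, f (x + y * I)‖ ≤ M * |R - q| := by
    intro y hy
    refine intervalIntegral.norm_integral_le_of_norm_le_const fun x hx => hM _ ?_ ?_
    · rw [uIoc_of_le hqR] at hx
      simpa using hx.1.le
    · exact hy ▸ abs_le_norm_vertical x y
  have right : ‖∫ s : ℝ in (-R)..R, f (R + s * I)‖ ≤ M * |R - (-R)| := by
    refine intervalIntegral.norm_integral_le_of_norm_le_const fun s _ => hM _ (by simpa) ?_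
    simpa [abs_of_pos hR] using Complex.abs_re_le_norm ((R : ℂ) + s * I)
  have hbot := horizontal (-R) (by rw [abs_neg, abs_of_pos hR])
  have htop := horizontal R (abs_of_pos hR)
  rw [abs_of_nonneg (sub_nonneg.2 hqR)] at hbot htop
  rw [sub_neg_eq_add, abs_of_pos (by linarith)] at right
  have left : I * ∫ s : ℝ in (-R)..R, f (q + s * I) =
      (∫ x : ℝ in q..R, f (x + (-R : ℝ) * I)) - (∫ x : ℝ in q..R, f (x + (R : ℝ) * I)) +
      I * ∫ s : ℝ in (-R)..R, f (R + s * I) := by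
    linear_combination -hrect
  calc ‖∫ s in (-R)..R, f (q + s * I)‖
      = ‖I * ∫ s : ℝ in (-R)..R, f (q + s * I)‖ := by simp
    _ ≤ ‖∫ x : ℝ in q..R, f (x + (-R : ℝ) * I)‖ + ‖∫ x : ℝ in q..R, f (x + (R : ℝ) * I)‖ +
        ‖∫ s : ℝ in (-R)..R, f (R + s * I)‖ := by
      rw [left]
      refine (norm_add_le _ _).trans ?_
      rw [norm_mul, norm_I, one_mul]
      gcongr
      exact norm_sub_le _ _
    _ ≤ 2 * M * (R - q) + 2 * M * R := by linarith

namespace HalfPlaneDecay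

lemma exists_bound (hf : HalfPlaneDecay f q) : ∃ C R : ℝ, 0 ≤ C ∧ 1 ≤ R ∧
    ∀ t : ℂ, q ≤ t.re → R ≤ ‖t‖ → ‖f t‖ ≤ C / ‖t‖ ^ 2 := by
  obtain ⟨C, R, h⟩ := hf.bound
  exact ⟨|C|, max R 1, abs_nonneg C, le_max_right _ _, fun t ht hR =>
    (h t ht ((le_max_left _ _).trans hR)).trans (by gcongr; exact le_abs_self C)⟩

lemma continuous_vertical (hf : HalfPlaneDecay f q) :
    Continuous (fun s : ℝ => f (q + s * I)) :=
  OddZeta.continuous_vertical hf.differentiableAt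

lemma integrable_vertical (hf : HalfPlaneDecay f q) :
    Integrable (fun s : ℝ => f (q + s * I)) := by
  obtain ⟨C, R, hC, hR1, hb⟩ := hf.exists_bound
  refine hf.continuous_vertical.locallyIntegrable.integrable_of_isBigO_cocompact
    (g := fun s : ℝ => (1 + s ^ 2)⁻¹) (Asymptotics.IsBigO.of_bound (2 * C) ?_)
    (integrable_inv_one_add_sq.integrableAtFilter _)
  filter_upwards [tendsto_norm_cocompact_atTop.eventually_ge_atTop R] with s hs
  have hs1 : 1 ≤ s ^ 2 := by
    rw [← sq_abs]
    exact one_le_pow₀ (hR1.trans hs)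
  have hsq : s ^ 2 ≤ ‖(q : ℂ) + s * I‖ ^ 2 := by
    rw [← sq_abs]
    gcongr
    exact abs_le_norm_vertical q s
  calc ‖f (q + s * I)‖ ≤ C / ‖(q : ℂ) + s * I‖ ^ 2 :=
        hb _ (by simp) (hs.trans (abs_le_norm_vertical q s))
    _ ≤ C / s ^ 2 := by gcongr
    _ ≤ 2 * C / (1 + s ^ 2) := by
      rw [div_le_div_iff₀ (by positivity) (by positivity)]
      nlinarith
    _ = 2 * C * ‖(1 + s ^ 2)⁻¹‖ := by
      rw [Real.norm_of_nonneg (by positivity), div_eq_mul_inv]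

lemma integral_vertical_eq_zero (hf : HalfPlaneDecay f q) : ∫ s : ℝ, f (q + s * I) = 0 := by
  obtain ⟨C, R₀, hC, hR1, hb⟩ := hf.exists_bound
  have hlim : Tendsto (fun R : ℝ => ∫ s in (-R)..R, f (q + s * I)) atTop
      (𝓝 (∫ s : ℝ, f (q + s * I))) :=
    intervalIntegral_tendsto_integral hf.integrable_vertical tendsto_neg_atTop_atBot tendsto_id
  refine tendsto_nhds_unique hlim (tendsto_zero_iff_norm_tendsto_zero.2 ?_)
  have hzero : Tendsto (fun R : ℝ => C * (4 + 2 * |q|) / R) atTop (𝓝 0) :=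
    tendsto_const_nhds.div_atTop tendsto_id
  refine squeeze_zero' (Eventually.of_forall fun _ => norm_nonneg _) ?_ hzero
  filter_upwards [eventually_ge_atTop R₀, eventually_ge_atTop q] with R hR hqR
  have hRpos : 0 < R := by linarith
  have hM : ∀ t : ℂ, q ≤ t.re → R ≤ ‖t‖ → ‖f t‖ ≤ C / R ^ 2 := fun t ht hRt =>
    (hb t ht (hR.trans hRt)).trans (by gcongr)
  calc ‖∫ s in (-R)..R, f (q + s * I)‖
      ≤ 2 * (C / R ^ 2) * (R - q) + 2 * (C / R ^ 2) * R :=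
        norm_integral_vertical_le hf.differentiableAt hRpos hqR hM
    _ ≤ 2 * (C / R ^ 2) * (R + |q| * R) + 2 * (C / R ^ 2) * R := by
      gcongr
      nlinarith [neg_abs_le q, abs_nonneg q]
    _ = C * (4 + 2 * |q|) / R := by
      field_simp
      ring

lemma div_sub_pow (hf : HalfPlaneDecay f q) (hw : w < q) (k : ℕ) :
    HalfPlaneDecay (fun t => f t / (t - w) ^ k) q := by
  obtain ⟨C, R, hC, -, hb⟩ := hf.exists_bound
  have hge : ∀ t : ℂ, q ≤ t.re → q - w ≤ ‖t - w‖ := fun t ht => by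
    have := Complex.re_le_norm (t - w)
    rw [sub_re, ofReal_re] at this
    linarith
  have hd : 0 < q - w := sub_pos.2 hw
  refine ⟨fun t ht => (hf.differentiableAt t ht).div (by fun_prop)
    (pow_ne_zero _ (norm_pos_iff.1 (hd.trans_le (hge t ht)))), C / (q - w) ^ k, R,
    fun t ht hR => ?_⟩
  have hge' := hge t ht
  calc ‖f t / (t - w) ^ k‖ = ‖f t‖ / ‖t - w‖ ^ k := by rw [norm_div, norm_pow]
    _ ≤ (C / ‖t‖ ^ 2) / (q - w) ^ k := by
      gcongr
      exact hb t ht hR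
    _ = C / (q - w) ^ k / ‖t‖ ^ 2 := div_right_comm _ _ _

end HalfPlaneDecay

end VerticalLines

section CauchyFormula

variable {f : ℂ → ℂ} {q w : ℝ}

lemma neg_one_div_sq_add_sq_eq {d : ℝ} (hd : 0 < d) (s : ℝ) :
    (-1 : ℂ) / ((s : ℂ) ^ 2 + (d : ℂ) ^ 2) =
      ((-(d ^ 2)⁻¹ * (1 + (s / d) ^ 2)⁻¹ : ℝ) : ℂ) := by
  have h : (-1) / (s ^ 2 + d ^ 2) = -(d ^ 2)⁻¹ * (1 + (s / d) ^ 2)⁻¹ := by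
    have : 1 + (s / d) ^ 2 = (s ^ 2 + d ^ 2) / d ^ 2 := by
      field_simp
      ring
    rw [this]
    field_simp
  rw [← h]
  push_cast
  rfl

lemma integrable_neg_one_div_sq_add_sq {d : ℝ} (hd : 0 < d) :
    Integrable (fun s : ℝ => (-1 : ℂ) / ((s : ℂ) ^ 2 + (d : ℂ) ^ 2)) := by
  simp_rw [neg_one_div_sq_add_sq_eq hd]
  exact ((integrable_inv_one_add_sq.comp_div hd.ne').const_mul _).ofReal

lemma integral_neg_one_div_sq_add_sq {d : ℝ} (hd : 0 < d) :
    ∫ s : ℝ, (-1 : ℂ) / ((s : ℂ) ^ 2 + (d : ℂ) ^ 2) = -(π / d : ℝ) := by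
  simp_rw [neg_one_div_sq_add_sq_eq hd]
  rw [integral_complex_ofReal, integral_const_mul,
    Measure.integral_comp_div (fun x : ℝ => (1 + x ^ 2)⁻¹) d, integral_univ_inv_one_add_sq,
    abs_of_pos hd, smul_eq_mul, ← ofReal_neg]
  congr 1
  field_simp

namespace HalfPlaneDecay

/-- Removing the singularity of the Cauchy kernel at `w`; the factor `t - w'`, harmless on the
half-plane, restores the decay lost by subtracting the value at `w`. -/
lemma dslope_div (hf : HalfPlaneDecay f q) (hq : q < w) {w' : ℝ} (hw' : w' < q) :
    HalfPlaneDecay (fun t => dslope (fun t => (t - w') * f t) w t / (t - w')) q := by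
  obtain ⟨C, R, hC, hR1, hb⟩ := hf.exists_bound
  set F : ℂ → ℂ := fun t => (t - w') * f t with hF
  have hFd : ∀ t : ℂ, q ≤ t.re → DifferentiableAt ℂ F t := fun t ht => by
    have := hf.differentiableAt t ht
    fun_prop
  have hne : ∀ t : ℂ, q ≤ t.re → t - w' ≠ 0 := fun t ht h => by
    have := congrArg Complex.re h
    rw [sub_re, ofReal_re, zero_re] at this
    linarith
  refine ⟨fun t ht => DifferentiableAt.div ?_ (by fun_prop) (hne t ht),
    C + 4 * ‖F w‖, R + 2 * |w| + 2 * |w'| + 2, fun t ht hR => ?_⟩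
  · by_cases htw : t = w
    · subst htw
      have hopen : {t : ℂ | q < t.re} ∈ 𝓝 (w : ℂ) :=
        (isOpen_lt continuous_const Complex.continuous_re).mem_nhds (by simpa using hq)
      exact ((Complex.differentiableOn_dslope hopen).2
        fun t ht => (hFd t (le_of_lt ht)).differentiableWithinAt).differentiableAt hopen
    · exact (differentiableAt_dslope_of_ne htw).2 (hFd t ht)
  · have hfar : ∀ v : ℝ, |v| ≤ |w| + |w'| → ‖t‖ / 2 ≤ ‖t - v‖ ∧ 1 ≤ ‖t - v‖ := fun v hv => by
      have := norm_sub_norm_le t (v : ℂ)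
      rw [Complex.norm_real, Real.norm_eq_abs] at this
      constructor <;> linarith [abs_nonneg v]
    obtain ⟨hw2, hw1⟩ := hfar w (by linarith [abs_nonneg w'])
    obtain ⟨hw2', -⟩ := hfar w' (by linarith [abs_nonneg w])
    have htw : t - w ≠ 0 := norm_pos_iff.1 (by linarith)
    have hsplit : dslope F w t / (t - w') = f t / (t - w) - F w / ((t - w) * (t - w')) := by
      have := hne t ht
      rw [dslope_of_ne _ (sub_ne_zero.1 htw), slope_def_field, hF]
      field_simp
    have ht0 : 0 < ‖t‖ := by linarith [abs_nonneg w, abs_nonneg w']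
    calc ‖dslope F w t / (t - w')‖
        ≤ ‖f t‖ / ‖t - w‖ + ‖F w‖ / (‖t - w‖ * ‖t - w'‖) := by
          rw [hsplit, ← norm_div, ← norm_mul, ← norm_div]
          exact norm_sub_le _ _
      _ ≤ (C / ‖t‖ ^ 2) / 1 + ‖F w‖ / (‖t‖ / 2 * (‖t‖ / 2)) := by
          gcongr
          exact hb t ht (by linarith [abs_nonneg w, abs_nonneg w'])
      _ = (C + 4 * ‖F w‖) / ‖t‖ ^ 2 := by
          field_simp
          ring

theorem integral_div_sub (hf : HalfPlaneDecay f q) (hq : q < w) :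
    ∫ s : ℝ, f (q + s * I) / (q + s * I - w) = -(2 * π) * f w := by
  set d := w - q with hd
  have hdpos : 0 < d := sub_pos.2 hq
  have hD := hf.dslope_div hq (w' := q - d) (by linarith)
  set F : ℂ → ℂ := fun t => (t - (q - d : ℝ)) * f t with hF
  set D : ℂ → ℂ := fun t => dslope F w t / (t - (q - d : ℝ)) with hDdef
  have hsplit : ∀ s : ℝ, f (q + s * I) / (q + s * I - w) =
      D (q + s * I) + F w * (-1 / ((s : ℂ) ^ 2 + d ^ 2)) := by
    intro s
    have hw := vertical_sub_ne_zero hq.ne s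
    have hw' : (q : ℂ) + s * I - (q - d : ℝ) ≠ 0 := vertical_sub_ne_zero (by linarith) s
    have hker : (s : ℂ) ^ 2 + d ^ 2 = -((q + s * I - w) * (q + s * I - (q - d : ℝ))) := by
      rw [hd]
      push_cast
      linear_combination ((s : ℂ) ^ 2) * I_sq
    rw [hker, neg_div_neg_eq, hDdef]
    simp only [dslope_of_ne _ (sub_ne_zero.1 hw), slope_def_field]
    rw [show F (q + s * I) = (q + s * I - (q - d : ℝ)) * f (q + s * I) from rfl]
    field_simp
    ring
  have hFw : F w = 2 * d * f w := by
    simp only [hF, hd]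
    push_cast
    ring
  simp_rw [hsplit]
  rw [integral_add hD.integrable_vertical ((integrable_neg_one_div_sq_add_sq hdpos).const_mul _),
    hD.integral_vertical_eq_zero, integral_const_mul, integral_neg_one_div_sq_add_sq hdpos, hFw]
  have : (d : ℂ) ≠ 0 := by exact_mod_cast hdpos.ne'
  push_cast
  field_simp
  ring

lemma hasDerivAt_integral_div_sub_pow (hf : HalfPlaneDecay f q) (hq : q < w) (k : ℕ) :
    HasDerivAt (fun x : ℝ => ∫ s : ℝ, f (q + s * I) / (q + s * I - x) ^ (k + 1))
      (∫ s : ℝ, (k + 1 : ℂ) * (f (q + s * I) / (q + s * I - w) ^ (k + 2))) w := by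
  have hi := hf.integrable_vertical
  obtain ⟨d, hd, rfl⟩ : ∃ d > 0, w = q + 2 * d := ⟨(w - q) / 2, by linarith, by ring⟩
  have hcont : ∀ x : ℝ, q < x → ∀ j : ℕ,
      Continuous (fun s : ℝ => f (q + s * I) / (q + s * I - x) ^ j) := fun x hx j =>
    hf.continuous_vertical.div (by fun_prop) fun s => pow_ne_zero _ (vertical_sub_ne_zero hx.ne s)
  have hle : ∀ x ∈ Ioi (q + d), ∀ (j : ℕ) (s : ℝ),
      ‖f (q + s * I) / (q + s * I - x) ^ j‖ ≤ (d ^ j)⁻¹ * ‖f (q + s * I)‖ := by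
    intro x hx j s
    have hx' : q + d < x := hx
    have : d ≤ ‖(q : ℂ) + s * I - x‖ := by
      refine le_trans ?_ (abs_sub_le_norm_vertical_sub q x s)
      rw [abs_sub_comm, abs_of_pos] <;> linarith
    rw [norm_div, norm_pow, div_eq_inv_mul]
    gcongr
  have hnhds : Ioi (q + d) ∈ 𝓝 (q + 2 * d) := Ioi_mem_nhds (by linarith)
  refine (hasDerivAt_integral_of_dominated_loc_of_deriv_le
    (F := fun (x : ℝ) (s : ℝ) => f (q + s * I) / ((q : ℂ) + s * I - x) ^ (k + 1))
    (F' := fun (x : ℝ) (s : ℝ) => (k + 1 : ℂ) * (f (q + s * I) / (q + s * I - x) ^ (k + 2)))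
    (bound := fun s : ℝ => (k + 1) * ((d ^ (k + 2))⁻¹ * ‖f (q + s * I)‖)) hnhds
    ?_ ?_ ?_ ?_ ((hi.norm.const_mul _).const_mul _) ?_).2
  · filter_upwards [hnhds] with x hx
    exact (hcont x (by linarith [mem_Ioi.1 hx]) _).aestronglyMeasurable
  · exact (hi.norm.const_mul _).mono' (hcont _ hq _).aestronglyMeasurable
      (Eventually.of_forall (hle _ (mem_of_mem_nhds hnhds) _))
  · exact (continuous_const.mul (hcont _ hq _)).aestronglyMeasurable
  · refine Eventually.of_forall fun s x hx => ?_
    rw [norm_mul, show ‖(k + 1 : ℂ)‖ = k + 1 by exact_mod_cast Complex.norm_natCast (k + 1)]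
    gcongr
    exact hle x hx _ s
  · refine Eventually.of_forall fun s x hx => ?_
    have hne : (q : ℂ) + s * I - x ≠ 0 :=
      vertical_sub_ne_zero (by linarith [mem_Ioi.1 hx]) s
    have hlin : HasDerivAt (fun x : ℝ => (q : ℂ) + s * I - x) (-1) x := by
      simpa using (Complex.ofRealCLM.hasDerivAt (x := x)).const_sub ((q : ℂ) + s * I)
    have hker := ((hlin.fun_pow (k + 1)).fun_inv (pow_ne_zero _ hne)).const_mul (f (q + s * I))
    simp only [div_eq_mul_inv]
    refine hker.congr_deriv ?_
    rw [Nat.add_sub_cancel]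
    push_cast
    field_simp
    ring

lemma hasDerivAt_re_integral_div_sub_pow (hf : HalfPlaneDecay f q) (hq : q < w) (k : ℕ) :
    HasDerivAt (fun x : ℝ => (∫ s : ℝ, f (q + s * I) / (q + s * I - x) ^ (k + 1)).re)
      ((k + 1) * (∫ s : ℝ, f (q + s * I) / (q + s * I - w) ^ (k + 2)).re) w := by
  have h := Complex.reCLM.hasFDerivAt.comp_hasDerivAt w (hf.hasDerivAt_integral_div_sub_pow hq k)
  rw [integral_const_mul, show (k + 1 : ℂ) = ((k + 1 : ℝ) : ℂ) by push_cast; rfl,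
    Complex.reCLM_apply, Complex.re_ofReal_mul] at h
  exact h

theorem deriv_deriv_eq_integral (hf : HalfPlaneDecay f q) (hq : q < w) {g : ℝ → ℝ}
    (hg : ∀ x : ℝ, q < x → (g x : ℂ) = f x) :
    deriv (deriv g) w = -(1 / π) * (∫ s : ℝ, f (q + s * I) / (q + s * I - w) ^ 3).re := by
  have hpi : π ≠ 0 := Real.pi_ne_zero
  set J : ℕ → ℝ → ℝ := fun k x => (∫ s : ℝ, f (q + s * I) / (q + s * I - x) ^ k).re with hJ
  have hJ' : ∀ x : ℝ, q < x → ∀ k : ℕ, HasDerivAt (J (k + 1)) ((k + 1) * J (k + 2) x) x :=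
    fun x hx k => hf.hasDerivAt_re_integral_div_sub_pow hx k
  have hg0 : ∀ x : ℝ, q < x → g x = -(1 / (2 * π)) * J 1 x := fun x hx => by
    simp only [hJ, pow_one]
    rw [hf.integral_div_sub hx, ← hg x hx,
      show -(2 * (π : ℂ)) * (g x : ℂ) = ((-(2 * π) * g x : ℝ) : ℂ) by push_cast; rfl, ofReal_re]
    field_simp
  have hg1 : ∀ x : ℝ, q < x → deriv g x = -(1 / (2 * π)) * J 2 x := fun x hx => by
    have heq : g =ᶠ[𝓝 x] fun x => -(1 / (2 * π)) * J 1 x := by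
      filter_upwards [Ioi_mem_nhds hx] with y hy using hg0 y hy
    rw [heq.deriv_eq, ((hJ' x hx 0).const_mul _).deriv]
    simp
  have heq : deriv g =ᶠ[𝓝 w] fun x => -(1 / (2 * π)) * J 2 x := by
    filter_upwards [Ioi_mem_nhds hq] with y hy using hg1 y hy
  rw [heq.deriv_eq, ((hJ' w hq 1).const_mul _).deriv, Nat.cast_one]
  change -(1 / (2 * π)) * ((1 + 1) * J 3 w) = -(1 / π) * J 3 w
  field_simp
  norm_num

end HalfPlaneDecay

end CauchyFormula

section InvCubeSum

/-- The kernel `∑ (t + m)⁻³` over all integers `m`, equal to `π³ cos (π t) / sin³ (π t)`; near a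
vertical line it turns a series of second derivatives into a single contour integral. -/
noncomputable def invCubeSum (t : ℂ) : ℂ := ∑' m : ℤ, 1 / (t + m) ^ 3

variable {q : ℝ}

lemma invCubeSum_add_int (t : ℂ) (k : ℤ) : invCubeSum (t + k) = invCubeSum t := by
  unfold invCubeSum
  rw [← (Equiv.addLeft k).tsum_eq (fun m : ℤ => 1 / (t + m) ^ 3)]
  refine tsum_congr fun m => ?_
  rw [Equiv.coe_addLeft, Int.cast_add, add_assoc]

lemma invCubeSum_conj (t : ℂ) : invCubeSum (conj t) = conj (invCubeSum t) := by
  unfold invCubeSum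
  rw [Complex.conj_tsum]
  refine tsum_congr fun m => ?_
  simp only [map_div₀, map_one, map_pow, map_add, map_intCast]

lemma summable_one_div_abs_add_int_pow_three (q : ℝ) :
    Summable (fun m : ℤ => 1 / |q + m| ^ 3) := by
  refine ((Real.summable_one_div_int_add_rpow q 3).2 (by norm_num)).congr fun m => ?_
  rw [add_comm]
  norm_cast

lemma norm_one_div_vertical_add_int_pow_le {m : ℤ} (hq : q + m ≠ 0) (s : ℝ) :
    ‖1 / ((q : ℂ) + s * I + m) ^ 3‖ ≤ 1 / |q + m| ^ 3 := by
  have hle : |q + m| ≤ ‖(q : ℂ) + s * I + m‖ := by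
    simpa using Complex.abs_re_le_norm ((q : ℂ) + s * I + m)
  rw [norm_div, norm_pow, norm_one]
  exact one_div_le_one_div_of_le (pow_pos (abs_pos.2 hq) 3)
    (pow_le_pow_left₀ (abs_nonneg _) hle 3)

lemma continuous_one_div_vertical_add_int_pow {m : ℤ} (hq : q + m ≠ 0) :
    Continuous (fun s : ℝ => 1 / ((q : ℂ) + s * I + m) ^ 3) := by
  refine Continuous.div (by fun_prop) (by fun_prop) fun s => pow_ne_zero _ fun h => hq ?_
  simpa using congrArg Complex.re h

lemma norm_invCubeSum_vertical_le (hq : ∀ m : ℤ, q + m ≠ 0) (s : ℝ) :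
    ‖invCubeSum (q + s * I)‖ ≤ ∑' m : ℤ, 1 / |q + m| ^ 3 :=
  tsum_of_norm_bounded (summable_one_div_abs_add_int_pow_three q).hasSum
    fun m => norm_one_div_vertical_add_int_pow_le (hq m) s

lemma continuous_invCubeSum_vertical (hq : ∀ m : ℤ, q + m ≠ 0) :
    Continuous (fun s : ℝ => invCubeSum (q + s * I)) :=
  continuous_tsum (fun m => continuous_one_div_vertical_add_int_pow (hq m))
    (summable_one_div_abs_add_int_pow_three q)
    fun m s => norm_one_div_vertical_add_int_pow_le (hq m) s

lemma add_intCast_ne_zero_of_lt_of_lt {k : ℕ} (hkq : k < q) (hqk : q < k + 1) (m : ℤ) :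
    q + m ≠ 0 := fun h => by
  have h1 : ((-m : ℤ) : ℝ) = q := by push_cast; linarith
  rw [← h1] at hkq hqk
  norm_cast at hkq hqk
  omega

lemma integrable_mul_invCubeSum {g : ℝ → ℂ} (hg : Integrable g) (hq : ∀ m : ℤ, q + m ≠ 0) :
    Integrable (fun s => g s * invCubeSum (q + s * I)) :=
  hg.mul_bdd (continuous_invCubeSum_vertical hq).aestronglyMeasurable
    (Eventually.of_forall (norm_invCubeSum_vertical_le hq))

lemma hasSum_integral_div_sub_int_pow {g : ℝ → ℂ} (hg : Integrable g)
    (hq : ∀ m : ℤ, q + m ≠ 0) :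
    HasSum (fun m : ℤ => ∫ s : ℝ, g s / (q + s * I - m) ^ 3)
      (∫ s : ℝ, g s * invCubeSum (q + s * I)) := by
  set F : ℤ → ℝ → ℂ := fun m s => g s * (1 / ((q : ℂ) + s * I + m) ^ 3) with hF
  have hle : ∀ m s, ‖F m s‖ ≤ 1 / |q + m| ^ 3 * ‖g s‖ := fun m s => by
    rw [hF, norm_mul, mul_comm]
    gcongr
    exact norm_one_div_vertical_add_int_pow_le (hq m) s
  have hi : ∀ m, Integrable (F m) := fun m =>
    hg.mul_bdd (continuous_one_div_vertical_add_int_pow (hq m)).aestronglyMeasurable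
      (Eventually.of_forall (norm_one_div_vertical_add_int_pow_le (hq m)))
  have hsum : Summable fun m => ∫ s, ‖F m s‖ := by
    refine Summable.of_nonneg_of_le (fun m => integral_nonneg fun s => norm_nonneg _)
      (fun m => ?_) ((summable_one_div_abs_add_int_pow_three q).mul_right (∫ s, ‖g s‖))
    rw [← integral_const_mul]
    exact integral_mono (hi m).norm (hg.norm.const_mul _) (hle m)
  have h := (Equiv.neg ℤ).hasSum_iff.2 (hasSum_integral_of_summable_integral_norm hi hsum)
  have hterm : (fun m => ∫ s, F m s) ∘ Equiv.neg ℤ =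
      fun m : ℤ => ∫ s : ℝ, g s / (q + s * I - m) ^ 3 := by
    funext m
    simp only [Function.comp_apply, Equiv.neg_apply, hF, Int.cast_neg, mul_one_div,
      ← sub_eq_add_neg]
  have htsum : (fun s : ℝ => ∑' m, F m s) = fun s : ℝ => g s * invCubeSum (q + s * I) := by
    funext s
    rw [hF, tsum_mul_left, invCubeSum]
  rwa [hterm, htsum] at h

lemma integral_re_eq_two_mul_of_conj {h : ℝ → ℂ} (hi : Integrable h)
    (hconj : ∀ s, h (-s) = conj (h s)) :
    (∫ s, h s).re = 2 * (∫ s in Ioi (0 : ℝ), h s).re := by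
  have hre : (∫ s, h s).re = ∫ s, (h s).re := (integral_re hi).symm
  have hre' : (∫ s in Ioi (0 : ℝ), h s).re = ∫ s in Ioi (0 : ℝ), (h s).re :=
    (integral_re hi.integrableOn).symm
  rw [hre, hre', ← integral_comp_abs (f := fun s => (h s).re)]
  congr 1
  funext s
  rcases abs_choice s with hs | hs
  · rw [hs]
  · rw [hs, hconj, conj_re]

/-- The integers to the left of the line contribute `0` to the contour integral, and those to the
right contribute the second derivative of `g`. -/
theorem HalfPlaneDecay.tsum_deriv_deriv_eq_integral {f : ℂ → ℂ} {g : ℝ → ℝ} {n k : ℕ}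
    (hf : HalfPlaneDecay f q) (hnk : n ≤ k) (hkq : k < q) (hqk : q < k + 1)
    (hg : ∀ x : ℝ, q < x → (g x : ℂ) = f x) (hconj : ∀ t, f (conj t) = conj (f t))
    (hzero : ∀ m : ℕ, n + 1 + m ≤ k → deriv (deriv g) ((n : ℝ) + 1 + m) = 0) :
    ∑' m : ℕ, deriv (deriv g) ((n : ℝ) + 1 + m) =
      -(2 / π) * (∫ s in Ioi (0 : ℝ), f (q + s * I) * invCubeSum (q + s * I)).re := by
  have hq := add_intCast_ne_zero_of_lt_of_lt hkq hqk
  have hi := hf.integrable_vertical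
  set J : ℤ → ℂ := fun m => ∫ s : ℝ, f (q + s * I) / (q + s * I - m) ^ 3 with hJ
  have hleft : ∀ m : ℤ, m ≤ k → J m = 0 := fun m hm => by
    have : (m : ℝ) < q := lt_of_le_of_lt (by exact_mod_cast hm) hkq
    exact_mod_cast (hf.div_sub_pow this 3).integral_vertical_eq_zero
  have hright : ∀ m : ℤ, k < m → deriv (deriv g) m = -(1 / π) * (J m).re := fun m hm => by
    have hm' : (k : ℝ) + 1 ≤ m := by exact_mod_cast hm
    rw [hf.deriv_deriv_eq_integral (hqk.trans_le hm') hg, hJ]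
    push_cast
    rfl
  have hinj : Function.Injective (fun m : ℕ => (n : ℤ) + 1 + m) := fun x y h => by simpa using h
  have hsum : ∑' m : ℕ, deriv (deriv g) ((n : ℝ) + 1 + m) = ∑' m : ℤ, -(1 / π) * (J m).re := by
    rw [← hinj.tsum_eq (f := fun m : ℤ => -(1 / π) * (J m).re)]
    · refine tsum_congr fun m => ?_
      rcases le_or_gt (n + 1 + m) k with hm | hm
      · rw [hzero m hm, hleft _ (by exact_mod_cast hm), zero_re, mul_zero]
      · exact_mod_cast hright (n + 1 + m) (by exact_mod_cast hm)
    · intro m hm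
      have : ¬ m ≤ k := fun h => hm (by simp only [hleft m h, zero_re, mul_zero])
      exact ⟨(m - (n + 1)).toNat, by simp only; omega⟩
  have hfold := integral_re_eq_two_mul_of_conj (integrable_mul_invCubeSum hi hq) fun s => by
    have : (q : ℂ) + ((-s : ℝ) : ℂ) * I = conj ((q : ℂ) + s * I) := by simp
    rw [this, hconj, invCubeSum_conj, ← map_mul]
  rw [hsum, ((Complex.hasSum_re (hasSum_integral_div_sub_int_pow hi hq)).mul_left _).tsum_eq,
    hfold]
  ring

end InvCubeSum

section Complexification

/-- The Pochhammer symbol `(w)_m` of a complex number; it extends `poch` to the plane. -/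
noncomputable def cpoch (w : ℂ) (m : ℕ) : ℂ := ∏ j ∈ Finset.range m, (w + j)

/-- The extension of the rational function `Sfun` to the complex plane, so that the series can be
turned into contour integrals. -/
noncomputable def cSfun (a r n : ℕ) (t : ℂ) : ℂ :=
  cpoch (t - ((2 * r + 1) * n : ℕ)) (2 * r * n) ^ 3 * cpoch (t + n + 1) (2 * r * n) ^ 3 /
    cpoch (t - n) (2 * n + 1) ^ a

variable {w t : ℂ} {a r n : ℕ}

lemma cpoch_succ (w : ℂ) (m : ℕ) : cpoch w (m + 1) = cpoch w m * (w + m) :=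
  Finset.prod_range_succ _ _

lemma ofReal_poch (x : ℝ) (m : ℕ) : (poch x m : ℂ) = cpoch x m := by
  rw [poch, cpoch]
  push_cast
  rfl

lemma ofReal_Sfun (a r n : ℕ) (x : ℝ) : (Sfun a r n x : ℂ) = cSfun a r n x := by
  simp only [Sfun, cSfun, ofReal_div, ofReal_mul, ofReal_pow, ofReal_poch, ofReal_sub, ofReal_add,
    ofReal_natCast, ofReal_one]

lemma cpoch_conj (w : ℂ) (m : ℕ) : cpoch (conj w) m = conj (cpoch w m) := by
  simp only [cpoch, map_prod, map_add, map_natCast]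

lemma cSfun_conj (a r n : ℕ) (t : ℂ) : cSfun a r n (conj t) = conj (cSfun a r n t) := by
  simp only [cSfun, map_div₀, map_mul, map_pow, ← cpoch_conj, map_sub, map_add, map_natCast,
    map_one]

lemma differentiable_cpoch (m : ℕ) : Differentiable ℂ (fun w => cpoch w m) := by
  unfold cpoch
  fun_prop

lemma cpoch_ne_zero (m : ℕ) (h : ∀ j : ℕ, w + j ≠ 0) : cpoch w m ≠ 0 :=
  Finset.prod_ne_zero_iff.2 fun j _ => h j

lemma differentiableAt_cSfun (a r : ℕ) (h : ∀ j : ℕ, t - n + j ≠ 0) :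
    DifferentiableAt ℂ (cSfun a r n) t := by
  have hcomp : ∀ (m : ℕ) {u : ℂ → ℂ}, Differentiable ℂ u →
      DifferentiableAt ℂ (fun t => cpoch (u t) m) t :=
    fun m u hu => ((differentiable_cpoch m).comp hu) t
  exact (((hcomp _ (by fun_prop)).pow 3).mul ((hcomp _ (by fun_prop)).pow 3)).div
    ((hcomp _ (by fun_prop)).pow a) (pow_ne_zero _ (cpoch_ne_zero _ h))

lemma norm_cpoch_le {m : ℕ} (h : ‖w - t‖ + m ≤ ‖t‖) : ‖cpoch w m‖ ≤ (2 * ‖t‖) ^ m := by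
  rw [cpoch, norm_prod]
  refine (Finset.prod_le_prod (g := fun _ => 2 * ‖t‖) (fun _ _ => norm_nonneg _)
    fun j hj => ?_).trans_eq (by rw [Finset.prod_const, Finset.card_range])
  have hjm : (j : ℝ) ≤ m := by exact_mod_cast (Finset.mem_range.1 hj).le
  calc ‖w + j‖ = ‖t + (w - t) + j‖ := by rw [add_sub_cancel]
    _ ≤ ‖t‖ + ‖w - t‖ + j := norm_add₃_le.trans_eq (by rw [norm_natCast])
    _ ≤ 2 * ‖t‖ := by linarith

lemma le_norm_cpoch {m : ℕ} (h : 2 * (‖w - t‖ + m) ≤ ‖t‖) : (‖t‖ / 2) ^ m ≤ ‖cpoch w m‖ := by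
  rw [cpoch, norm_prod]
  refine le_trans (by rw [Finset.prod_const, Finset.card_range])
    (Finset.prod_le_prod (f := fun _ => ‖t‖ / 2) (fun _ _ => by positivity) fun j hj => ?_)
  have hjm : (j : ℝ) ≤ m := by exact_mod_cast (Finset.mem_range.1 hj).le
  have htri : ‖t‖ ≤ ‖w + j‖ + ‖w - t‖ + j := by
    calc ‖t‖ = ‖w + j + (t - w) + -j‖ := by ring_nf
      _ ≤ ‖w + j‖ + ‖t - w‖ + ‖-(j : ℂ)‖ := norm_add₃_le
      _ = ‖w + j‖ + ‖w - t‖ + j := by rw [norm_neg, norm_natCast, norm_sub_rev]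
  linarith

lemma exists_norm_cSfun_le (ha : 6 * r + 2 ≤ a) (n : ℕ) :
    ∃ C R : ℝ, ∀ t : ℂ, R ≤ ‖t‖ → ‖cSfun a r n t‖ ≤ C / ‖t‖ ^ 2 := by
  refine ⟨2 ^ (2 * r * n * 6 + (2 * n + 1) * a), 2 * ((4 * r + 3) * n + 1), fun t ht => ?_⟩
  have : (0 : ℝ) ≤ r * n := by positivity
  have : (0 : ℝ) ≤ n := by positivity
  have ht1 : 1 ≤ ‖t‖ := by linarith
  have h₁ : ‖cpoch (t - ((2 * r + 1) * n : ℕ)) (2 * r * n)‖ ≤ (2 * ‖t‖) ^ (2 * r * n) := by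
    refine norm_cpoch_le ?_
    rw [sub_sub_cancel_left, norm_neg, norm_natCast]
    push_cast
    linarith
  have h₂ : ‖cpoch (t + n + 1) (2 * r * n)‖ ≤ (2 * ‖t‖) ^ (2 * r * n) := by
    refine norm_cpoch_le ?_
    rw [add_assoc, add_sub_cancel_left, ← Nat.cast_succ, norm_natCast]
    push_cast
    linarith
  have h₃ : (‖t‖ / 2) ^ (2 * n + 1) ≤ ‖cpoch (t - n) (2 * n + 1)‖ := by
    refine le_norm_cpoch ?_
    rw [sub_sub_cancel_left, norm_neg, norm_natCast]
    push_cast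
    linarith
  calc ‖cSfun a r n t‖
      ≤ ((2 * ‖t‖) ^ (2 * r * n)) ^ 3 * ((2 * ‖t‖) ^ (2 * r * n)) ^ 3 /
          ((‖t‖ / 2) ^ (2 * n + 1)) ^ a := by
        rw [cSfun, norm_div, norm_mul, norm_pow, norm_pow, norm_pow]
        gcongr
    _ = 2 ^ (2 * r * n * 6 + (2 * n + 1) * a) * ‖t‖ ^ (2 * r * n * 6) /
          ‖t‖ ^ ((2 * n + 1) * a) := by
        rw [← pow_mul, ← pow_mul, ← pow_add, mul_pow, div_pow, pow_add 2 (2 * r * n * 6)]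
        field_simp
        ring
    _ ≤ 2 ^ (2 * r * n * 6 + (2 * n + 1) * a) / ‖t‖ ^ 2 := by
        rw [div_le_div_iff₀ (by positivity) (by positivity), mul_assoc, ← pow_add]
        refine mul_le_mul_of_nonneg_left (pow_le_pow_right₀ ht1 ?_) (by positivity)
        nlinarith [Nat.zero_le (r * n), mul_le_mul_left ha n]

lemma halfPlaneDecay_cSfun (ha : 6 * r + 2 ≤ a) {q : ℝ} (hq : n < q) :
    HalfPlaneDecay (cSfun a r n) q where
  differentiableAt t ht := differentiableAt_cSfun a r fun j hj => by
    have hre := congrArg Complex.re hj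
    simp only [add_re, sub_re, natCast_re, zero_re] at hre
    linarith [(Nat.cast_nonneg j : (0 : ℝ) ≤ j)]
  bound := by
    obtain ⟨C, R, h⟩ := exists_norm_cSfun_le ha n
    exact ⟨C, R, fun t _ => h t⟩

lemma contDiff_poch (m : ℕ) : ContDiff ℝ 2 (fun x => poch x m) := by
  unfold poch
  fun_prop

lemma deriv_deriv_pow_three_mul_eq_zero {N M : ℝ → ℝ} {x : ℝ} (hN : ContDiffAt ℝ 2 N x)
    (hM : ContDiffAt ℝ 2 M x) (h0 : N x = 0) : deriv (deriv (fun t => N t ^ 3 * M t)) x = 0 := by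
  have hdiff : ∀ {F : ℝ → ℝ}, ContDiffAt ℝ 2 F x → ∀ᶠ t in 𝓝 x, DifferentiableAt ℝ F t :=
    fun hF => (hF.eventually (by simp)).mono fun t ht => ht.differentiableAt (by simp)
  have hdiff' : ∀ {F : ℝ → ℝ}, ContDiffAt ℝ 2 F x → DifferentiableAt ℝ (deriv F) x :=
    fun hF => (hF.derivWithin (m := 1) (by norm_num)).differentiableAt (by simp)
  have hfactor : deriv (fun t => N t ^ 3 * M t) =ᶠ[𝓝 x]
      fun t => N t ^ 2 * (3 * deriv N t * M t + N t * deriv M t) := by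
    filter_upwards [hdiff hN, hdiff hM] with t hNt hMt
    refine ((hNt.hasDerivAt.pow 3).mul hMt.hasDerivAt).deriv.trans ?_
    simp only [Pi.pow_apply, Nat.cast_ofNat, Nat.add_one_sub_one]
    ring
  have hN1 := (hdiff hN).self_of_nhds.hasDerivAt
  have hM1 := (hdiff hM).self_of_nhds.hasDerivAt
  rw [hfactor.deriv_eq]
  refine ((hN1.pow 2).mul (((((hdiff' hN).hasDerivAt).const_mul 3).mul hM1).add
    (hN1.mul (hdiff' hM).hasDerivAt))).deriv.trans ?_
  simp [h0]

lemma deriv_deriv_Sfun_eq_zero {x : ℕ} (h1 : n < x) (h2 : x ≤ (2 * r + 1) * n) :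
    deriv (deriv (Sfun a r n)) (x : ℝ) = 0 := by
  have hx : (n : ℝ) < x := by exact_mod_cast h1
  have hcomp : ∀ (m : ℕ) {u : ℝ → ℝ}, ContDiff ℝ 2 u →
      ContDiffAt ℝ 2 (fun t => poch (u t) m) x :=
    fun m u hu => ((contDiff_poch m).comp hu).contDiffAt
  have hden : poch ((x : ℝ) - n) (2 * n + 1) ^ a ≠ 0 :=
    pow_ne_zero _ <| Finset.prod_ne_zero_iff.2 fun j _ => by
      linarith [(Nat.cast_nonneg j : (0 : ℝ) ≤ j)]
  have hzero : poch ((x : ℝ) - ((2 * r + 1) * n : ℕ)) (2 * r * n) = 0 := by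
    refine Finset.prod_eq_zero (i := (2 * r + 1) * n - x) (Finset.mem_range.2 ?_) ?_
    · have : (2 * r + 1) * n = 2 * r * n + n := by ring
      omega
    · rw [Nat.cast_sub h2]
      ring
  have hsplit : Sfun a r n = fun t => poch (t - ((2 * r + 1) * n : ℕ)) (2 * r * n) ^ 3 *
      (poch (t + (n : ℕ) + 1) (2 * r * n) ^ 3 * (poch (t - (n : ℕ)) (2 * n + 1) ^ a)⁻¹) := by
    funext t
    rw [Sfun, mul_div_assoc, div_eq_mul_inv]
  rw [hsplit]
  exact deriv_deriv_pow_three_mul_eq_zero (hcomp _ (by fun_prop))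
    (((hcomp _ (by fun_prop)).pow 3).mul (((hcomp _ (by fun_prop)).pow a).inv hden)) hzero

theorem Sder_eq_integral {k : ℕ} (ha : 6 * r + 2 ≤ a) (hnk : n ≤ k) (hk : k ≤ (2 * r + 1) * n) :
    Sder a r n = -(1 / π) * ((2 * n).factorial : ℝ) ^ (a - 6 * r) *
      (∫ s in Ioi (0 : ℝ), cSfun a r n (((k : ℝ) + 1 / 2 : ℝ) + s * I) *
        invCubeSum (((k : ℝ) + 1 / 2 : ℝ) + s * I)).re := by
  have hnk' : (n : ℝ) ≤ k := by exact_mod_cast hnk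
  have hdecay := halfPlaneDecay_cSfun (n := n) (q := k + 1 / 2) ha (by linarith)
  rw [Sder, hdecay.tsum_deriv_deriv_eq_integral hnk (by linarith) (by linarith)
    (fun x _ => ofReal_Sfun a r n x) (cSfun_conj a r n) fun m hm => ?_]
  · ring
  · exact_mod_cast deriv_deriv_Sfun_eq_zero (a := a) (x := n + 1 + m) (by omega) (hm.trans hk)

end Complexification

section Stirling

/-- The function `w log w - w`, the leading term of `log Γ(w)`. -/
noncomputable def mulLogSub (w : ℂ) : ℂ := w * log w - w

/-- The function `(w - 1/2) log w - w`, Stirling's approximation of `log Γ(w)` up to a constant. -/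
noncomputable def stirlingExponent (w : ℂ) : ℂ := (w - 1 / 2) * log w - w

/-- The exponential rate `F` in the approximation
`cSfun a r n (n x) ≈ exp (logScale a r n + n F(x) + logAmplitude a r x)`. -/
noncomputable def rate (a r : ℕ) (x : ℂ) : ℂ :=
  3 * (mulLogSub (x - 1) - mulLogSub (x - (2 * r + 1))) +
    3 * (mulLogSub (x + (2 * r + 1)) - mulLogSub (x + 1)) -
    a * (mulLogSub (x + 1) - mulLogSub (x - 1))

/-- The logarithm of the prefactor in the approximation
`cSfun a r n (n x) ≈ exp (logScale a r n + n F(x) + logAmplitude a r x)`. -/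
noncomputable def logAmplitude (a r : ℕ) (x : ℂ) : ℂ :=
  -((a + 3) / 2) * (log (x - 1) + log (x + 1)) +
    3 / 2 * (log (x - (2 * r + 1)) + log (x + (2 * r + 1)))

/-- The logarithm of the power of `n` that remains after rescaling `t = n x` in `cSfun a r n t`. -/
noncomputable def logScale (a r n : ℕ) : ℝ := (12 * r * n - 2 * a * n - a) * Real.log n

variable {w x : ℂ}

lemma ne_zero_of_im_pos (hw : 0 < w.im) : w ≠ 0 := fun h => by simp [h] at hw

lemma log_add_one_of_im_pos (hw : 0 < w.im) : log (w + 1) = log w + log (1 + w⁻¹) := by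
  have h0 := ne_zero_of_im_pos hw
  have him : (1 + w⁻¹).im < 0 := by
    rw [add_im, one_im, zero_add, inv_im]
    exact div_neg_of_neg_of_pos (neg_lt_zero.2 hw) (normSq_pos.2 h0)
  have h1 : 1 + w⁻¹ ≠ 0 := fun h => by simp [h] at him
  have hmul : w + 1 = w * (1 + w⁻¹) := by rw [mul_add, mul_one, mul_inv_cancel₀ h0]
  rw [hmul, log_mul h0 h1]
  have := arg_nonneg_iff.2 hw.le
  have := arg_neg_iff.2 him
  constructor <;> linarith [neg_pi_lt_arg (1 + w⁻¹), arg_le_pi w]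

lemma norm_log_one_add_sub_le {v : ℂ} (hv : ‖v‖ ≤ 1 / 2) :
    ‖log (1 + v) - (v - v ^ 2 / 2)‖ ≤ 2 / 3 * ‖v‖ ^ 3 := by
  have hT := norm_log_sub_logTaylor_le 2 (z := v) (by linarith)
  have htaylor : logTaylor (2 + 1) v = v - v ^ 2 / 2 := by
    simp [logTaylor, Finset.sum_range_succ]
    ring
  have hinv : (1 - ‖v‖)⁻¹ ≤ 2 := by
    rw [inv_le_comm₀ (by linarith) (by norm_num)]
    linarith
  rw [htaylor] at hT
  calc _ ≤ ‖v‖ ^ 3 * (1 - ‖v‖)⁻¹ / 3 := by norm_num at hT; exact hT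
    _ ≤ ‖v‖ ^ 3 * 2 / 3 := by gcongr
    _ = 2 / 3 * ‖v‖ ^ 3 := by ring

lemma norm_log_sub_stirlingExponent_sub_le (hw : 2 ≤ w.im) :
    ‖log w - (stirlingExponent (w + 1) - stirlingExponent w)‖ ≤ 2 / w.im ^ 2 := by
  have him : 0 < w.im := by linarith
  have h0 := ne_zero_of_im_pos him
  have hle : w.im ≤ ‖w‖ := (le_abs_self _).trans (abs_im_le_norm w)
  have hv : ‖w⁻¹‖ ≤ 1 / 2 := by
    rw [norm_inv, one_div]
    exact inv_anti₀ two_pos (hw.trans hle)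
  have hsplit : log w - (stirlingExponent (w + 1) - stirlingExponent w) =
      w⁻¹ ^ 2 / 4 - (w + 1 / 2) * (log (1 + w⁻¹) - (w⁻¹ - w⁻¹ ^ 2 / 2)) := by
    rw [stirlingExponent, stirlingExponent, log_add_one_of_im_pos him]
    generalize log (1 + w⁻¹) = l
    field_simp
    ring
  have hhalf : ‖w + 1 / 2‖ ≤ 5 / 4 * ‖w‖ := by
    refine (norm_add_le _ _).trans ?_
    norm_num
    linarith
  calc _ ≤ ‖w⁻¹ ^ 2 / 4‖ + ‖(w + 1 / 2) * (log (1 + w⁻¹) - (w⁻¹ - w⁻¹ ^ 2 / 2))‖ :=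
        hsplit ▸ norm_sub_le _ _
    _ ≤ ‖w⁻¹‖ ^ 2 / 4 + 5 / 4 * ‖w‖ * (2 / 3 * ‖w⁻¹‖ ^ 3) := by
        rw [norm_div, norm_pow, norm_mul, RCLike.norm_ofNat]
        gcongr
        exact norm_log_one_add_sub_le hv
    _ = 13 / 12 / ‖w‖ ^ 2 := by
        have := norm_pos_iff.2 h0
        rw [norm_inv]
        field_simp
        norm_num
    _ ≤ 2 / w.im ^ 2 := by
        gcongr
        norm_num

lemma exists_cpoch_eq_exp (hw : 2 ≤ w.im) (N : ℕ) :
    ∃ e : ℂ, ‖e‖ ≤ 2 * N / w.im ^ 2 ∧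
      cpoch w N = exp (stirlingExponent (w + N) - stirlingExponent w + e) := by
  induction N with
  | zero => exact ⟨0, by simp, by simp [cpoch]⟩
  | succ N ih =>
    obtain ⟨e, he, h⟩ := ih
    have him : (w + N).im = w.im := by simp
    have hstep := norm_log_sub_stirlingExponent_sub_le (w := w + N) (him ▸ hw)
    have h0 : w + N ≠ 0 := ne_zero_of_im_pos (by linarith)
    refine ⟨e + (log (w + N) - (stirlingExponent (w + N + 1) - stirlingExponent (w + N))), ?_, ?_⟩
    · refine (norm_add_le_of_le he hstep).trans_eq ?_
      rw [him]
      push_cast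
      ring
    · calc cpoch w (N + 1)
          = exp (stirlingExponent (w + N) - stirlingExponent w + e) * exp (log (w + N)) := by
            rw [cpoch_succ, h, exp_log h0]
        _ = _ := by
            rw [← exp_add, Nat.cast_succ, ← add_assoc w]
            ring_nf

lemma log_natCast_mul {n : ℕ} (hn : 0 < n) (hw : w ≠ 0) :
    log ((n : ℂ) * w) = Real.log n + log w := by
  exact_mod_cast log_ofReal_mul (r := (n : ℝ)) (by exact_mod_cast hn) hw

lemma stirlingExponent_natCast_mul {n : ℕ} (hn : 0 < n) (hw : w ≠ 0) :
    stirlingExponent (n * w) =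
      n * mulLogSub w + (n * w - 1 / 2) * Real.log n - 1 / 2 * log w := by
  rw [stirlingExponent, mulLogSub, log_natCast_mul hn hw]
  ring

lemma exists_cpoch_natCast_mul_eq_exp {n : ℕ} (hn : 0 < n) (hw : 2 ≤ n * w.im) (k : ℕ) :
    ∃ e : ℂ, ‖e‖ ≤ 2 * k / (n * w.im ^ 2) ∧
      cpoch (n * w) (k * n) = exp (n * (mulLogSub (w + k) - mulLogSub w) + k * n * Real.log n -
        1 / 2 * (log (w + k) - log w) + e) := by
  have hn' : (0 : ℝ) < n := by exact_mod_cast hn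
  have him : 0 < w.im := pos_of_mul_pos_right (two_pos.trans_le hw) hn'.le
  have hk : 0 < (w + k).im := by simpa using him
  obtain ⟨e, he, h⟩ := exists_cpoch_eq_exp (w := n * w) (by simpa using hw) (k * n)
  have hadd : (n : ℂ) * w + (k * n : ℕ) = n * (w + k) := by push_cast; ring
  refine ⟨e, he.trans_eq ?_, ?_⟩
  · have : ((n : ℂ) * w).im = n * w.im := by simp
    rw [this]
    push_cast
    field_simp
  · rw [h, hadd, stirlingExponent_natCast_mul hn (ne_zero_of_im_pos him),
      stirlingExponent_natCast_mul hn (ne_zero_of_im_pos hk)]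
    ring_nf

lemma mul_cpoch_add_one (w : ℂ) (m : ℕ) : w * cpoch (w + 1) m = cpoch w m * (w + m) := by
  rw [← cpoch_succ, cpoch, cpoch, Finset.prod_range_succ', mul_comm]
  simp [add_assoc, add_comm (1 : ℂ)]

lemma cSfun_natCast_mul (a r : ℕ) {n : ℕ} (hn : 0 < n) (hx : x + 1 ≠ 0) :
    cSfun a r n (n * x) = cpoch (n * (x - (2 * r + 1))) (2 * r * n) ^ 3 *
      (cpoch (n * (x + 1)) (2 * r * n) * ((x + (2 * r + 1)) / (x + 1))) ^ 3 /
      (cpoch (n * (x - 1)) (2 * n) * (n * (x + 1))) ^ a := by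
  have hn' : (n : ℂ) ≠ 0 := by exact_mod_cast hn.ne'
  have h₁ : (n : ℂ) * x - ((2 * r + 1) * n : ℕ) = n * (x - (2 * r + 1)) := by push_cast; ring
  have h₂ : cpoch (n * x + n + 1) (2 * r * n) =
      cpoch (n * (x + 1)) (2 * r * n) * ((x + (2 * r + 1)) / (x + 1)) := by
    have h := mul_cpoch_add_one (n * (x + 1)) (2 * r * n)
    have hadd : (n : ℂ) * (x + 1) + (2 * r * n : ℕ) = n * (x + (2 * r + 1)) := by push_cast; ring
    rw [hadd] at h
    rw [show (n : ℂ) * x + n + 1 = n * (x + 1) + 1 by ring]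
    field_simp at h ⊢
    exact h
  have h₃ : cpoch (n * x - n) (2 * n + 1) = cpoch (n * (x - 1)) (2 * n) * (n * (x + 1)) := by
    rw [show (n : ℂ) * x - n = n * (x - 1) by ring, cpoch_succ]
    congr 1
    push_cast
    ring
  rw [cSfun, h₁, h₂, h₃]

theorem exists_cSfun_natCast_mul_eq_exp (a r : ℕ) {n : ℕ} (hn : 0 < n) (hx : 2 ≤ n * x.im) :
    ∃ e : ℂ, ‖e‖ ≤ (24 * r + 4 * a) / (n * x.im ^ 2) ∧
      cSfun a r n (n * x) =
        exp (logScale a r n + n * rate a r x + logAmplitude a r x + e) := by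
  have hn' : (0 : ℝ) < n := by exact_mod_cast hn
  have him : 0 < x.im := pos_of_mul_pos_right (two_pos.trans_le hx) hn'.le
  have hlog : exp (Real.log n) = n := by rw [← ofReal_exp, Real.exp_log hn', ofReal_natCast]
  have hexp : ∀ b : ℝ, exp (log (x + b)) = x + b := fun b =>
    exp_log (ne_zero_of_im_pos (by simpa using him))
  have hexp₁ : exp (log (x + 1)) = x + 1 := by exact_mod_cast hexp 1
  have hexp₂ : exp (log (x + (2 * r + 1))) = x + (2 * r + 1) := by exact_mod_cast hexp (2 * r + 1)
  obtain ⟨e₁, he₁, h₁⟩ :=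
    exists_cpoch_natCast_mul_eq_exp (w := x - (2 * r + 1)) hn (by simpa using hx) (2 * r)
  obtain ⟨e₂, he₂, h₂⟩ :=
    exists_cpoch_natCast_mul_eq_exp (w := x + 1) hn (by simpa using hx) (2 * r)
  obtain ⟨e₃, he₃, h₃⟩ := exists_cpoch_natCast_mul_eq_exp (w := x - 1) hn (by simpa using hx) 2
  rw [show x - (2 * r + 1) + (2 * r : ℕ) = x - 1 by push_cast; ring] at h₁
  rw [show x + 1 + (2 * r : ℕ) = x + (2 * r + 1) by push_cast; ring] at h₂
  rw [show x - 1 + (2 : ℕ) = x + 1 by push_cast; ring] at h₃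
  refine ⟨3 * e₁ + 3 * e₂ - a * e₃, ?_, ?_⟩
  · rw [show (x - (2 * r + 1)).im = x.im by simp] at he₁
    rw [show (x + 1).im = x.im by simp] at he₂
    rw [show (x - 1).im = x.im by simp] at he₃
    calc _ ≤ 3 * ‖e₁‖ + 3 * ‖e₂‖ + a * ‖e₃‖ := by
          refine (norm_sub_le _ _).trans (add_le_add ((norm_add_le _ _).trans_eq ?_) ?_) <;> simp
      _ ≤ 3 * (2 * (2 * r : ℕ) / (n * x.im ^ 2)) + 3 * (2 * (2 * r : ℕ) / (n * x.im ^ 2)) +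
            a * (2 * (2 : ℕ) / (n * x.im ^ 2)) := by gcongr
      _ = _ := by push_cast; ring
  · rw [cSfun_natCast_mul a r hn (by rw [← hexp₁]; exact exp_ne_zero _), h₁, h₂, h₃, ← hexp₁,
      ← hexp₂, ← hlog, ← exp_sub, ← exp_add, ← exp_add, ← exp_add, ← exp_nat_mul, ← exp_nat_mul,
      ← exp_nat_mul, ← exp_add, ← exp_sub, hlog, hexp₁, hexp₂, logScale, rate, logAmplitude]
    push_cast
    ring_nf

end Stirling

section VerticalComparison

variable {a r n : ℕ} {t : ℂ}

lemma summable_add_two_sq_mul_half_pow :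
    Summable (fun m : ℕ => ((m : ℝ) + 2) ^ 2 * (1 / 2 : ℝ) ^ m) := by
  have h := (summable_nat_add_iff 2).2
    (summable_pow_mul_geometric_of_norm_lt_one 2 (r := (1 / 2 : ℝ)) (by norm_num))
  refine (h.mul_left 4).congr fun m => ?_
  push_cast
  ring

lemma tsum_sq_mul_geometric_eq {q : ℂ} (hq : ‖q‖ < 1) :
    ∑' m : ℕ, (m : ℂ) ^ 2 * q ^ m = q * (1 + q * ∑' m : ℕ, ((m : ℂ) + 2) ^ 2 * q ^ m) := by
  rw [← (summable_pow_mul_geometric_of_norm_lt_one 2 hq).sum_add_tsum_nat_add 2, ← tsum_mul_left,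
    mul_add, ← tsum_mul_left]
  congr 1
  · simp [Finset.sum_range_succ]
  · refine tsum_congr fun m => ?_
    push_cast
    ring

lemma invCubeSum_eq_tsum_exp (ht : 0 < t.im) :
    invCubeSum t = 4 * π ^ 3 * I * ∑' m : ℕ, (m : ℂ) ^ 2 * exp (2 * π * I * t) ^ m := by
  have hconst : (-2 * π * I) ^ (2 + 1) / (Nat.factorial 2 : ℂ) = 4 * π ^ 3 * I := by
    rw [Nat.factorial_two, mul_pow, pow_succ I, I_sq]
    push_cast
    ring
  rw [← hconst]
  exact EisensteinSeries.qExpansion_identity (k := 2) (by norm_num) ⟨t, ht⟩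

theorem exists_invCubeSum_eq_mul_exp : ∃ K : ℝ, 0 < K ∧ ∀ t : ℂ, 1 ≤ t.im → ∃ e : ℂ,
    ‖e‖ ≤ K / t.im ∧ invCubeSum t = 4 * π ^ 3 * I * exp (2 * π * I * t) * (1 + e) := by
  refine ⟨∑' m : ℕ, ((m : ℝ) + 2) ^ 2 * (1 / 2 : ℝ) ^ m,
    summable_add_two_sq_mul_half_pow.tsum_pos (fun m => by positivity) 0 (by positivity),
    fun t ht => ?_⟩
  set q := exp (2 * π * I * t) with hq
  have hexp : 2 * t.im ≤ Real.exp (2 * π * t.im) := by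
    nlinarith [Real.add_one_le_exp (2 * π * t.im), Real.pi_gt_three]
  have hqle : ‖q‖ ≤ 1 / (2 * t.im) := by
    rw [hq, norm_exp, one_div, show (2 * π * I * t).re = -(2 * π * t.im) by simp, Real.exp_neg]
    exact inv_anti₀ (by linarith) hexp
  have hq1 : ‖q‖ ≤ 1 / t.im := hqle.trans (one_div_le_one_div_of_le (by linarith) (by linarith))
  have hq2 : ‖q‖ ≤ 1 / 2 := hqle.trans (one_div_le_one_div_of_le two_pos (by linarith))
  refine ⟨q * ∑' m : ℕ, ((m : ℂ) + 2) ^ 2 * q ^ m, ?_, ?_⟩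
  · rw [norm_mul, div_eq_mul_one_div, mul_comm]
    gcongr
    refine tsum_of_norm_bounded summable_add_two_sq_mul_half_pow.hasSum fun m => ?_
    have hm : ‖(m : ℂ) + 2‖ = m + 2 := by simpa using norm_natCast (m + 2)
    rw [norm_mul, norm_pow, norm_pow, hm]
    gcongr
  · rw [invCubeSum_eq_tsum_exp (by linarith), tsum_sq_mul_geometric_eq (by linarith)]
    ring

lemma norm_cpoch_le_pow_mul {w w' : ℂ} {c : ℝ} (m : ℕ) (h : ∀ j : ℕ, ‖w + j‖ ≤ c * ‖w' + j‖) :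
    ‖cpoch w m‖ ≤ c ^ m * ‖cpoch w' m‖ := by
  rw [cpoch, cpoch, norm_prod, norm_prod]
  calc _ ≤ ∏ j ∈ Finset.range m, c * ‖w' + j‖ :=
        Finset.prod_le_prod (fun _ _ => norm_nonneg _) fun j _ => h j
    _ = _ := by rw [Finset.prod_mul_distrib, Finset.prod_const, Finset.card_range]

lemma norm_cSfun_le_mul {t t' : ℂ} {c d : ℝ} (hc : 0 ≤ c) (hd : 0 < d) (ht' : t'.im ≠ 0)
    (hup : ∀ b : ℝ, ‖t + b‖ ≤ c * ‖t' + b‖) (hlo : ∀ b : ℝ, -n ≤ b → ‖t' + b‖ ≤ d * ‖t + b‖) :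
    ‖cSfun a r n t‖ ≤ c ^ (12 * r * n) * d ^ ((2 * n + 1) * a) * ‖cSfun a r n t'‖ := by
  have hnum : ∀ (b : ℝ) m, ‖cpoch (t + b) m‖ ≤ c ^ m * ‖cpoch (t' + b) m‖ := fun b m =>
    norm_cpoch_le_pow_mul m fun j => by
      have h := hup (b + j)
      push_cast at h
      rwa [← add_assoc, ← add_assoc] at h
  have h₁ := hnum (-((2 * r + 1) * n : ℕ)) (2 * r * n)
  have h₂ := hnum (n + 1) (2 * r * n)
  rw [ofReal_neg, ofReal_natCast, ← sub_eq_add_neg, ← sub_eq_add_neg] at h₁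
  rw [ofReal_add, ofReal_natCast, ofReal_one, ← add_assoc, ← add_assoc] at h₂
  have h₃ : ‖cpoch (t' - n) (2 * n + 1)‖ ≤ d ^ (2 * n + 1) * ‖cpoch (t - n) (2 * n + 1)‖ :=
    norm_cpoch_le_pow_mul _ fun j => by
      have h := hlo (-n + j) (le_add_of_nonneg_right (Nat.cast_nonneg j))
      push_cast at h
      rwa [← add_assoc, ← add_assoc, ← sub_eq_add_neg, ← sub_eq_add_neg] at h
  have hpos : 0 < ‖cpoch (t' - n) (2 * n + 1)‖ :=
    norm_pos_iff.2 <| cpoch_ne_zero _ fun j h => ht' <| by simpa using congrArg Complex.im h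
  calc ‖cSfun a r n t‖
      ≤ (c ^ (2 * r * n) * ‖cpoch (t' - ((2 * r + 1) * n : ℕ)) (2 * r * n)‖) ^ 3 *
          (c ^ (2 * r * n) * ‖cpoch (t' + n + 1) (2 * r * n)‖) ^ 3 /
          (‖cpoch (t' - n) (2 * n + 1)‖ / d ^ (2 * n + 1)) ^ a := by
        rw [cSfun, norm_div, norm_mul, norm_pow, norm_pow, norm_pow]
        gcongr
        rwa [div_le_iff₀' (by positivity)]
    _ = _ := by
        rw [cSfun, norm_div, norm_mul, norm_pow, norm_pow, norm_pow, div_pow, ← pow_mul d]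
        field_simp
        rw [show 12 * r * n = 2 * r * n * 6 by ring, pow_mul c]
        ring

lemma norm_add_mul_I_le_norm_add_mul_I (x : ℝ) {s s' : ℝ} (hs : 0 ≤ s) (h : s ≤ s') :
    ‖(x : ℂ) + s * I‖ ≤ ‖(x : ℂ) + s' * I‖ := by
  rw [norm_add_mul_I, norm_add_mul_I]
  gcongr

lemma norm_add_mul_I_le_div_mul (x : ℝ) {s s' : ℝ} (hs' : 0 < s') (h : s' ≤ s) :
    ‖(x : ℂ) + s * I‖ ≤ s / s' * ‖(x : ℂ) + s' * I‖ := by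
  have h1 : 1 ≤ s / s' := (one_le_div hs').2 h
  rw [norm_add_mul_I, norm_add_mul_I]
  refine Real.sqrt_le_iff.2 ⟨by positivity, ?_⟩
  rw [mul_pow, Real.sq_sqrt (by positivity), mul_add, div_pow, div_mul_cancel₀ _ (by positivity),
    ← div_pow]
  gcongr
  exact le_mul_of_one_le_left (sq_nonneg x) (one_le_pow₀ h1)

lemma norm_add_mul_I_le_exp_mul {x b : ℝ} (hb : 0 ≤ b) (hbx : b ≤ x) (y s : ℝ) :
    ‖(x : ℂ) + (b * y : ℝ) * I‖ ≤ Real.exp (y ^ 2 / 2) * ‖(x : ℂ) + s * I‖ := by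
  rw [norm_add_mul_I, norm_add_mul_I]
  refine Real.sqrt_le_iff.2 ⟨by positivity, ?_⟩
  have hexp : Real.exp (y ^ 2 / 2) ^ 2 = Real.exp (y ^ 2) := by
    rw [← Real.exp_nat_mul]
    ring_nf
  rw [mul_pow (Real.exp _), Real.sq_sqrt (by positivity), hexp]
  calc x ^ 2 + (b * y) ^ 2 ≤ x ^ 2 + (x * y) ^ 2 := by
        rw [mul_pow, mul_pow]
        gcongr
    _ = (y ^ 2 + 1) * x ^ 2 := by ring
    _ ≤ Real.exp (y ^ 2) * (x ^ 2 + s ^ 2) := by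
        gcongr
        · exact Real.add_one_le_exp _
        · exact le_add_of_nonneg_right (sq_nonneg s)

lemma norm_cSfun_le_of_im_le (a r : ℕ) (hn : 0 < n) {q s y : ℝ} (hq : 2 * n ≤ q) (hs : 0 ≤ s)
    (hy : 0 < y) (hsy : s ≤ n * y) :
    ‖cSfun a r n (q + s * I)‖ ≤
      Real.exp (2 * a * n * y ^ 2) * ‖cSfun a r n (q + (n * y : ℝ) * I)‖ := by
  have hn' : (1 : ℝ) ≤ n := by exact_mod_cast hn
  have hshift : ∀ b s : ℝ, (q : ℂ) + s * I + b = (q + b : ℝ) + s * I := fun b s => by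
    push_cast; ring
  have h := norm_cSfun_le_mul (a := a) (r := r) (n := n) (t := q + s * I)
    (t' := q + (n * y : ℝ) * I) zero_le_one (Real.exp_pos (y ^ 2 / 2))
    (by simpa using ⟨by linarith, hy.ne'⟩) (fun b => by
      rw [hshift, hshift, one_mul]
      exact norm_add_mul_I_le_norm_add_mul_I _ hs hsy) fun b hb => by
      rw [hshift, hshift]
      exact norm_add_mul_I_le_exp_mul n.cast_nonneg (by linarith) y s
  rw [one_pow, one_mul, ← Real.exp_nat_mul] at h
  refine h.trans (mul_le_mul_of_nonneg_right (Real.exp_le_exp.2 ?_) (norm_nonneg _))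
  have : (0 : ℝ) ≤ a * y ^ 2 := by positivity
  push_cast
  nlinarith

lemma norm_cSfun_le_of_le_im (a r n : ℕ) {q s s' : ℝ} (hs' : 0 < s') (hs : s' ≤ s) :
    ‖cSfun a r n (q + s * I)‖ ≤ (s / s') ^ (12 * r * n) * ‖cSfun a r n (q + s' * I)‖ := by
  have hshift : ∀ b s : ℝ, (q : ℂ) + s * I + b = (q + b : ℝ) + s * I := fun b s => by
    push_cast; ring
  have h := norm_cSfun_le_mul (a := a) (r := r) (n := n) (t := q + s * I) (t' := q + s' * I)
    (div_nonneg (hs'.le.trans hs) hs'.le) one_pos (by simpa using hs'.ne') (fun b => by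
      rw [hshift, hshift]
      exact norm_add_mul_I_le_div_mul _ hs' hs) fun b _ => by
      rw [hshift, hshift, one_mul]
      exact norm_add_mul_I_le_norm_add_mul_I _ hs'.le hs
  rwa [one_pow, mul_one] at h

end VerticalComparison

section LaplaceMethod

open Asymptotics

variable {F F' G : ℂ → ℂ} {x₀ κ : ℂ} {c y₀ y₁ y₂ η : ℝ} {c' : ℕ → ℝ}

lemma isLittleO_sub_sub_half_mul_sq (hF : ∀ᶠ x in 𝓝 x₀, HasDerivAt F (F' x) x)
    (hF' : HasDerivAt F' κ x₀) (h0 : F' x₀ = 0) :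
    (fun x => F x - F x₀ - κ / 2 * (x - x₀) ^ 2) =o[𝓝 x₀] fun x => (x - x₀) ^ 2 := by
  refine isLittleO_iff.2 fun ε hε => ?_
  obtain ⟨d, hd, hball⟩ := Metric.eventually_nhds_iff_ball.1
    ((isLittleO_iff.1 (hasDerivAt_iff_isLittleO.1 hF') hε).and hF)
  refine Metric.eventually_nhds_iff_ball.2 ⟨d, hd, fun x hx => ?_⟩
  have hsub : ∀ z ∈ Metric.closedBall x₀ (dist x x₀), z ∈ Metric.ball x₀ d :=
    fun z hz => Metric.mem_ball.2 ((Metric.mem_closedBall.1 hz).trans_lt hx)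
  have hderiv : ∀ z ∈ Metric.closedBall x₀ (dist x x₀),
      HasDerivAt (fun x => F x - κ / 2 * (x - x₀) ^ 2) (F' z - κ * (z - x₀)) z := fun z hz => by
    have hsq : HasDerivAt (fun x : ℂ => κ / 2 * (x - x₀) ^ 2) (κ / 2 * (2 * (z - x₀))) z := by
      simpa using (((hasDerivAt_id z).sub_const x₀).pow 2).const_mul (κ / 2)
    exact ((hball z (hsub z hz)).2.sub hsq).congr_deriv (by ring)
  have hbound : ∀ z ∈ Metric.closedBall x₀ (dist x x₀),
      ‖F' z - κ * (z - x₀)‖ ≤ ε * dist x x₀ := fun z hz => by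
    have h := (hball z (hsub z hz)).1
    rw [h0, sub_zero, smul_eq_mul, mul_comm (z - x₀), ← dist_eq_norm z] at h
    exact h.trans (mul_le_mul_of_nonneg_left hz hε.le)
  have hmean := (convex_closedBall x₀ (dist x x₀)).norm_image_sub_le_of_norm_hasDerivWithin_le
    (fun z hz => (hderiv z hz).hasDerivWithinAt) hbound
    (Metric.mem_closedBall_self dist_nonneg) (Metric.mem_closedBall.2 le_rfl)
  calc _ = ‖F x - κ / 2 * (x - x₀) ^ 2 - (F x₀ - κ / 2 * (x₀ - x₀) ^ 2)‖ := by ring_nf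
    _ ≤ ε * dist x x₀ * ‖x - x₀‖ := hmean
    _ = ε * ‖(x - x₀) ^ 2‖ := by
      rw [dist_eq_norm, norm_pow]
      ring

lemma tendsto_sqrt_natCast : Tendsto (fun n : ℕ => √(n : ℝ)) atTop atTop :=
  Real.tendsto_sqrt_atTop.comp tendsto_natCast_atTop_atTop

lemma tendsto_of_sqrt_mul_sub {w : ℂ} {x : ℕ → ℂ}
    (hx : Tendsto (fun n : ℕ => (√n : ℂ) * (x n - x₀)) atTop (𝓝 w)) : Tendsto x atTop (𝓝 x₀) := by
  have hinv : Tendsto (fun n : ℕ => ((√n)⁻¹ : ℂ)) atTop (𝓝 0) := by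
    have h := (continuous_ofReal.tendsto 0).comp tendsto_sqrt_natCast.inv_tendsto_atTop
    rw [ofReal_zero] at h
    exact h.congr fun n => by simp
  have h := (hinv.mul hx).add_const x₀
  rw [zero_mul, zero_add] at h
  refine h.congr' ?_
  filter_upwards [eventually_gt_atTop 0] with n hn
  have hsqrt : (√n : ℂ) ≠ 0 := by exact_mod_cast (Real.sqrt_pos.2 (by exact_mod_cast hn)).ne'
  rw [inv_mul_cancel_left₀ hsqrt, sub_add_cancel]

lemma tendsto_natCast_mul_sub {w : ℂ} {x : ℕ → ℂ}
    (hF : ∀ᶠ x in 𝓝 x₀, HasDerivAt F (F' x) x) (hF' : HasDerivAt F' κ x₀) (h0 : F' x₀ = 0)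
    (hx : Tendsto (fun n : ℕ => (√n : ℂ) * (x n - x₀)) atTop (𝓝 w)) :
    Tendsto (fun n : ℕ => (n : ℂ) * (F (x n) - F x₀)) atTop (𝓝 (κ / 2 * w ^ 2)) := by
  have hsq : Tendsto (fun n : ℕ => (n : ℂ) * (x n - x₀) ^ 2) atTop (𝓝 (w ^ 2)) := by
    refine (hx.pow 2).congr fun n => ?_
    rw [mul_pow, ← ofReal_pow, Real.sq_sqrt n.cast_nonneg, ofReal_natCast]
  have hrem : Tendsto (fun n : ℕ => (n : ℂ) * (F (x n) - F x₀ - κ / 2 * (x n - x₀) ^ 2)) atTop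
      (𝓝 0) := by
    rw [← isLittleO_one_iff ℂ]
    have h := (isLittleO_sub_sub_half_mul_sq hF hF' h0).comp_tendsto (tendsto_of_sqrt_mul_sub hx)
    exact ((isBigO_refl (fun n : ℕ => (n : ℂ)) atTop).mul_isLittleO h).trans_isBigO
      (hsq.isBigO_one ℂ)
  have h := hrem.add (hsq.const_mul (κ / 2))
  rw [zero_add] at h
  exact h.congr fun n => by ring

lemma tendsto_sqrt_mul_vertical_sub (hc : ∀ᶠ n : ℕ in atTop, |c' n - c| ≤ 1 / n) (y₀ σ : ℝ) :
    Tendsto (fun n : ℕ => (√n : ℂ) * (c' n + (y₀ + σ / √n : ℝ) * I - (c + y₀ * I))) atTop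
      (𝓝 (σ * I)) := by
  have hre : Tendsto (fun n : ℕ => √n * (c' n - c)) atTop (𝓝 0) := by
    refine squeeze_zero_norm' ?_ tendsto_sqrt_natCast.inv_tendsto_atTop
    filter_upwards [hc] with n hn
    calc ‖√n * (c' n - c)‖ = √n * |c' n - c| := by
          rw [norm_mul, Real.norm_eq_abs, Real.norm_eq_abs, abs_of_nonneg (Real.sqrt_nonneg _)]
      _ ≤ √n * (1 / n) := by gcongr
      _ = (√n)⁻¹ := by rw [mul_one_div, Real.sqrt_div_self', one_div]
  have h := ((continuous_ofReal.tendsto 0).comp hre).add_const (σ * I)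
  rw [ofReal_zero, zero_add] at h
  refine h.congr' ?_
  filter_upwards [eventually_gt_atTop 0] with n hn
  have hsqrt : (√n : ℂ) ≠ 0 := by exact_mod_cast (Real.sqrt_pos.2 (by exact_mod_cast hn)).ne'
  simp only [Function.comp_apply]
  push_cast
  field_simp
  ring

lemma eventually_mem_reProdIm (hc : ∀ᶠ n : ℕ in atTop, |c' n - c| ≤ 1 / n) (s : Set ℝ) :
    ∀ᶠ n : ℕ in atTop, ∀ y ∈ s, (c' n : ℂ) + y * I ∈ Icc (c - 1) (c + 1) ×ℂ s := by
  filter_upwards [hc, eventually_ge_atTop 1] with n hn h1 y hy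
  have hle : (1 : ℝ) / n ≤ 1 := div_le_one_of_le₀ (by exact_mod_cast h1) n.cast_nonneg
  have habs := abs_le.1 (hn.trans hle)
  rw [mem_reProdIm]
  simp only [add_re, ofReal_re, mul_re, I_re, I_im, ofReal_im, add_im, mul_im]
  refine ⟨⟨?_, ?_⟩, ?_⟩
  · linarith
  · linarith
  · simpa using hy

lemma reProdIm_Icc_subset_im_pos (hy : 0 < y₁) (s : Set ℝ) :
    s ×ℂ Icc y₁ y₂ ⊆ {x : ℂ | 0 < x.im} := fun _ hx => hy.trans_le hx.2.1

lemma exists_eventually_norm_le (hG : ContinuousOn G {x : ℂ | 0 < x.im}) (hy : 0 < y₁)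
    (hc : ∀ᶠ n : ℕ in atTop, |c' n - c| ≤ 1 / n) :
    ∃ B, ∀ᶠ n in atTop, ∀ y ∈ Icc y₁ y₂, ‖G (c' n + y * I)‖ ≤ B := by
  obtain ⟨B, hB⟩ := (isCompact_Icc.reProdIm isCompact_Icc).exists_bound_of_continuousOn
    (hG.mono (reProdIm_Icc_subset_im_pos (y₂ := y₂) hy (Icc (c - 1) (c + 1))))
  exact ⟨B, (eventually_mem_reProdIm hc (Icc y₁ y₂)).mono fun n hn y hy => hB _ (hn y hy)⟩

lemma exists_eventually_natCast_mul_re_le (hF : ∀ x : ℂ, 0 < x.im → HasDerivAt F (F' x) x)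
    (hF' : ContinuousOn F' {x : ℂ | 0 < x.im}) (hy : 0 < y₁)
    (hc : ∀ᶠ n : ℕ in atTop, |c' n - c| ≤ 1 / n) :
    ∃ B, ∀ᶠ n : ℕ in atTop, ∀ y ∈ Icc y₁ y₂,
      n * (F (c' n + y * I)).re ≤ n * (F (c + y * I)).re + B := by
  have hsub := reProdIm_Icc_subset_im_pos (y₂ := y₂) hy (Icc (c - 1) (c + 1))
  have hconv : Convex ℝ (Icc (c - 1) (c + 1) ×ℂ Icc y₁ y₂) :=
    ((convex_Icc _ _).linear_preimage reLm).inter ((convex_Icc _ _).linear_preimage imLm)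
  obtain ⟨B, hB⟩ := (isCompact_Icc.reProdIm isCompact_Icc).exists_bound_of_continuousOn
    (hF'.mono hsub)
  refine ⟨B, ?_⟩
  filter_upwards [hc, eventually_mem_reProdIm hc (Icc y₁ y₂), eventually_gt_atTop 0,
    eventually_mem_reProdIm (c := c) (c' := fun _ => c) (by simp) (Icc y₁ y₂)] with
    n hn hmem h0 hmem' y hy
  have hn0 : (0 : ℝ) < n := by exact_mod_cast h0
  have hB0 : 0 ≤ B := (norm_nonneg _).trans (hB _ (hmem y hy))
  have hdist : ‖(c' n + y * I : ℂ) - (c + y * I)‖ = |c' n - c| := by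
    rw [add_sub_add_right_eq_sub, ← ofReal_sub, norm_real, Real.norm_eq_abs]
  have hmean := (re_le_norm _).trans <| hconv.norm_image_sub_le_of_norm_hasDerivWithin_le
    (fun x hx => (hF x (hsub hx)).hasDerivWithinAt) hB (hmem' y hy) (hmem y hy)
  rw [sub_re, hdist] at hmean
  have hlip : (F (c' n + y * I)).re - (F (c + y * I)).re ≤ B * (1 / n) :=
    hmean.trans (mul_le_mul_of_nonneg_left hn hB0)
  have := mul_le_mul_of_nonneg_left hlip hn0.le
  rwa [mul_left_comm, mul_one_div_cancel hn0.ne', mul_one, mul_sub, sub_le_iff_le_add'] at this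

/-- Dominated convergence after the substitution `y = y₀ + σ / √n`. -/
lemma tendsto_sqrt_mul_integral {k : ℕ → ℝ → ℂ} {L : ℝ → ℂ} {A : ℝ} (h₁ : y₁ < y₀) (h₂ : y₀ < y₂)
    (hη : 0 < η) (hA : 0 ≤ A) (hk : ∀ᶠ n in atTop, ContinuousOn (k n) (Icc y₁ y₂))
    (hbound : ∀ᶠ n : ℕ in atTop, ∀ y ∈ Icc y₁ y₂,
      ‖k n y‖ ≤ A * Real.exp (-η * (n * (y - y₀) ^ 2)))
    (hlim : ∀ σ : ℝ, Tendsto (fun n : ℕ => k n (y₀ + σ / √n)) atTop (𝓝 (L σ))) :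
    Tendsto (fun n : ℕ => (√n : ℂ) * ∫ y in Icc y₁ y₂, k n y) atTop (𝓝 (∫ σ, L σ)) := by
  set g : ℕ → ℝ → ℂ := fun n => indicator (Icc y₁ y₂) (k n)
  have hrescale : ∀ᶠ n : ℕ in atTop,
      ∫ σ : ℝ, g n (y₀ + σ / √n) = (√n : ℂ) * ∫ y in Icc y₁ y₂, k n y := by
    filter_upwards with n
    rw [Measure.integral_comp_div (fun σ => g n (y₀ + σ)) √n,
      integral_add_left_eq_self (μ := volume) (g n) y₀, abs_of_nonneg (Real.sqrt_nonneg _),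
      integral_indicator measurableSet_Icc, real_smul]
  refine Tendsto.congr' hrescale (tendsto_integral_filter_of_dominated_convergence
    (fun σ => A * Real.exp (-η * σ ^ 2)) ?_ ?_ ((integrable_exp_neg_mul_sq hη).const_mul A) ?_)
  · filter_upwards [hk] with n hn
    have hmeas := hn.measurable_piecewise (g := (0 : ℝ → ℂ)) continuousOn_const measurableSet_Icc
    rw [piecewise_eq_indicator] at hmeas
    exact (hmeas.comp (by fun_prop)).aestronglyMeasurable
  · filter_upwards [hbound, eventually_gt_atTop 0] with n hn h0
    have hn0 : (0 : ℝ) < n := by exact_mod_cast h0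
    refine Eventually.of_forall fun σ => ?_
    by_cases hy : y₀ + σ / √n ∈ Icc y₁ y₂
    · have hσ : n * (y₀ + σ / √n - y₀) ^ 2 = σ ^ 2 := by
        rw [add_sub_cancel_left, div_pow, Real.sq_sqrt hn0.le, mul_div_cancel₀ _ hn0.ne']
      have hval : g n (y₀ + σ / √n) = k n (y₀ + σ / √n) := indicator_of_mem hy _
      exact hval ▸ hσ ▸ hn _ hy
    · have hzero : ‖g n (y₀ + σ / √n)‖ = 0 := norm_eq_zero.2 (indicator_of_notMem hy _)
      rw [hzero]
      positivity
  · refine Eventually.of_forall fun σ => (hlim σ).congr' ?_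
    have hy : Tendsto (fun n : ℕ => y₀ + σ / √n) atTop (𝓝 y₀) := by
      simpa using (tendsto_sqrt_natCast.const_div_atTop σ).const_add y₀
    filter_upwards [hy.eventually_mem (Icc_mem_nhds h₁ h₂)] with n hn
    have hval : g n (y₀ + σ / √n) = k n (y₀ + σ / √n) := indicator_of_mem hn _
    exact hval.symm

lemma integral_exp_neg_half_mul_sq (hκ : 0 < κ.re) :
    ∫ σ : ℝ, exp (-(κ / 2) * (σ : ℂ) ^ 2) = (2 * π / κ) ^ (1 / 2 : ℂ) := by
  have h0 : κ ≠ 0 := fun h => by simp [h] at hκ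
  rw [integral_gaussian_complex (by simpa using hκ)]
  congr 1
  field_simp

lemma eventually_norm_exp_mul_le {h : ℕ → ℝ → ℂ} {K : ℝ}
    (hF : ∀ x : ℂ, 0 < x.im → HasDerivAt F (F' x) x)
    (hFc : ContinuousOn F' {x : ℂ | 0 < x.im}) (hG : ContinuousOn G {x : ℂ | 0 < x.im})
    (hy₁ : 0 < y₁)
    (hdec : ∀ y ∈ Icc y₁ y₂, (F (c + y * I)).re ≤ (F (c + y₀ * I)).re - η * (y - y₀) ^ 2)
    (hc : ∀ᶠ n : ℕ in atTop, |c' n - c| ≤ 1 / n)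
    (hh : ∀ᶠ n : ℕ in atTop, ∀ y ∈ Icc y₁ y₂,
      ‖h n y - exp (n * F (c' n + y * I)) * G (c' n + y * I)‖ ≤
        K / n * ‖exp (n * F (c' n + y * I)) * G (c' n + y * I)‖) :
    ∃ A, 0 ≤ A ∧ ∀ᶠ n : ℕ in atTop, ∀ y ∈ Icc y₁ y₂,
      ‖exp (-(n * F (c + y₀ * I))) * h n y‖ ≤ A * Real.exp (-η * (n * (y - y₀) ^ 2)) := by
  obtain ⟨BF, hBF⟩ := exists_eventually_natCast_mul_re_le (y₂ := y₂) hF hFc hy₁ hc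
  obtain ⟨BG, hBG⟩ := exists_eventually_norm_le (y₂ := y₂) hG hy₁ hc
  refine ⟨(1 + |K|) * (Real.exp BF * |BG|), by positivity, ?_⟩
  filter_upwards [hBF, hBG, hh, eventually_ge_atTop 1] with n hFn hGn hhn h1 y hy
  set M := exp (n * F (c' n + y * I)) * G (c' n + y * I)
  have hK : K / n ≤ |K| := (div_le_div_of_nonneg_right (le_abs_self K) n.cast_nonneg).trans
    (div_le_self (abs_nonneg K) (by exact_mod_cast h1))
  have hhM : ‖h n y‖ ≤ (1 + |K|) * ‖M‖ := by
    linarith [norm_le_norm_add_norm_sub' (h n y) M, hhn y hy,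
      mul_le_mul_of_nonneg_right hK (norm_nonneg M)]
  have hM : ‖exp (-(n * F (c + y₀ * I)))‖ * ‖M‖ ≤
      Real.exp BF * |BG| * Real.exp (-η * (n * (y - y₀) ^ 2)) := by
    rw [norm_mul, norm_exp, norm_exp, ← mul_assoc, ← Real.exp_add, mul_right_comm, ← Real.exp_add]
    refine mul_le_mul (Real.exp_le_exp.2 ?_) ((hGn y hy).trans (le_abs_self BG)) (norm_nonneg _)
      (Real.exp_nonneg _)
    have hdecn := mul_le_mul_of_nonneg_left (hdec y hy) n.cast_nonneg
    have hFny := hFn y hy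
    simp only [neg_re, mul_re, natCast_re, natCast_im, zero_mul, sub_zero]
    linarith
  calc _ ≤ ‖exp (-(n * F (c + y₀ * I)))‖ * ((1 + |K|) * ‖M‖) := by rw [norm_mul]; gcongr
    _ = (1 + |K|) * (‖exp (-(n * F (c + y₀ * I)))‖ * ‖M‖) := by ring
    _ ≤ (1 + |K|) * (Real.exp BF * |BG| * Real.exp (-η * (n * (y - y₀) ^ 2))) := by gcongr
    _ = _ := by ring

lemma tendsto_exp_mul_of_norm_sub_le {K : ℝ}
    (hFx : ∀ᶠ x in 𝓝 x₀, HasDerivAt F (F' x) x)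
    (hF' : HasDerivAt F' κ x₀) (h0 : F' x₀ = 0) (hG : ContinuousAt G x₀) {w : ℂ} {x : ℕ → ℂ}
    {b : ℕ → ℂ} (hx : Tendsto (fun n : ℕ => (√n : ℂ) * (x n - x₀)) atTop (𝓝 w))
    (hb : ∀ᶠ n : ℕ in atTop,
      ‖b n - exp (n * F (x n)) * G (x n)‖ ≤ K / n * ‖exp (n * F (x n)) * G (x n)‖) :
    Tendsto (fun n : ℕ => exp (-(n * F x₀)) * b n) atTop (𝓝 (exp (κ / 2 * w ^ 2) * G x₀)) := by
  have hmain : Tendsto (fun n : ℕ => exp (-(n * F x₀)) * (exp (n * F (x n)) * G (x n))) atTop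
      (𝓝 (exp (κ / 2 * w ^ 2) * G x₀)) := by
    refine (((continuous_exp.tendsto _).comp (tendsto_natCast_mul_sub hFx hF' h0 hx)).mul
      (hG.tendsto.comp (tendsto_of_sqrt_mul_sub hx))).congr fun n => ?_
    rw [Function.comp_apply, Function.comp_apply, ← mul_assoc, ← exp_add]
    ring_nf
  have hrem : Tendsto (fun n : ℕ => exp (-(n * F x₀)) * (b n - exp (n * F (x n)) * G (x n))) atTop
      (𝓝 0) := by
    have hlim := (tendsto_const_div_atTop_nhds_zero_nat K).mul hmain.norm
    rw [zero_mul] at hlim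
    refine squeeze_zero_norm' (hb.mono fun n hn => ?_) hlim
    rw [norm_mul, norm_mul, mul_left_comm]
    gcongr
  have hadd := hmain.add hrem
  rw [add_zero] at hadd
  exact hadd.congr fun n => by ring

/-- **Laplace's method**. The abscissa may vary with `n` by `O(1/n)` so that the rescaled lines of
integration can stay away from the integers. -/
theorem tendsto_sqrt_mul_exp_mul_integral {h : ℕ → ℝ → ℂ} {K : ℝ}
    (hF : ∀ x : ℂ, 0 < x.im → HasDerivAt F (F' x) x)
    (hFc : ContinuousOn F' {x : ℂ | 0 < x.im}) (hF' : HasDerivAt F' κ (c + y₀ * I))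
    (h0 : F' (c + y₀ * I) = 0) (hκ : 0 < κ.re) (hG : ContinuousOn G {x : ℂ | 0 < x.im})
    (hy₁ : 0 < y₁) (h₁ : y₁ < y₀) (h₂ : y₀ < y₂) (hη : 0 < η)
    (hdec : ∀ y ∈ Icc y₁ y₂, (F (c + y * I)).re ≤ (F (c + y₀ * I)).re - η * (y - y₀) ^ 2)
    (hc : ∀ᶠ n : ℕ in atTop, |c' n - c| ≤ 1 / n)
    (hh : ∀ᶠ n : ℕ in atTop, ∀ y ∈ Icc y₁ y₂,
      ‖h n y - exp (n * F (c' n + y * I)) * G (c' n + y * I)‖ ≤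
        K / n * ‖exp (n * F (c' n + y * I)) * G (c' n + y * I)‖)
    (hcont : ∀ᶠ n in atTop, ContinuousOn (h n) (Icc y₁ y₂)) :
    Tendsto (fun n : ℕ => (√n : ℂ) * ∫ y in Icc y₁ y₂, exp (-(n * F (c + y₀ * I))) * h n y) atTop
      (𝓝 (G (c + y₀ * I) * (2 * π / κ) ^ (1 / 2 : ℂ))) := by
  obtain ⟨A, hA, hbound⟩ := eventually_norm_exp_mul_le hF hFc hG hy₁ hdec hc hh
  have him : 0 < (c + y₀ * I : ℂ).im := by simpa using hy₁.trans h₁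
  have hnhds := (isOpen_lt continuous_const continuous_im).mem_nhds him
  have hlim (σ : ℝ) : Tendsto (fun n : ℕ => exp (-(n * F (c + y₀ * I))) * h n (y₀ + σ / √n)) atTop
      (𝓝 (exp (-(κ / 2) * (σ : ℂ) ^ 2) * G (c + y₀ * I))) := by
    have hw : -(κ / 2) * (σ : ℂ) ^ 2 = κ / 2 * (σ * I) ^ 2 := by
      rw [mul_pow, I_sq]
      ring
    have hy : Tendsto (fun n : ℕ => y₀ + σ / √n) atTop (𝓝 y₀) := by
      simpa using (tendsto_sqrt_natCast.const_div_atTop σ).const_add y₀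
    rw [hw]
    refine tendsto_exp_mul_of_norm_sub_le (mem_of_superset hnhds hF) hF' h0
      (hG.continuousAt hnhds) (tendsto_sqrt_mul_vertical_sub hc y₀ σ) (K := K) ?_
    filter_upwards [hh, hy (Icc_mem_nhds h₁ h₂)] with n hn hmem
    exact hn _ hmem
  have hlaplace := tendsto_sqrt_mul_integral h₁ h₂ hη hA
    (k := fun n y => exp (-(n * F (c + y₀ * I))) * h n y)
    (hcont.mono fun n hn => continuousOn_const.mul hn) hbound hlim
  rwa [integral_mul_const, integral_exp_neg_half_mul_sq hκ, mul_comm (_ ^ _)] at hlaplace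

end LaplaceMethod

section Phase

/-- The exponential rate of `cSfun a r n (n x) * invCubeSum (n x)` as `n → ∞`, the factor
`exp (2 π i n x)` coming from `invCubeSum`. -/
noncomputable def phase (a r : ℕ) (x : ℂ) : ℂ := rate a r x + 2 * π * I * x

/-- The derivative of `phase`. -/
noncomputable def phaseDeriv (a r : ℕ) (x : ℂ) : ℂ :=
  3 * (log (x - 1) - log (x - (2 * r + 1))) + 3 * (log (x + (2 * r + 1)) - log (x + 1)) -
    a * (log (x + 1) - log (x - 1)) + 2 * π * I

/-- The second derivative of `phase`. -/
noncomputable def phaseDeriv₂ (a r : ℕ) (x : ℂ) : ℂ :=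
  3 * ((x - 1)⁻¹ - (x - (2 * r + 1))⁻¹) + 3 * ((x + (2 * r + 1))⁻¹ - (x + 1)⁻¹) -
    a * ((x + 1)⁻¹ - (x - 1)⁻¹)

variable (a r : ℕ) {x : ℂ}

lemma hasDerivAt_mulLogSub (hx : x ∈ slitPlane) : HasDerivAt mulLogSub (log x) x := by
  have h := ((hasDerivAt_id x).mul (hasDerivAt_log hx)).sub (hasDerivAt_id x)
  refine h.congr_deriv ?_
  simp [slitPlane_ne_zero hx]

lemma sub_mem_slitPlane (hx : 0 < x.im) (b : ℝ) : x - b ∈ slitPlane :=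
  Or.inr (by simpa using hx.ne')

lemma add_mem_slitPlane (hx : 0 < x.im) (b : ℝ) : x + b ∈ slitPlane :=
  Or.inr (by simpa using hx.ne')

lemma hasDerivAt_phase (hx : 0 < x.im) : HasDerivAt (phase a r) (phaseDeriv a r x) x := by
  have hsub (b : ℝ) := (hasDerivAt_mulLogSub (sub_mem_slitPlane hx b)).comp_sub_const x b
  have hadd (b : ℝ) := (hasDerivAt_mulLogSub (add_mem_slitPlane hx b)).comp_add_const x b
  have h := (((((hsub 1).sub (hsub (2 * r + 1))).const_mul 3).add
    (((hadd (2 * r + 1)).sub (hadd 1)).const_mul 3)).sub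
    (((hadd 1).sub (hsub 1)).const_mul (a : ℂ))).add ((hasDerivAt_id x).const_mul (2 * π * I))
  push_cast at h
  exact h.congr_deriv (by rw [phaseDeriv, mul_one])

lemma hasDerivAt_phaseDeriv (hx : 0 < x.im) :
    HasDerivAt (phaseDeriv a r) (phaseDeriv₂ a r x) x := by
  have hsub (b : ℝ) := (hasDerivAt_log (sub_mem_slitPlane hx b)).comp_sub_const x b
  have hadd (b : ℝ) := (hasDerivAt_log (add_mem_slitPlane hx b)).comp_add_const x b
  have h := (((((hsub 1).sub (hsub (2 * r + 1))).const_mul 3).add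
    (((hadd (2 * r + 1)).sub (hadd 1)).const_mul 3)).sub
    (((hadd 1).sub (hsub 1)).const_mul (a : ℂ))).add_const (2 * π * I)
  push_cast at h
  exact h

lemma continuousOn_phaseDeriv : ContinuousOn (phaseDeriv a r) {x : ℂ | 0 < x.im} :=
  fun _ hx => (hasDerivAt_phaseDeriv a r hx).continuousAt.continuousWithinAt

lemma continuousOn_exp_logAmplitude :
    ContinuousOn (fun x => exp (logAmplitude a r x)) {x : ℂ | 0 < x.im} := by
  have hsub (b : ℝ) : ContinuousOn (fun x : ℂ => log (x - b)) {x : ℂ | 0 < x.im} :=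
    (continuousOn_id.sub continuousOn_const).clog fun _ hx => sub_mem_slitPlane hx b
  have hadd (b : ℝ) : ContinuousOn (fun x : ℂ => log (x + b)) {x : ℂ | 0 < x.im} :=
    (continuousOn_id.add continuousOn_const).clog fun _ hx => add_mem_slitPlane hx b
  have h := (((hsub 1).add (hadd 1)).const_mul (-(((a : ℂ) + 3) / 2))).add
    (((hsub (2 * r + 1)).add (hadd (2 * r + 1))).const_mul (3 / 2))
  push_cast at h
  exact h.cexp

lemma natCast_mul_rate (n : ℕ) (x : ℂ) :
    (n : ℂ) * rate a r x = n * phase a r x - 2 * π * I * (n * x) := by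
  rw [phase]
  ring

end Phase

section LineIntegrand

/-- The abscissa `⌊c n⌋ + 1/2` of the line of integration, halfway between two integers so that the
line avoids the poles of `invCubeSum`. -/
noncomputable def lineAbscissa (c : ℝ) (n : ℕ) : ℝ := (⌊c * n⌋₊ : ℝ) + 1 / 2

/-- The integrand of the integral representation of `Sder` on the line `Re t = lineAbscissa c n`. -/
noncomputable def lineIntegrand (a r : ℕ) (c : ℝ) (n : ℕ) (s : ℝ) : ℂ :=
  cSfun a r n (lineAbscissa c n + s * I) * invCubeSum (lineAbscissa c n + s * I)

variable {a r n : ℕ} {c y : ℝ}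

lemma abs_lineAbscissa_div_sub_le (hc : 0 ≤ c) (hn : 0 < n) :
    |lineAbscissa c n / n - c| ≤ 1 / n := by
  have hn' : (0 : ℝ) < n := by exact_mod_cast hn
  have hfloor := Nat.floor_le (show 0 ≤ c * n by positivity)
  have hlt := Nat.lt_floor_add_one (c * n)
  rw [div_sub' hn'.ne', abs_div, abs_of_pos hn', mul_comm (n : ℝ), lineAbscissa]
  gcongr
  rw [abs_le]
  constructor
  · linarith
  · linarith

lemma natCast_mul_lineAbscissa_div_add (c y : ℝ) (hn : 0 < n) :
    (n : ℂ) * ((lineAbscissa c n / n : ℝ) + y * I) = lineAbscissa c n + (n * y : ℝ) * I := by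
  have hn' : (n : ℂ) ≠ 0 := by exact_mod_cast hn.ne'
  push_cast
  field_simp

lemma two_mul_le_lineAbscissa (hc : 3 ≤ c) (hn : 0 < n) : 2 * (n : ℝ) ≤ lineAbscissa c n := by
  have hn' : (1 : ℝ) ≤ n := by exact_mod_cast hn
  rw [lineAbscissa]
  nlinarith [Nat.lt_floor_add_one (c * n)]

lemma lineAbscissa_add_intCast_ne_zero (c : ℝ) (n : ℕ) (m : ℤ) : lineAbscissa c n + m ≠ 0 :=
  add_intCast_ne_zero_of_lt_of_lt (k := ⌊c * n⌋₊) (by rw [lineAbscissa]; linarith)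
    (by rw [lineAbscissa]; linarith) m

lemma exists_norm_invCubeSum_lineAbscissa_le :
    ∃ B, 0 ≤ B ∧ ∀ c n (s : ℝ), ‖invCubeSum (lineAbscissa c n + s * I)‖ ≤ B := by
  refine ⟨∑' m : ℤ, 1 / |(1 / 2 : ℝ) + m| ^ 3, tsum_nonneg fun m => by positivity,
    fun c n s => ?_⟩
  have hshift : (lineAbscissa c n : ℂ) + s * I = ((1 / 2 : ℝ) + s * I) + (⌊c * n⌋₊ : ℤ) := by
    rw [lineAbscissa]
    push_cast
    ring
  rw [hshift, invCubeSum_add_int]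
  exact norm_invCubeSum_vertical_le
    (add_intCast_ne_zero_of_lt_of_lt (k := 0) (by norm_num) (by norm_num)) s

lemma halfPlaneDecay_cSfun_lineAbscissa (ha : 6 * r + 2 ≤ a) (hc : 3 ≤ c) (hn : 0 < n) :
    HalfPlaneDecay (cSfun a r n) (lineAbscissa c n) := by
  have hn' : (0 : ℝ) < n := by exact_mod_cast hn
  exact halfPlaneDecay_cSfun ha (by linarith [two_mul_le_lineAbscissa hc hn])

lemma integrable_lineIntegrand (ha : 6 * r + 2 ≤ a) (hc : 3 ≤ c) (hn : 0 < n) :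
    Integrable (lineIntegrand a r c n) :=
  integrable_mul_invCubeSum (halfPlaneDecay_cSfun_lineAbscissa ha hc hn).integrable_vertical
    (lineAbscissa_add_intCast_ne_zero c n)

lemma continuous_lineIntegrand (ha : 6 * r + 2 ≤ a) (hc : 3 ≤ c) (hn : 0 < n) :
    Continuous (lineIntegrand a r c n) :=
  (halfPlaneDecay_cSfun_lineAbscissa ha hc hn).continuous_vertical.mul
    (continuous_invCubeSum_vertical (lineAbscissa_add_intCast_ne_zero c n))

lemma norm_cSfun_natCast_mul_le (a r : ℕ) {x : ℂ} (hn : 0 < n) (hx : 2 ≤ n * x.im) :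
    ‖cSfun a r n (n * x)‖ ≤ Real.exp (n * (phase a r x).re) * ‖exp (logAmplitude a r x)‖ *
      Real.exp (logScale a r n + n * (2 * π * x.im) + (24 * r + 4 * a) / (n * x.im ^ 2)) := by
  obtain ⟨e, he, hexp⟩ := exists_cSfun_natCast_mul_eq_exp a r hn hx
  have hre := congrArg re (natCast_mul_rate a r n x)
  simp only [mul_re, natCast_re, natCast_im, sub_re, zero_mul, sub_zero, mul_im, I_re, I_im,
    ofReal_re, ofReal_im, re_ofNat, im_ofNat, mul_zero] at hre
  rw [hexp, norm_exp, norm_exp, ← Real.exp_add, ← Real.exp_add]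
  simp only [add_re, ofReal_re, mul_re, natCast_re, natCast_im, zero_mul, sub_zero]
  refine Real.exp_le_exp.2 ?_
  linarith [(re_le_norm e).trans he]

lemma exists_eventually_norm_cSfun_lineAbscissa_le (a r : ℕ) (hc : 0 ≤ c) (hy : 0 < y) :
    ∃ C, 0 ≤ C ∧ ∀ᶠ n : ℕ in atTop, ‖cSfun a r n (lineAbscissa c n + (n * y : ℝ) * I)‖ ≤
      C * Real.exp (logScale a r n + n * ((phase a r (c + y * I)).re + 2 * π * y)) := by
  have hclose : ∀ᶠ n : ℕ in atTop, |lineAbscissa c n / n - c| ≤ 1 / n :=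
    (eventually_gt_atTop 0).mono fun n => abs_lineAbscissa_div_sub_le hc
  obtain ⟨BF, hBF⟩ := exists_eventually_natCast_mul_re_le (y₂ := y)
    (fun x hx => hasDerivAt_phase a r hx) (continuousOn_phaseDeriv a r) hy hclose
  obtain ⟨BG, hBG⟩ := exists_eventually_norm_le (y₂ := y) (continuousOn_exp_logAmplitude a r) hy
    hclose
  refine ⟨Real.exp BF * |BG| * Real.exp ((24 * r + 4 * a) / y ^ 2), by positivity, ?_⟩
  filter_upwards [hBF, hBG, eventually_gt_atTop 0,
    tendsto_natCast_atTop_atTop.eventually_ge_atTop (2 / y)] with n hFn hGn hn h2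
  have hn' : (1 : ℝ) ≤ n := by exact_mod_cast hn
  have hmem : y ∈ Icc y y := ⟨le_rfl, le_rfl⟩
  set x : ℂ := (lineAbscissa c n / n : ℝ) + y * I with hx
  have him : x.im = y := by simp [hx]
  have hle := norm_cSfun_natCast_mul_le a r hn (x := x) (by rwa [him, ← div_le_iff₀ hy])
  have hrem : (24 * r + 4 * a) / (n * y ^ 2) ≤ (24 * r + 4 * a) / y ^ 2 := by
    gcongr
    exact le_mul_of_one_le_left (by positivity) hn'
  rw [← natCast_mul_lineAbscissa_div_add c y hn, ← hx]
  rw [him] at hle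
  calc _ ≤ _ := hle
    _ ≤ Real.exp (n * (phase a r (c + y * I)).re + BF) * |BG| *
        Real.exp (logScale a r n + n * (2 * π * y) + (24 * r + 4 * a) / y ^ 2) := by
      gcongr
      · exact hFn y hmem
      · exact (hGn y hmem).trans (le_abs_self BG)
    _ = _ := by
      rw [mul_add (n : ℝ)]
      simp only [Real.exp_add]
      ring

end LineIntegrand

section OuterPieces

variable {a r : ℕ} {c y : ℝ}

lemma eventually_norm_integral_Ioc_lineIntegrand_le (a r : ℕ) (hc : 3 ≤ c) (hy : 0 < y) :
    ∃ C, 0 ≤ C ∧ ∀ᶠ n : ℕ in atTop, ‖∫ s in Ioc (0 : ℝ) (n * y), lineIntegrand a r c n s‖ ≤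
      C * n * Real.exp (logScale a r n +
        n * ((phase a r (c + y * I)).re + 2 * π * y + 2 * a * y ^ 2)) := by
  obtain ⟨C, hC, hbound⟩ := exists_eventually_norm_cSfun_lineAbscissa_le a r (c := c)
    (by linarith) hy
  obtain ⟨B, hB, hinv⟩ := exists_norm_invCubeSum_lineAbscissa_le
  refine ⟨C * B * y, by positivity, ?_⟩
  filter_upwards [hbound, eventually_gt_atTop 0] with n hn h0
  set E := Real.exp (logScale a r n +
    n * ((phase a r (c + y * I)).re + 2 * π * y + 2 * a * y ^ 2)) with hE
  have hle : ∀ s ∈ Ioc (0 : ℝ) (n * y), ‖lineIntegrand a r c n s‖ ≤ C * E * B := fun s hs => by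
    rw [lineIntegrand, norm_mul]
    refine mul_le_mul ?_ (hinv c n s) (norm_nonneg _) (by positivity)
    calc _ ≤ Real.exp (2 * a * n * y ^ 2) * _ :=
          norm_cSfun_le_of_im_le a r h0 (two_mul_le_lineAbscissa hc h0) hs.1.le hy hs.2
      _ ≤ Real.exp (2 * a * n * y ^ 2) *
          (C * Real.exp (logScale a r n + n * ((phase a r (c + y * I)).re + 2 * π * y))) := by
        gcongr
      _ = C * E := by
        rw [hE, mul_left_comm, ← Real.exp_add]
        ring_nf
  refine (norm_setIntegral_le_of_norm_le_const measure_Ioc_lt_top hle).trans_eq ?_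
  rw [Real.volume_real_Ioc_of_le (by positivity)]
  ring

lemma norm_integral_Ioi_le_of_norm_le_exp {f : ℝ → ℂ} {A b s₀ : ℝ} (hb : 0 < b)
    (hf : ∀ s, s₀ < s → ‖f s‖ ≤ A * Real.exp (-b * (s - s₀))) :
    ‖∫ s in Ioi s₀, f s‖ ≤ A / b := by
  have hsplit : (fun s => A * Real.exp (-b * (s - s₀))) =
      fun s => A * Real.exp (b * s₀) * Real.exp (-b * s) := by
    funext s
    rw [mul_assoc, ← Real.exp_add]
    ring_nf
  have hint : IntegrableOn (fun s => A * Real.exp (-b * (s - s₀))) (Ioi s₀) := by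
    rw [hsplit]
    exact (exp_neg_integrableOn_Ioi s₀ hb).const_mul _
  refine (norm_integral_le_of_norm_le hint
    ((ae_restrict_iff' measurableSet_Ioi).2 (Eventually.of_forall hf))).trans_eq ?_
  rw [hsplit, integral_const_mul, integral_exp_mul_Ioi (neg_lt_zero.2 hb), neg_div_neg_eq,
    mul_div_assoc', mul_assoc, ← Real.exp_add, neg_mul, add_neg_cancel, Real.exp_zero, mul_one]

lemma exists_norm_invCubeSum_le_exp :
    ∃ K, 0 ≤ K ∧ ∀ t : ℂ, 1 ≤ t.im → ‖invCubeSum t‖ ≤ K * Real.exp (-(2 * π * t.im)) := by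
  obtain ⟨K, hK, h⟩ := exists_invCubeSum_eq_mul_exp
  refine ⟨‖4 * (π : ℂ) ^ 3 * I‖ * (1 + K), by positivity, fun t ht => ?_⟩
  obtain ⟨e, he, heq⟩ := h t ht
  have he' : ‖1 + e‖ ≤ 1 + K := by
    refine (norm_add_le _ _).trans ?_
    rw [norm_one]
    exact add_le_add_right (he.trans (div_le_self hK.le ht)) 1
  have hre : (2 * π * I * t).re = -(2 * π * t.im) := by simp
  rw [heq, norm_mul, norm_mul, norm_exp, hre, mul_right_comm]
  gcongr

lemma div_pow_le_exp {s s' b : ℝ} {m : ℕ} (hs' : 0 < s') (hs : s' ≤ s) (hm : m ≤ b * s') :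
    (s / s') ^ m ≤ Real.exp (b * (s - s')) := by
  have hle : s / s' ≤ Real.exp (s / s' - 1) := by
    simpa using Real.add_one_le_exp (s / s' - 1)
  have hnonneg : 0 ≤ s / s' - 1 := by rwa [sub_nonneg, one_le_div hs']
  calc (s / s') ^ m ≤ Real.exp (s / s' - 1) ^ m :=
        pow_le_pow_left₀ (div_nonneg (hs'.le.trans hs) hs'.le) hle m
    _ = Real.exp (m * (s / s' - 1)) := (Real.exp_nat_mul _ m).symm
    _ ≤ Real.exp (b * s' * (s / s' - 1)) := by gcongr
    _ = Real.exp (b * (s - s')) := by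
      congr 1
      field_simp

lemma eventually_norm_integral_Ioi_lineIntegrand_le (a r : ℕ) (hc : 0 ≤ c) (hy : 0 < y)
    (hry : 12 * r ≤ π * y) :
    ∃ C, 0 ≤ C ∧ ∀ᶠ n : ℕ in atTop, ‖∫ s in Ioi (n * y : ℝ), lineIntegrand a r c n s‖ ≤
      C * Real.exp (logScale a r n + n * (phase a r (c + y * I)).re) := by
  obtain ⟨C, hC, hbound⟩ := exists_eventually_norm_cSfun_lineAbscissa_le a r hc hy
  obtain ⟨K, hK, hinv⟩ := exists_norm_invCubeSum_le_exp
  refine ⟨C * K / π, by positivity, ?_⟩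
  filter_upwards [hbound,
    tendsto_natCast_atTop_atTop.eventually_ge_atTop (1 / y)] with n hn h1
  rw [div_le_iff₀ hy] at h1
  set E := Real.exp (logScale a r n + n * (phase a r (c + y * I)).re) with hE
  have hle (s : ℝ) (hs : n * y < s) :
      ‖lineIntegrand a r c n s‖ ≤ C * K * E * Real.exp (-π * (s - n * y)) := by
    have hgrowth : (s / (n * y)) ^ (12 * r * n) ≤ Real.exp (π * (s - n * y)) := by
      refine div_pow_le_exp (zero_lt_one.trans_le h1) hs.le ?_
      push_cast
      linarith [mul_le_mul_of_nonneg_right hry n.cast_nonneg]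
    have him : (lineAbscissa c n + s * I : ℂ).im = s := by simp
    have hker := hinv (lineAbscissa c n + s * I) (by rw [him]; exact h1.trans hs.le)
    rw [him] at hker
    rw [lineIntegrand, norm_mul]
    calc _ ≤ Real.exp (π * (s - n * y)) * (C * Real.exp (logScale a r n +
            n * ((phase a r (c + y * I)).re + 2 * π * y))) * (K * Real.exp (-(2 * π * s))) :=
          mul_le_mul ((norm_cSfun_le_of_le_im a r n (zero_lt_one.trans_le h1) hs.le).trans
            (mul_le_mul hgrowth hn (norm_nonneg _) (Real.exp_nonneg _))) hker (norm_nonneg _)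
            (by positivity)
      _ = C * K * (Real.exp (π * (s - n * y)) * Real.exp (logScale a r n +
            n * ((phase a r (c + y * I)).re + 2 * π * y)) * Real.exp (-(2 * π * s))) := by ring
      _ = C * K * E * Real.exp (-π * (s - n * y)) := by
        rw [hE, mul_assoc (C * K), ← Real.exp_add, ← Real.exp_add, ← Real.exp_add]
        ring_nf
  refine (norm_integral_Ioi_le_of_norm_le_exp Real.pi_pos hle).trans_eq ?_
  ring

end OuterPieces

section SaddlePoint

variable {a r : ℕ} {c y₀ y₁ y₂ η : ℝ}

lemma norm_exp_mul_one_add_sub_one_le {e e' : ℂ} (he : ‖e‖ ≤ 1) :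
    ‖exp e * (1 + e') - 1‖ ≤ 2 * ‖e‖ + 3 * ‖e'‖ := by
  have hexp := norm_exp_sub_one_le he
  calc _ = ‖(exp e - 1) + (exp e - 1) * e' + e'‖ := by ring_nf
    _ ≤ ‖exp e - 1‖ + ‖exp e - 1‖ * ‖e'‖ + ‖e'‖ := by
      rw [← norm_mul]
      exact norm_add₃_le
    _ ≤ 2 * ‖e‖ + 2 * 1 * ‖e'‖ + ‖e'‖ := by gcongr; linarith
    _ = _ := by ring

lemma exists_cSfun_mul_invCubeSum_eq_exp (a r : ℕ) : ∃ K : ℝ, 0 < K ∧ ∀ (n : ℕ) (x : ℂ), 0 < n →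
    2 ≤ n * x.im → ∃ e e' : ℂ, ‖e‖ ≤ (24 * r + 4 * a) / (n * x.im ^ 2) ∧ ‖e'‖ ≤ K / (n * x.im) ∧
      cSfun a r n (n * x) * invCubeSum (n * x) = exp (logScale a r n) * (4 * π ^ 3 * I) *
        (exp (n * phase a r x) * exp (logAmplitude a r x)) * (exp e * (1 + e')) := by
  obtain ⟨K, hK, hinv⟩ := exists_invCubeSum_eq_mul_exp
  refine ⟨K, hK, fun n x hn hx => ?_⟩
  have him : ((n : ℂ) * x).im = n * x.im := by simp
  obtain ⟨e, he, hexp⟩ := exists_cSfun_natCast_mul_eq_exp a r hn hx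
  obtain ⟨e', he', hinv'⟩ := hinv (n * x) (by rw [him]; linarith)
  rw [him] at he'
  refine ⟨e, e', he, he', ?_⟩
  have hphase : exp (n * phase a r x) = exp (n * rate a r x) * exp (2 * π * I * (n * x)) := by
    rw [← exp_add, natCast_mul_rate, sub_add_cancel]
  rw [hexp, hinv', hphase, exp_add, exp_add, exp_add]
  ring

/-- The integrand at `n x`, normalised so that its leading term is
`exp (n * phase a r x) * exp (logAmplitude a r x)`. -/
noncomputable def scaledIntegrand (a r : ℕ) (n : ℕ) (x : ℂ) : ℂ :=
  exp (-logScale a r n) * (4 * π ^ 3 * I)⁻¹ * (cSfun a r n (n * x) * invCubeSum (n * x))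

lemma four_mul_pi_pow_mul_I_ne_zero : 4 * (π : ℂ) ^ 3 * I ≠ 0 := by
  have hpi : (π : ℂ) ≠ 0 := by exact_mod_cast Real.pi_ne_zero
  simp [hpi]

lemma exists_norm_scaledIntegrand_sub_le (a r : ℕ) (hy₁ : 0 < y₁) :
    ∃ K : ℝ, ∀ᶠ n : ℕ in atTop, ∀ x : ℂ, y₁ ≤ x.im →
      ‖scaledIntegrand a r n x - exp (n * phase a r x) * exp (logAmplitude a r x)‖ ≤
        K / n * ‖exp (n * phase a r x) * exp (logAmplitude a r x)‖ := by
  obtain ⟨K, hK, hexp⟩ := exists_cSfun_mul_invCubeSum_eq_exp a r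
  refine ⟨2 * ((24 * r + 4 * a) / y₁ ^ 2) + 3 * (K / y₁), ?_⟩
  filter_upwards [eventually_gt_atTop 0, tendsto_natCast_atTop_atTop.eventually_ge_atTop (2 / y₁),
    tendsto_natCast_atTop_atTop.eventually_ge_atTop ((24 * r + 4 * a) / y₁ ^ 2)]
    with n hn h2 h1 x hx
  have hn' : (0 : ℝ) < n := by exact_mod_cast hn
  rw [div_le_iff₀ hy₁] at h2
  obtain ⟨e, e', he, he', heq⟩ := hexp n x hn (h2.trans (by gcongr))
  have hle : ‖e‖ ≤ (24 * r + 4 * a) / y₁ ^ 2 / n := by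
    refine he.trans ?_
    rw [div_div, mul_comm (n : ℝ)]
    gcongr
  have hle' : ‖e'‖ ≤ K / y₁ / n := by
    refine he'.trans ?_
    rw [div_div, mul_comm (n : ℝ)]
    gcongr
  set M := exp (n * phase a r x) * exp (logAmplitude a r x)
  have hscaled : scaledIntegrand a r n x = M * (exp e * (1 + e')) := by
    have := four_mul_pi_pow_mul_I_ne_zero
    rw [scaledIntegrand, heq, exp_neg]
    field_simp [exp_ne_zero]
  rw [hscaled, ← mul_sub_one, norm_mul, mul_comm]
  gcongr
  calc _ ≤ 2 * ‖e‖ + 3 * ‖e'‖ :=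
        norm_exp_mul_one_add_sub_one_le (hle.trans (div_le_one_of_le₀ h1 n.cast_nonneg))
    _ ≤ 2 * ((24 * r + 4 * a) / y₁ ^ 2 / n) + 3 * (K / y₁ / n) := by gcongr
    _ = _ := by ring

lemma scaledIntegrand_eq_lineIntegrand {n : ℕ} (hn : 0 < n) (y : ℝ) :
    scaledIntegrand a r n ((lineAbscissa c n / n : ℝ) + y * I) =
      exp (-logScale a r n) * (4 * π ^ 3 * I)⁻¹ * lineIntegrand a r c n (n * y) := by
  rw [scaledIntegrand, natCast_mul_lineAbscissa_div_add c y hn, lineIntegrand]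

lemma tendsto_inv_sqrt_mul_exp_mul_zero {C θ : ℝ} {x₀ : ℂ} {X : ℕ → ℂ} {M : ℕ → ℝ} (hθ : 0 < θ)
    (hX : ∀ᶠ n : ℕ in atTop, ‖X n‖ ≤ C * n * Real.exp (M n + n * (x₀.re - θ))) :
    Tendsto (fun n : ℕ => (√n : ℂ)⁻¹ * exp (-(M n + n * x₀)) * X n) atTop (𝓝 0) := by
  have hlim : Tendsto (fun n : ℕ => C * (n * Real.exp (-θ * n))) atTop (𝓝 0) := by
    have h := ((isLittleO_pow_exp_pos_mul_atTop 1 hθ).tendsto_div_nhds_zero.comp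
      tendsto_natCast_atTop_atTop).const_mul C
    rw [mul_zero] at h
    refine h.congr fun n => ?_
    rw [Function.comp_apply, pow_one, neg_mul, Real.exp_neg, div_eq_mul_inv]
  refine squeeze_zero_norm' ?_ hlim
  filter_upwards [hX, eventually_ge_atTop 1] with n hn h1
  have hsqrt : ‖(√n : ℂ)⁻¹‖ ≤ 1 := by
    rw [norm_inv, norm_real, Real.norm_of_nonneg (Real.sqrt_nonneg _)]
    exact inv_le_one_of_one_le₀ (Real.one_le_sqrt.2 (by exact_mod_cast h1))
  have hre : (-((M n : ℂ) + n * x₀)).re = -(M n + n * x₀.re) := by simp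
  rw [norm_mul, norm_mul, norm_exp, hre]
  calc _ ≤ 1 * Real.exp (-(M n + n * x₀.re)) * (C * n * Real.exp (M n + n * (x₀.re - θ))) := by
        gcongr
    _ = C * (n * (Real.exp (-(M n + n * x₀.re)) * Real.exp (M n + n * (x₀.re - θ)))) := by ring
    _ = _ := by
      rw [← Real.exp_add]
      ring_nf

lemma integral_Ioi_eq_add_add {f : ℝ → ℂ} (hf : Integrable f) {u v w : ℝ} (huv : u ≤ v)
    (hvw : v ≤ w) :
    ∫ s in Ioi u, f s = (∫ s in Ioc u v, f s) + (∫ s in Ioc v w, f s) + ∫ s in Ioi w, f s := by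
  rw [← Ioc_union_Ioi_eq_Ioi (huv.trans hvw),
    setIntegral_union (Ioc_disjoint_Ioi le_rfl) measurableSet_Ioi hf.integrableOn hf.integrableOn,
    ← Ioc_union_Ioc_eq_Ioc huv hvw, setIntegral_union
      (Ioc_disjoint_Ioc_of_le le_rfl) measurableSet_Ioc hf.integrableOn hf.integrableOn]

lemma tendsto_integral_Ioc_lineIntegrand (ha : 6 * r + 2 ≤ a) (hc : 3 ≤ c) (hy₁ : 0 < y₁)
    (h₁ : y₁ < y₀) (h₂ : y₀ < y₂) (h0 : phaseDeriv a r (c + y₀ * I) = 0)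
    (hκ : 0 < (phaseDeriv₂ a r (c + y₀ * I)).re) (hη : 0 < η)
    (hdec : ∀ y ∈ Icc y₁ y₂,
      (phase a r (c + y * I)).re ≤ (phase a r (c + y₀ * I)).re - η * (y - y₀) ^ 2) :
    Tendsto (fun n : ℕ => (√n : ℂ)⁻¹ * exp (-(logScale a r n + n * phase a r (c + y₀ * I))) *
        ∫ s in Ioc (n * y₁ : ℝ) (n * y₂), lineIntegrand a r c n s) atTop
      (𝓝 (4 * π ^ 3 * I * (exp (logAmplitude a r (c + y₀ * I)) *
        (2 * π / phaseDeriv₂ a r (c + y₀ * I)) ^ (1 / 2 : ℂ)))) := by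
  obtain ⟨K, hK⟩ := exists_norm_scaledIntegrand_sub_le a r hy₁
  have hlaplace := tendsto_sqrt_mul_exp_mul_integral (c' := fun n => lineAbscissa c n / n)
    (h := fun n y => scaledIntegrand a r n ((lineAbscissa c n / n : ℝ) + y * I)) (K := K)
    (fun x hx => hasDerivAt_phase a r hx) (continuousOn_phaseDeriv a r)
    (hasDerivAt_phaseDeriv a r (by simpa using hy₁.trans h₁)) h0 hκ
    (continuousOn_exp_logAmplitude a r) hy₁ h₁ h₂ hη hdec
    ((eventually_gt_atTop 0).mono fun n => abs_lineAbscissa_div_sub_le (by linarith))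
    (hK.mono fun n hn y hy => hn _ (by simpa using hy.1))
    ((eventually_gt_atTop 0).mono fun n hn => by
      simp only [scaledIntegrand_eq_lineIntegrand hn]
      exact (continuous_const.mul ((continuous_lineIntegrand ha hc hn).comp
        (continuous_const.mul continuous_id))).continuousOn)
  refine (hlaplace.const_mul (4 * π ^ 3 * I)).congr' ?_
  filter_upwards [eventually_gt_atTop 0] with n hn
  have hn' : (0 : ℝ) < n := by exact_mod_cast hn
  have hsqrt : (√n : ℂ) ≠ 0 := by exact_mod_cast (Real.sqrt_pos.2 hn').ne'
  have hsq : (√n : ℂ) * √n = n := by exact_mod_cast Real.mul_self_sqrt hn'.le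
  have hsubst : ∫ s in Ioc (n * y₁ : ℝ) (n * y₂), lineIntegrand a r c n s =
      n * ∫ y in Icc y₁ y₂, lineIntegrand a r c n (n * y) := by
    rw [integral_Icc_eq_integral_Ioc, ← intervalIntegral.integral_of_le (h₁.trans h₂).le,
      ← intervalIntegral.integral_of_le (by gcongr; exact (h₁.trans h₂).le),
      ← intervalIntegral.smul_integral_comp_mul_left, real_smul, ofReal_natCast]
  simp only [scaledIntegrand_eq_lineIntegrand hn, ← mul_assoc, hsubst]
  rw [integral_const_mul, neg_add, exp_add, ← hsq]
  have := four_mul_pi_pow_mul_I_ne_zero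
  field_simp

-- Only a neighbourhood of the critical point contributes.
theorem tendsto_integral_Ioi_lineIntegrand (ha : 6 * r + 2 ≤ a) (hc : 3 ≤ c) (hy₀ : 0 < y₀)
    (h₂ : y₀ < y₂) (hry : 12 * r ≤ π * y₂) (h0 : phaseDeriv a r (c + y₀ * I) = 0)
    (hκ : 0 < (phaseDeriv₂ a r (c + y₀ * I)).re) (hη : 0 < η)
    (hdec : ∀ y ∈ Ioc 0 y₂,
      (phase a r (c + y * I)).re ≤ (phase a r (c + y₀ * I)).re - η * (y - y₀) ^ 2) :
    Tendsto (fun n : ℕ => (√n : ℂ)⁻¹ * exp (-(logScale a r n + n * phase a r (c + y₀ * I))) *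
        ∫ s in Ioi 0, lineIntegrand a r c n s) atTop
      (𝓝 (4 * π ^ 3 * I * (exp (logAmplitude a r (c + y₀ * I)) *
        (2 * π / phaseDeriv₂ a r (c + y₀ * I)) ^ (1 / 2 : ℂ)))) := by
  obtain ⟨y₁, hy₁, ⟨hy₁0, h₁⟩⟩ : ∃ y₁, 2 * π * y₁ + 2 * a * y₁ ^ 2 - η * (y₁ - y₀) ^ 2 <
      -(η * y₀ ^ 2 / 2) ∧ y₁ ∈ Ioo 0 y₀ := by
    have hcont : Continuous fun y : ℝ => 2 * π * y + 2 * a * y ^ 2 - η * (y - y₀) ^ 2 := by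
      fun_prop
    have hneg : ∀ᶠ y in 𝓝[>] (0 : ℝ), 2 * π * y + 2 * a * y ^ 2 - η * (y - y₀) ^ 2 <
        -(η * y₀ ^ 2 / 2) := nhdsWithin_le_nhds <| hcont.continuousAt.eventually_lt_const <| by
      linarith [mul_pos hη (pow_pos hy₀ 2)]
    exact (hneg.and (Ioo_mem_nhdsGT hy₀)).exists
  obtain ⟨C₁, hC₁, hleft⟩ := eventually_norm_integral_Ioc_lineIntegrand_le a r hc hy₁0
  obtain ⟨C₂, hC₂, hright⟩ :=
    eventually_norm_integral_Ioi_lineIntegrand_le a r (c := c) (by linarith) (hy₀.trans h₂) hry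
  have hleft' := tendsto_inv_sqrt_mul_exp_mul_zero (C := C₁) (θ := η * y₀ ^ 2 / 2)
    (x₀ := phase a r (c + y₀ * I)) (by positivity) <| hleft.mono fun n hn => hn.trans <| by
      gcongr
      linarith [hdec y₁ ⟨hy₁0, (h₁.trans h₂).le⟩]
  have hright' := tendsto_inv_sqrt_mul_exp_mul_zero (C := C₂) (θ := η * (y₂ - y₀) ^ 2)
    (x₀ := phase a r (c + y₀ * I)) (mul_pos hη (pow_pos (sub_pos.2 h₂) 2)) <|
    (hright.and (eventually_ge_atTop (1 : ℕ))).mono fun n hn => hn.1.trans <| by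
      gcongr
      · exact le_mul_of_one_le_right hC₂ (by exact_mod_cast hn.2)
      · exact hdec y₂ ⟨hy₀.trans h₂, le_rfl⟩
  have hmid := tendsto_integral_Ioc_lineIntegrand ha hc hy₁0 h₁ h₂ h0 hκ hη
    fun y hy => hdec y ⟨hy₁0.trans_le hy.1, hy.2⟩
  have hsum := (hleft'.add hmid).add hright'
  rw [zero_add, add_zero] at hsum
  refine hsum.congr' ?_
  filter_upwards [eventually_gt_atTop 0] with n hn
  rw [integral_Ioi_eq_add_add (integrable_lineIntegrand ha hc hn) (u := 0) (v := n * y₁)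
    (w := n * y₂) (by positivity) (by gcongr; exact (h₁.trans h₂).le)]
  ring

end SaddlePoint

section Admissible

/-- The parameter region in which the saddle point analysis works: `r` is large, and so are
`a / r`, `r ^ 2 / a` and `a / (r * log a)`, all of which hold for `r = ⌊a * exp (-√(log a))⌋` and
large `a`. -/
structure Admissible (a r : ℕ) : Prop where
  hundred_le : 100 ≤ r
  hundred_mul_le : 100 * r ≤ a
  le_sq : 100 * (a + 3) ≤ r ^ 2
  mul_exp_mul_le : (4 * r + 2 : ℝ) * Real.exp (-((a + 3) / (3 * (r + 1)))) * (a + 3) ≤ 1 / 100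

lemma Admissible.one_le {a r : ℕ} (hp : Admissible a r) : 1 ≤ r :=
  le_trans (by norm_num) hp.hundred_le

lemma mul_exp_neg_div_mul_le {a r L : ℝ} (hL : 1000 ≤ L) (ha : a = Real.exp (L ^ 2)) (hr : 1 ≤ r)
    (hra : r ≤ a) (h : r * Real.exp L ≤ a) :
    (4 * r + 2) * Real.exp (-((a + 3) / (3 * (r + 1)))) * (a + 3) ≤ 1 / 100 := by
  have hL2 : 1000000 ≤ L ^ 2 := by nlinarith
  have ha3 : 3 ≤ a := by linarith [Real.add_one_le_exp (L ^ 2)]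
  have hexpL : 6 * (2 * L ^ 2 + 7) ≤ Real.exp L := by
    have h4 : L ^ 4 / 24 ≤ Real.exp L := by
      simpa [Nat.factorial] using Real.pow_div_factorial_le_exp L (by linarith) 4
    nlinarith
  have hexponent : 2 * L ^ 2 + 7 ≤ (a + 3) / (3 * (r + 1)) := by
    rw [le_div_iff₀ (by positivity)]
    calc _ ≤ (2 * L ^ 2 + 7) * (3 * (r + r)) := by gcongr
      _ = r * (6 * (2 * L ^ 2 + 7)) := by ring
      _ ≤ r * Real.exp L := by gcongr
      _ ≤ a + 3 := by linarith
  have hexp7 : Real.exp (-7) ≤ 1 / 1000 := by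
    have h7 : (1000 : ℝ) ≤ Real.exp 7 := calc
      (1000 : ℝ) ≤ 2.7 ^ 7 := by norm_num
      _ ≤ Real.exp 1 ^ 7 := by gcongr; linarith [Real.exp_one_gt_d9]
      _ = _ := by rw [← Real.exp_nat_mul]; norm_num
    rw [Real.exp_neg, ← one_div]
    exact one_div_le_one_div_of_le (by norm_num) h7
  have hexp : Real.exp (-((a + 3) / (3 * (r + 1)))) ≤ a⁻¹ ^ 2 * (1 / 1000) := calc
    _ ≤ Real.exp (-(2 * L ^ 2) + -7) := Real.exp_le_exp.2 (by linarith)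
    _ = a⁻¹ ^ 2 * Real.exp (-7) := by
      rw [Real.exp_add, ha, ← Real.exp_neg, ← Real.exp_nat_mul]
      ring_nf
    _ ≤ _ := by gcongr
  calc _ ≤ (5 * a) * (a⁻¹ ^ 2 * (1 / 1000)) * (2 * a) := by gcongr <;> linarith
    _ ≤ _ := by
      field_simp
      norm_num

lemma admissible_floor {a : ℕ} (ha : 0 < a) (hL : 1000 ≤ √(Real.log a)) :
    Admissible a ⌊(a : ℝ) * Real.exp (-√(Real.log a))⌋₊ := by
  have ha1 : (1 : ℝ) ≤ a := by exact_mod_cast ha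
  have hsq := Real.sq_sqrt (Real.log_nonneg ha1)
  set L := √(Real.log a)
  have haL : (a : ℝ) = Real.exp (L ^ 2) := by rw [hsq, Real.exp_log (by positivity)]
  have hE : 1000 ≤ Real.exp L := by linarith [Real.add_one_le_exp L]
  set y := (a : ℝ) * Real.exp (-L) with hy
  have hya : y * Real.exp L = a := by rw [hy, mul_assoc, ← Real.exp_add]; simp
  have hyE : 1000 * Real.exp L ≤ y := calc
    _ ≤ Real.exp L * Real.exp L := by gcongr
    _ = Real.exp (L + L) := (Real.exp_add _ _).symm
    _ ≤ Real.exp (L ^ 2 + -L) := Real.exp_le_exp.2 (by nlinarith)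
    _ = y := by rw [hy, haL, ← Real.exp_add]
  obtain ⟨r, hr⟩ : ∃ r, r = ⌊y⌋₊ := ⟨_, rfl⟩
  have hry : (r : ℝ) ≤ y := hr ▸ Nat.floor_le (by linarith)
  have hyr : y < r + 1 := hr ▸ Nat.lt_floor_add_one y
  have hra : (r : ℝ) * Real.exp L ≤ a := by
    rw [← hya]
    gcongr
  have hra' : 100 * (r : ℝ) ≤ a := by nlinarith
  rw [← hr]
  refine ⟨?_, by exact_mod_cast hra', ?_,
    mul_exp_neg_div_mul_le hL haL (by linarith) (by linarith) hra⟩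
  · have : (100 : ℝ) ≤ r := by linarith
    exact_mod_cast this
  · have hay : 1000 * (a : ℝ) ≤ y ^ 2 := by
      rw [← hya]
      nlinarith
    have hyr2 : y ^ 2 ≤ 4 * (r : ℝ) ^ 2 := by nlinarith
    have : (100 * (a + 3) : ℝ) ≤ r ^ 2 := by linarith
    exact_mod_cast this

lemma exists_forall_admissible : ∃ A : ℕ, ∀ a : ℕ, A ≤ a → ∀ r : ℕ,
    r = ⌊(a : ℝ) * Real.exp (-√(Real.log a))⌋₊ → Admissible a r := by
  have hlim : Tendsto (fun a : ℕ => √(Real.log a)) atTop atTop :=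
    Real.tendsto_sqrt_atTop.comp (Real.tendsto_log_atTop.comp tendsto_natCast_atTop_atTop)
  obtain ⟨A, hA⟩ :=
    eventually_atTop.1 ((eventually_gt_atTop 0).and (hlim.eventually_ge_atTop 1000))
  exact ⟨A, fun a ha r hr => hr ▸ admissible_floor (hA a ha).1 (hA a ha).2⟩

end Admissible

section Saddle

/-- The part of `phaseDeriv a r (2r + 1 - z)` that is holomorphic near `z = 0`, that is, without
the summand `-3 log (-z)` and the constant `2πi`. -/
noncomputable def regularPart (a r : ℕ) (z : ℂ) : ℂ :=
  3 * log (2 * (2 * r + 1) - z) + (a + 3) * (log (2 * r - z) - log (2 * r + 2 - z))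

/-- The derivative of `regularPart`. -/
noncomputable def regularPartDeriv (a r : ℕ) (z : ℂ) : ℂ :=
  -3 * (2 * (2 * r + 1) - z)⁻¹ - (a + 3) * ((2 * r - z)⁻¹ - (2 * r + 2 - z)⁻¹)

variable {a r : ℕ} {z w : ℂ}

lemma hasDerivAt_log_const_sub {b : ℂ} (h : 0 < (b - z).re) :
    HasDerivAt (fun z => log (b - z)) (-(b - z)⁻¹) z := by
  simpa [neg_div] using ((hasDerivAt_id z).const_sub b).clog (Or.inl h)

lemma hasDerivAt_regularPart (hr : 1 ≤ r) (hz : z.re ≤ 1) :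
    HasDerivAt (regularPart a r) (regularPartDeriv a r z) z := by
  have hr' : (1 : ℝ) ≤ r := by exact_mod_cast hr
  have h₁ := hasDerivAt_log_const_sub (z := z) (b := 2 * (2 * r + 1)) (by simp; linarith)
  have h₂ := hasDerivAt_log_const_sub (z := z) (b := 2 * r) (by simp; linarith)
  have h₃ := hasDerivAt_log_const_sub (z := z) (b := 2 * r + 2) (by simp; linarith)
  refine ((h₁.const_mul 3).add ((h₂.sub h₃).const_mul (a + 3 : ℂ))).congr_deriv ?_
  rw [regularPartDeriv]
  ring

lemma norm_regularPartDeriv_le (hp : Admissible a r) (hz : z.re ≤ 1) :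
    ‖regularPartDeriv a r z‖ ≤ 1 / 50 := by
  have hr : (100 : ℝ) ≤ r := by exact_mod_cast hp.hundred_le
  have hsq : (100 * (a + 3) : ℝ) ≤ r ^ 2 := by exact_mod_cast hp.le_sq
  have h₁ : 4 * (r : ℝ) + 1 ≤ ‖(2 * (2 * r + 1) - z : ℂ)‖ :=
    le_trans (by simp; linarith) (re_le_norm _)
  have h₂ : 2 * (r : ℝ) - 1 ≤ ‖(2 * r - z : ℂ)‖ := le_trans (by simp; linarith) (re_le_norm _)
  have h₃ : 2 * (r : ℝ) + 1 ≤ ‖(2 * r + 2 - z : ℂ)‖ := le_trans (by simp; linarith) (re_le_norm _)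
  have hne₂ : (2 * r - z : ℂ) ≠ 0 := norm_pos_iff.1 (by linarith)
  have hne₃ : (2 * r + 2 - z : ℂ) ≠ 0 := norm_pos_iff.1 (by linarith)
  have hnorm : ‖(a + 3 : ℂ)‖ = a + 3 := by exact_mod_cast norm_natCast (a + 3)
  have hsub : regularPartDeriv a r z =
      -3 / (2 * (2 * r + 1) - z) - 2 * (a + 3) / ((2 * r - z) * (2 * r + 2 - z)) := by
    rw [regularPartDeriv, inv_sub_inv hne₂ hne₃]
    ring
  calc _ ≤ 3 / ‖(2 * (2 * r + 1) - z : ℂ)‖ +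
        2 * (a + 3) / (‖(2 * r - z : ℂ)‖ * ‖(2 * r + 2 - z : ℂ)‖) := by
        rw [hsub]
        refine (norm_sub_le _ _).trans_eq ?_
        simp [hnorm]
    _ ≤ 3 / (4 * (r : ℝ) + 1) + 2 * (a + 3) / ((2 * (r : ℝ) - 1) * (2 * (r : ℝ) + 1)) := by
        have : 0 < 2 * (r : ℝ) - 1 := by linarith
        gcongr
    _ ≤ 1 / 100 + 1 / 100 := by
        refine add_le_add ?_ ?_
        · rw [div_le_iff₀ (by positivity)]; linarith
        · rw [div_le_iff₀ (by nlinarith)]; nlinarith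
    _ = _ := by norm_num

lemma norm_regularPart_sub_le (hp : Admissible a r) (hz : z.re ≤ 1) (hw : w.re ≤ 1) :
    ‖regularPart a r z - regularPart a r w‖ ≤ 1 / 50 * ‖z - w‖ :=
  (convex_halfSpace_re_le 1).norm_image_sub_le_of_norm_hasDerivWithin_le
    (fun _ hx => (hasDerivAt_regularPart hp.one_le hx).hasDerivWithinAt)
    (fun _ hx => norm_regularPartDeriv_le hp hx) hw hz

lemma regularPart_zero (a r : ℕ) : regularPart a r 0 =
    (3 * Real.log (2 * (2 * r + 1)) + (a + 3) * (Real.log (2 * r) - Real.log (2 * r + 2)) : ℝ) := by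
  push_cast [regularPart, ofReal_log (by positivity : (0 : ℝ) ≤ 2 * (2 * r + 1)),
    ofReal_log (by positivity : (0 : ℝ) ≤ 2 * r), ofReal_log (by positivity : (0 : ℝ) ≤ 2 * r + 2)]
  simp only [sub_zero]

lemma re_le_one_of_norm_le_one (hz : ‖z‖ ≤ 1) : z.re ≤ 1 := (re_le_norm z).trans hz

lemma norm_regularPart_sub_zero_le (hp : Admissible a r) (hz : ‖z‖ ≤ 1) :
    ‖regularPart a r z - regularPart a r 0‖ ≤ 1 / 50 := by
  have h := norm_regularPart_sub_le hp (re_le_one_of_norm_le_one hz) (w := 0) (by simp)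
  rw [sub_zero] at h
  linarith

lemma abs_im_regularPart_le (hp : Admissible a r) (hz : ‖z‖ ≤ 1) :
    |(regularPart a r z).im| ≤ 1 / 50 := by
  have h := (abs_im_le_norm _).trans (norm_regularPart_sub_zero_le hp hz)
  rwa [sub_im, regularPart_zero, ofReal_im, sub_zero] at h

lemma exp_re_regularPart_zero_mul_le (hp : Admissible a r) :
    Real.exp ((regularPart a r 0).re / 3) * (a + 3) ≤ 1 / 100 := by
  refine le_trans ?_ hp.mul_exp_mul_le
  have hr : (100 : ℝ) ≤ r := by exact_mod_cast hp.hundred_le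
  have hlog : Real.log (2 * r) - Real.log (2 * r + 2) ≤ -(1 / (r + 1)) := by
    rw [← Real.log_div (by positivity) (by positivity)]
    refine (Real.log_le_sub_one_of_pos (by positivity)).trans_eq ?_
    field_simp
    ring
  have hre : (regularPart a r 0).re / 3 ≤ Real.log (4 * r + 2) + -((a + 3) / (3 * (r + 1))) := by
    rw [regularPart_zero, ofReal_re]
    calc _ ≤ (3 * Real.log (2 * (2 * r + 1)) + (a + 3) * -(1 / (r + 1))) / 3 := by gcongr
      _ = _ := by
        field_simp
        ring_nf
  gcongr
  calc _ ≤ Real.exp (Real.log (4 * r + 2) + -((a + 3) / (3 * (r + 1)))) := Real.exp_le_exp.2 hre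
    _ = _ := by rw [Real.exp_add, Real.exp_log (by positivity)]

/-- The map whose fixed points `z` are the critical points `2r + 1 - z` of `phase a r` in the
upper half-plane near `2r + 1`. -/
noncomputable def saddleMap (a r : ℕ) (z : ℂ) : ℂ := exp ((regularPart a r z - π * I) / 3)

lemma norm_saddleMap (a r : ℕ) (z : ℂ) :
    ‖saddleMap a r z‖ = Real.exp ((regularPart a r z).re / 3) := by
  rw [saddleMap, norm_exp]
  simp

lemma norm_saddleMap_mul_le (hp : Admissible a r) (hz : ‖z‖ ≤ 1) :
    ‖saddleMap a r z‖ * (a + 3) ≤ 1 / 50 := by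
  have hre := (re_le_norm _).trans (norm_regularPart_sub_zero_le hp hz)
  rw [sub_re] at hre
  have hexp : Real.exp (1 / 150) ≤ 2 :=
    (Real.exp_bound_div_one_sub_of_interval (by norm_num) (by norm_num)).trans (by norm_num)
  calc _ ≤ Real.exp ((regularPart a r 0).re / 3 + 1 / 150) * (a + 3) := by
        rw [norm_saddleMap]
        gcongr
        linarith
    _ = Real.exp ((regularPart a r 0).re / 3) * (a + 3) * Real.exp (1 / 150) := by
        rw [Real.exp_add]
        ring
    _ ≤ 1 / 100 * 2 := by
        gcongr
        exact exp_re_regularPart_zero_mul_le hp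
    _ = _ := by norm_num

lemma norm_saddleMap_le (hp : Admissible a r) (hz : ‖z‖ ≤ 1) : ‖saddleMap a r z‖ ≤ 1 / 10000 := by
  have hr : (100 : ℝ) ≤ r := by exact_mod_cast hp.hundred_le
  have ha : (100 * r : ℝ) ≤ a := by exact_mod_cast hp.hundred_mul_le
  nlinarith [norm_saddleMap_mul_le hp hz, norm_nonneg (saddleMap a r z)]

lemma norm_saddleMap_sub_le (hp : Admissible a r) (hz : ‖z‖ ≤ 1) (hw : ‖w‖ ≤ 1) :
    ‖saddleMap a r z - saddleMap a r w‖ ≤ 1 / 2 * ‖z - w‖ := by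
  refine (convex_closedBall (0 : ℂ) 1).norm_image_sub_le_of_norm_hasDerivWithin_le
    (f' := fun z => saddleMap a r z * (regularPartDeriv a r z / 3))
    (fun x hx => ?_) (fun x hx => ?_) (by simpa using hw) (by simpa using hz) <;>
    rw [mem_closedBall_zero_iff] at hx
  · exact (((hasDerivAt_regularPart hp.one_le
      (re_le_one_of_norm_le_one hx)).sub_const _).div_const 3).cexp.hasDerivWithinAt
  · calc _ = ‖saddleMap a r x‖ * (‖regularPartDeriv a r x‖ / 3) := by simp
      _ ≤ (1 / 10000) * ((1 / 50) / 3) := by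
        gcongr
        exacts [norm_saddleMap_le hp hx, norm_regularPartDeriv_le hp (re_le_one_of_norm_le_one hx)]
      _ ≤ _ := by norm_num

/-- `2r + 1 - z` is the critical point of `phase a r` used in the saddle point method. -/
structure IsSaddle (a r : ℕ) (z : ℂ) : Prop where
  norm_le_one : ‖z‖ ≤ 1
  isFixedPt : Function.IsFixedPt (saddleMap a r) z

theorem exists_isSaddle (hp : Admissible a r) : ∃ z, IsSaddle a r z := by
  have hmaps : MapsTo (saddleMap a r) (Metric.closedBall 0 1) (Metric.closedBall 0 1) := by
    intro z hz
    rw [mem_closedBall_zero_iff] at hz ⊢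
    exact (norm_saddleMap_le hp hz).trans (by norm_num)
  have hcontr : ContractingWith (1 / 2) (hmaps.restrict (saddleMap a r) _ _) := by
    refine ⟨by rw [← NNReal.coe_lt_coe]; norm_num, LipschitzWith.of_dist_le_mul fun x y => ?_⟩
    rw [Subtype.dist_eq, Subtype.dist_eq, dist_eq_norm, dist_eq_norm]
    simpa using norm_saddleMap_sub_le hp (mem_closedBall_zero_iff.1 x.2)
      (mem_closedBall_zero_iff.1 y.2)
  obtain ⟨z, hz, hfix, -⟩ := hcontr.exists_fixedPoint' Metric.isClosed_closedBall.isComplete hmaps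
    (x := 0) (by simp) (edist_ne_top _ _)
  exact ⟨z, mem_closedBall_zero_iff.1 hz, hfix⟩

namespace IsSaddle

lemma exp_eq (hz : IsSaddle a r z) : exp ((regularPart a r z - π * I) / 3) = z := hz.isFixedPt

lemma ne_zero (hz : IsSaddle a r z) : z ≠ 0 := hz.exp_eq ▸ exp_ne_zero _

lemma norm_mul_le (hz : IsSaddle a r z) (hp : Admissible a r) : ‖z‖ * (a + 3) ≤ 1 / 50 := by
  simpa only [hz.isFixedPt.eq] using norm_saddleMap_mul_le hp hz.norm_le_one

lemma norm_le (hz : IsSaddle a r z) (hp : Admissible a r) : ‖z‖ ≤ 1 / 10000 := by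
  simpa only [hz.isFixedPt.eq] using norm_saddleMap_le hp hz.norm_le_one

lemma log_eq (hz : IsSaddle a r z) (hp : Admissible a r) :
    log z = (regularPart a r z - π * I) / 3 := by
  have him := abs_le.1 (abs_im_regularPart_le hp hz.norm_le_one)
  have hζ : ((regularPart a r z - π * I) / 3).im = ((regularPart a r z).im - π) / 3 := by simp
  have hlog := log_exp (x := (regularPart a r z - π * I) / 3)
    (by linarith [Real.pi_gt_three]) (by linarith [Real.pi_gt_three])
  rwa [hz.exp_eq] at hlog

lemma arg_mem (hz : IsSaddle a r z) (hp : Admissible a r) : z.arg ∈ Icc (-1.07) (-(π / 4)) := by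
  have him := abs_le.1 (abs_im_regularPart_le hp hz.norm_le_one)
  have harg : z.arg = ((regularPart a r z).im - π) / 3 := by
    rw [← log_im, hz.log_eq hp]
    simp
  rw [harg]
  constructor <;> linarith [Real.pi_gt_three, Real.pi_lt_d2]

lemma norm_le_three_mul_re (hz : IsSaddle a r z) (hp : Admissible a r) : ‖z‖ ≤ 3 * z.re := by
  obtain ⟨hlo, hhi⟩ := hz.arg_mem hp
  have hcos : 1 / 3 ≤ Real.cos z.arg := by
    nlinarith [Real.one_sub_sq_div_two_le_cos (x := z.arg), Real.pi_gt_three]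
  rw [← norm_mul_cos_arg]
  nlinarith [norm_nonneg z]

lemma norm_le_two_mul_neg_im (hz : IsSaddle a r z) (hp : Admissible a r) :
    ‖z‖ ≤ 2 * -z.im := by
  obtain ⟨hlo, hhi⟩ := hz.arg_mem hp
  have hsin : 1 / 2 ≤ Real.sin (-z.arg) := by
    refine le_trans ?_ (Real.mul_le_sin (by linarith [Real.pi_gt_three])
      (by linarith [Real.pi_gt_three]))
    rw [div_mul_eq_mul_div, le_div_iff₀ Real.pi_pos]
    linarith
  rw [Real.sin_neg] at hsin
  rw [← norm_mul_sin_arg]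
  nlinarith [norm_nonneg z]

lemma re_pos (hz : IsSaddle a r z) (hp : Admissible a r) : 0 < z.re := by
  linarith [norm_pos_iff.2 hz.ne_zero, hz.norm_le_three_mul_re hp]

lemma im_neg (hz : IsSaddle a r z) (hp : Admissible a r) : z.im < 0 := by
  linarith [norm_pos_iff.2 hz.ne_zero, hz.norm_le_two_mul_neg_im hp]

end IsSaddle

end Saddle

section PhaseAtSaddle

variable {a r : ℕ} {z : ℂ}

lemma log_neg_of_im_neg (hz : z.im < 0) : log (-z) = log z + π * I := by
  rw [log, log, norm_neg, arg_neg_eq_arg_add_pi_of_im_neg hz]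
  push_cast
  ring

lemma phaseDeriv_two_mul_add_one_sub (a r : ℕ) (hz : z.im < 0) :
    phaseDeriv a r (2 * r + 1 - z) = regularPart a r z - 3 * log z - π * I := by
  rw [phaseDeriv, regularPart, show (2 * r + 1 - z - 1 : ℂ) = 2 * r - z by ring,
    show (2 * r + 1 - z - (2 * r + 1) : ℂ) = -z by ring,
    show (2 * r + 1 - z + (2 * r + 1) : ℂ) = 2 * (2 * r + 1) - z by ring,
    show (2 * r + 1 - z + 1 : ℂ) = 2 * r + 2 - z by ring, log_neg_of_im_neg hz]
  ring

lemma phaseDeriv₂_two_mul_add_one_sub (a r : ℕ) (z : ℂ) :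
    phaseDeriv₂ a r (2 * r + 1 - z) = 3 * z⁻¹ - regularPartDeriv a r z := by
  rw [phaseDeriv₂, regularPartDeriv, show (2 * r + 1 - z - 1 : ℂ) = 2 * r - z by ring,
    show (2 * r + 1 - z - (2 * r + 1) : ℂ) = -z by ring,
    show (2 * r + 1 - z + (2 * r + 1) : ℂ) = 2 * (2 * r + 1) - z by ring,
    show (2 * r + 1 - z + 1 : ℂ) = 2 * r + 2 - z by ring, inv_neg]
  ring

lemma two_mul_add_one_sub_add_mul_I (r : ℕ) (u y : ℝ) :
    ((2 * r + 1 - u : ℝ) : ℂ) + y * I = 2 * r + 1 - (u - y * I) := by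
  push_cast
  ring

lemma two_mul_add_one_sub_re_add_neg_im_mul_I (r : ℕ) (z : ℂ) :
    ((2 * r + 1 - z.re : ℝ) : ℂ) + (-z.im : ℝ) * I = 2 * r + 1 - z := by
  apply Complex.ext <;> simp

lemma inv_add_re_le_inv_re {w : ℂ} {t : ℝ} (hw : |w.im| ≤ w.re) (h0 : 0 < w.re) (ht : 0 ≤ t) :
    ((w + t)⁻¹).re ≤ (w⁻¹).re := by
  have him : w.im ^ 2 ≤ w.re ^ 2 := by simpa using sq_le_sq' (neg_le_of_abs_le hw) (le_of_abs_le hw)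
  rw [inv_re, inv_re, normSq_apply, normSq_apply, add_re, add_im, ofReal_re, ofReal_im, add_zero,
    div_le_div_iff₀ (by nlinarith) (by nlinarith)]
  nlinarith [mul_nonneg ht h0.le, mul_nonneg ht (sub_nonneg.2 him), mul_nonneg ht (sq_nonneg w.re),
    mul_nonneg (mul_nonneg ht ht) h0.le]

lemma re_regularPartDeriv_nonpos (hr : 1 ≤ r) (hre : z.re ≤ 1) (him : |z.im| ≤ 1) :
    (regularPartDeriv a r z).re ≤ 0 := by
  have hr' : (1 : ℝ) ≤ r := by exact_mod_cast hr
  have h₁ : 0 ≤ ((2 * (2 * r + 1) - z : ℂ)⁻¹).re := by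
    rw [inv_re]
    exact div_nonneg (by simp; linarith) (normSq_nonneg _)
  have h₂ := inv_add_re_le_inv_re (w := 2 * r - z) (t := 2) (by simp; linarith)
    (by simp; linarith) (by norm_num)
  rw [show (2 * r - z + (2 : ℝ) : ℂ) = 2 * r + 2 - z by push_cast; ring] at h₂
  have hre : (regularPartDeriv a r z).re = -3 * ((2 * (2 * r + 1) - z : ℂ)⁻¹).re -
      (a + 3) * (((2 * r - z : ℂ)⁻¹).re - ((2 * r + 2 - z : ℂ)⁻¹).re) := by
    simp [regularPartDeriv]
  rw [hre]
  linarith [mul_nonneg (by positivity : (0 : ℝ) ≤ a + 3) (sub_nonneg.2 h₂)]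

lemma le_re_phaseDeriv₂ (hr : 1 ≤ r) (h0 : 0 < z.re) (hre : z.re ≤ 1) (him : |z.im| ≤ 1) :
    3 * z.re / (z.re ^ 2 + 1) ≤ (phaseDeriv₂ a r (2 * r + 1 - z)).re := by
  have hsq : z.im ^ 2 ≤ 1 := (sq_le_one_iff_abs_le_one _).2 him
  calc _ = 3 * (z.re / (z.re ^ 2 + 1)) := by ring
    _ ≤ 3 * (z.re / (z.re * z.re + z.im * z.im)) :=
      mul_le_mul_of_nonneg_left (div_le_div_of_nonneg_left h0.le (by nlinarith) (by nlinarith))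
        (by norm_num)
    _ = (3 * z⁻¹).re := by simp [inv_re, normSq_apply]
    _ ≤ _ := by
      rw [phaseDeriv₂_two_mul_add_one_sub, sub_re]
      linarith [re_regularPartDeriv_nonpos (a := a) hr hre him]

lemma arg_add_ofReal_le {w : ℂ} {t : ℝ} (hre : 0 < w.re) (him : 0 ≤ w.im) (ht : 0 ≤ t) :
    arg (w + t) ≤ arg w := by
  have hnorm : ‖w‖ ≤ ‖w + t‖ := by
    rw [norm_def, norm_def]
    refine Real.sqrt_le_sqrt ?_
    rw [normSq_apply, normSq_apply, add_re, add_im, ofReal_re, ofReal_im, add_zero]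
    nlinarith
  rw [arg_of_re_nonneg (by simp; linarith), arg_of_re_nonneg hre.le, add_im, ofReal_im, add_zero]
  refine Real.monotone_arcsin ?_
  gcongr
  exact hre.trans_le (re_le_norm w)

lemma im_regularPart_nonneg (hr : 1 ≤ r) (hre : z.re ≤ 1) (him : z.im ≤ 0) :
    0 ≤ (regularPart a r z).im := by
  have hr' : (1 : ℝ) ≤ r := by exact_mod_cast hr
  have h₁ : 0 ≤ arg (2 * (2 * r + 1) - z) := by
    rw [arg_nonneg_iff]
    simpa
  have h₂ := arg_add_ofReal_le (w := 2 * r - z) (t := 2) (by simp; linarith) (by simpa)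
    (by norm_num)
  rw [show (2 * r - z + (2 : ℝ) : ℂ) = 2 * r + 2 - z by push_cast; ring] at h₂
  have him : (regularPart a r z).im = 3 * arg (2 * (2 * r + 1) - z) +
      (a + 3) * (arg (2 * r - z) - arg (2 * r + 2 - z)) := by
    simp [regularPart, log_im]
  rw [him]
  have := mul_nonneg (by positivity : (0 : ℝ) ≤ a + 3) (sub_nonneg.2 h₂)
  linarith

lemma arg_le_neg_pi_div_three (hre : z.re ≤ 1 / 2) (him : z.im ≤ -1) : z.arg ≤ -(π / 3) := by
  have hnorm : 1 ≤ ‖z‖ := le_trans (by rw [abs_of_nonpos] <;> linarith) (abs_im_le_norm z)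
  have hcos : Real.cos |z.arg| ≤ Real.cos (π / 3) := by
    rw [Real.cos_abs, cos_arg (norm_pos_iff.1 (by linarith)), Real.cos_pi_div_three,
      div_le_iff₀ (by linarith)]
    linarith
  have habs : π / 3 ≤ |z.arg| := (Real.strictAntiOn_cos.le_iff_ge
    ⟨abs_nonneg _, abs_arg_le_pi z⟩ ⟨by positivity, by linarith [Real.pi_pos]⟩).1 hcos
  rw [abs_of_neg (arg_neg_iff.2 (by linarith))] at habs
  linarith

lemma im_phaseDeriv_nonneg (hr : 1 ≤ r) (hre : z.re ≤ 1 / 2) (him : z.im ≤ -1) :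
    0 ≤ (phaseDeriv a r (2 * r + 1 - z)).im := by
  have hreg := im_regularPart_nonneg (a := a) hr (by linarith) (show z.im ≤ 0 by linarith)
  have hsum : (phaseDeriv a r (2 * r + 1 - z)).im =
      (regularPart a r z).im - 3 * z.arg - π := by
    rw [phaseDeriv_two_mul_add_one_sub a r (by linarith)]
    simp [log_im]
  linarith [arg_le_neg_pi_div_three hre him]

lemma hasDerivAt_re_comp_line {F : ℂ → ℂ} {F' p v : ℂ} {y : ℝ}
    (h : HasDerivAt F F' (p + y * v)) :
    HasDerivAt (fun y : ℝ => (F (p + y * v)).re) (F' * v).re y := by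
  have hline : HasDerivAt (fun s : ℂ => p + s * v) v y := by
    simpa using ((hasDerivAt_id (y : ℂ)).mul_const v).const_add p
  exact (h.comp (y : ℂ) hline).real_of_complex

lemma hasDerivAt_re_phase (a r : ℕ) (c : ℝ) {y : ℝ} (hy : 0 < y) :
    HasDerivAt (fun y : ℝ => (phase a r (c + y * I)).re) (phaseDeriv a r (c + y * I) * I).re y :=
  hasDerivAt_re_comp_line (hasDerivAt_phase a r (by simpa))

lemma hasDerivAt_re_phaseDeriv_mul_I (a r : ℕ) (c : ℝ) {y : ℝ} (hy : 0 < y) :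
    HasDerivAt (fun y : ℝ => (phaseDeriv a r (c + y * I) * I).re)
      (-(phaseDeriv₂ a r (c + y * I)).re) y := by
  have h := hasDerivAt_re_comp_line (p := c) (v := I)
    ((hasDerivAt_phaseDeriv a r (x := c + y * I) (by simpa)).mul_const I)
  rwa [mul_assoc, I_mul_I, mul_neg_one, neg_re] at h

lemma le_sub_mul_sq_of_hasDerivAt {s : Set ℝ} {g g' g'' : ℝ → ℝ} {m y₀ y : ℝ} (hs : Convex ℝ s)
    (hg : ∀ y ∈ s, HasDerivAt g (g' y) y) (hg' : ∀ y ∈ s, HasDerivAt g' (g'' y) y)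
    (hg'' : ∀ y ∈ s, g'' y ≤ -m) (hy₀ : y₀ ∈ s) (h0 : g' y₀ = 0) (hy : y ∈ s) :
    g y ≤ g y₀ - m / 2 * (y - y₀) ^ 2 := by
  have hl (t) (ht : t ∈ s) :
      HasDerivAt (fun t => g t + m / 2 * (t - y₀) ^ 2) (g' t + m * (t - y₀)) t := by
    refine ((hg t ht).add ((((hasDerivAt_id t).sub_const y₀).pow 2).const_mul (m / 2))).congr_deriv
      ?_
    simp
    ring
  have hl' (t) (ht : t ∈ s) : HasDerivAt (fun t => g' t + m * (t - y₀)) (g'' t + m) t := by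
    refine ((hg' t ht).add (((hasDerivAt_id t).sub_const y₀).const_mul m)).congr_deriv ?_
    rw [mul_one]
  have hconcave : ConcaveOn ℝ s fun t => g t + m / 2 * (t - y₀) ^ 2 :=
    concaveOn_of_hasDerivWithinAt2_nonpos hs (fun t ht => (hl t ht).continuousAt.continuousWithinAt)
      (fun t ht => (hl t (interior_subset ht)).hasDerivWithinAt)
      (fun t ht => (hl' t (interior_subset ht)).hasDerivWithinAt)
      fun t ht => by linarith [hg'' t (interior_subset ht)]
  have hl₀ := hl y₀ hy₀
  simp only [h0, sub_self, mul_zero, add_zero] at hl₀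
  suffices g y + m / 2 * (y - y₀) ^ 2 ≤ g y₀ + m / 2 * (y₀ - y₀) ^ 2 by
    simp only [sub_self] at this
    linarith
  rcases lt_trichotomy y y₀ with h | rfl | h
  · have hslope := hconcave.le_slope_of_hasDerivAt hy hy₀ h hl₀
    rw [slope_def_field, le_div_iff₀ (sub_pos.2 h), zero_mul] at hslope
    exact sub_nonneg.1 hslope
  · rfl
  · have hslope := hconcave.slope_le_of_hasDerivAt hy₀ hy h hl₀
    rw [slope_def_field, div_le_iff₀ (sub_pos.2 h), zero_mul] at hslope
    exact sub_nonpos.1 hslope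

lemma exists_le_sub_mul_sq_of_antitoneOn {g : ℝ → ℝ} {m y₀ Y : ℝ} (hm : 0 < m)
    (hy₀ : y₀ ∈ Ioo 0 1) (hY : 1 ≤ Y) (hg : ∀ y ∈ Ioc 0 1, g y ≤ g y₀ - m * (y - y₀) ^ 2)
    (hanti : AntitoneOn g (Ici 1)) :
    ∃ η, 0 < η ∧ ∀ y ∈ Ioc 0 Y, g y ≤ g y₀ - η * (y - y₀) ^ 2 := by
  have h1 : 0 < 1 - y₀ := sub_pos.2 hy₀.2
  have hsq (y) (hy : y ∈ Ioc 0 Y) : (y - y₀) ^ 2 ≤ Y ^ 2 :=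
    sq_le_sq' (by linarith [hy.1, hy₀.2]) (by linarith [hy.2, hy₀.1])
  refine ⟨m * (1 - y₀) ^ 2 / Y ^ 2, by positivity, fun y hy => ?_⟩
  rcases le_total y 1 with h | h
  · have hle : m * (1 - y₀) ^ 2 / Y ^ 2 ≤ m := by
      rw [div_le_iff₀ (by positivity)]
      exact mul_le_mul_of_nonneg_left (hsq 1 ⟨one_pos, hY⟩) hm.le
    exact (hg y ⟨hy.1, h⟩).trans (by gcongr)
  · have hle : m * (1 - y₀) ^ 2 / Y ^ 2 * (y - y₀) ^ 2 ≤ m * (1 - y₀) ^ 2 := by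
      rw [div_mul_eq_mul_div, div_le_iff₀ (by positivity)]
      exact mul_le_mul_of_nonneg_left (hsq y hy) (by positivity)
    linarith [hanti self_mem_Ici h h, hg 1 ⟨one_pos, le_rfl⟩]

lemma antitoneOn_re_phase (hr : 1 ≤ r) {u : ℝ} (hu : u ≤ 1 / 2) :
    AntitoneOn (fun y : ℝ => (phase a r ((2 * r + 1 - u : ℝ) + y * I)).re) (Ici 1) := by
  have hderiv (y : ℝ) (hy : y ∈ Ici 1) := hasDerivAt_re_phase a r (2 * r + 1 - u)
    (one_pos.trans_le hy)
  refine antitoneOn_of_hasDerivWithinAt_nonpos (convex_Ici 1)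
    (fun y hy => (hderiv y hy).continuousAt.continuousWithinAt)
    (fun y hy => (hderiv y (interior_subset hy)).hasDerivWithinAt) fun y hy => ?_
  have him : (u - y * I : ℂ).im ≤ -1 := by simpa using interior_subset hy
  rw [mul_I_re, neg_nonpos, two_mul_add_one_sub_add_mul_I]
  exact im_phaseDeriv_nonneg hr (by simpa using hu) him

namespace IsSaddle

variable (hz : IsSaddle a r z) (hp : Admissible a r)
include hz hp

lemma abs_im_le : |z.im| ≤ 1 / 10000 := (abs_im_le_norm z).trans (hz.norm_le hp)

lemma re_le : z.re ≤ 1 / 10000 := (re_le_norm z).trans (hz.norm_le hp)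

lemma phaseDeriv_eq_zero : phaseDeriv a r (2 * r + 1 - z) = 0 := by
  rw [phaseDeriv_two_mul_add_one_sub a r (hz.im_neg hp), hz.log_eq hp]
  ring

lemma re_phaseDeriv₂_pos : 0 < (phaseDeriv₂ a r (2 * r + 1 - z)).re := by
  have h0 := hz.re_pos hp
  have hpos : 0 < 3 * z.re / (z.re ^ 2 + 1) := by positivity
  exact hpos.trans_le (le_re_phaseDeriv₂ hp.one_le h0 (by linarith [hz.re_le hp])
    (by linarith [hz.abs_im_le hp]))

-- On the vertical line through the saddle point, `Re phase` is strictly concave up to height `1`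
-- and decreasing above it.
lemma exists_re_phase_le_sub_mul_sq : ∃ η, 0 < η ∧ ∀ y ∈ Ioc (0 : ℝ) (12 * r),
    (phase a r ((2 * r + 1 - z.re : ℝ) + y * I)).re ≤
      (phase a r ((2 * r + 1 - z.re : ℝ) + (-z.im : ℝ) * I)).re - η * (y - -z.im) ^ 2 := by
  have hr : (1 : ℝ) ≤ r := by exact_mod_cast hp.one_le
  have hre := hz.re_pos hp
  have hre' := hz.re_le hp
  have him : -z.im ∈ Ioo 0 1 :=
    ⟨neg_pos.2 (hz.im_neg hp), by linarith [neg_le_of_abs_le (hz.abs_im_le hp)]⟩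
  refine exists_le_sub_mul_sq_of_antitoneOn
    (g := fun y : ℝ => (phase a r ((2 * r + 1 - z.re : ℝ) + y * I)).re)
    (m := 3 * z.re / (z.re ^ 2 + 1) / 2) (by positivity) him (by linarith) ?_
    (antitoneOn_re_phase hp.one_le (by linarith))
  refine fun y hy => le_sub_mul_sq_of_hasDerivAt (s := Ioc 0 1) (convex_Ioc 0 1)
    (fun y hy => hasDerivAt_re_phase a r _ hy.1)
    (fun y hy => hasDerivAt_re_phaseDeriv_mul_I a r _ hy.1) (fun y hy => neg_le_neg ?_)
    ⟨him.1, him.2.le⟩ (by rw [two_mul_add_one_sub_re_add_neg_im_mul_I,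
      hz.phaseDeriv_eq_zero hp, zero_mul, zero_re]) hy
  have h := le_re_phaseDeriv₂ (a := a) (z := z.re - y * I) hp.one_le (by simpa using hre)
    (by simp; linarith) (by simpa [abs_of_pos hy.1] using hy.2)
  rw [two_mul_add_one_sub_add_mul_I]
  simpa using h

end IsSaddle

end PhaseAtSaddle

section RayThroughSaddle

variable {a r : ℕ} {z : ℂ}

lemma continuousAt_mulLogSub_zero : ContinuousAt mulLogSub 0 := by
  have hbound (w : ℂ) : ‖mulLogSub w‖ ≤ |‖w‖ * Real.log ‖w‖| + (π + 1) * ‖w‖ := by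
    have hlog : ‖log w‖ ≤ |Real.log ‖w‖| + π :=
      calc ‖log w‖ ≤ |(log w).re| + |(log w).im| := norm_le_abs_re_add_abs_im _
        _ ≤ _ := by
          rw [log_re, log_im]
          gcongr
          exact abs_arg_le_pi w
    calc ‖mulLogSub w‖ ≤ ‖w‖ * ‖log w‖ + ‖w‖ := (norm_sub_le _ _).trans_eq (by rw [norm_mul])
      _ ≤ ‖w‖ * (|Real.log ‖w‖| + π) + ‖w‖ := by gcongr
      _ = _ := by
        rw [abs_mul, abs_norm]
        ring
  have hcont : Continuous fun w : ℂ => |‖w‖ * Real.log ‖w‖| + (π + 1) * ‖w‖ :=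
    (Real.continuous_mul_log.comp continuous_norm).abs.add (by fun_prop)
  rw [ContinuousAt, show mulLogSub 0 = 0 by simp [mulLogSub]]
  exact squeeze_zero_norm hbound (by simpa using hcont.tendsto 0)

lemma continuousAt_phase_two_mul_add_one (hr : 1 ≤ r) :
    ContinuousAt (phase a r) (2 * r + 1) := by
  have hr' : (1 : ℝ) ≤ r := by exact_mod_cast hr
  have hadd {b : ℂ} (hb : ContinuousAt mulLogSub (2 * r + 1 + b)) :
      ContinuousAt (fun x => mulLogSub (x + b)) (2 * r + 1) :=
    ContinuousAt.comp (f := fun x : ℂ => x + b) hb (by fun_prop)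
  have hslit {b : ℂ} (hb : 0 < (2 * r + 1 + b : ℂ).re) : ContinuousAt mulLogSub (2 * r + 1 + b) :=
    (hasDerivAt_mulLogSub (.inl hb)).continuousAt
  have h₁ := hadd (b := -1) (hslit (by simp; linarith))
  have h₂ := hadd (b := 1) (hslit (by simp; linarith))
  have h₃ := hadd (b := 2 * r + 1) (hslit (by simp; linarith))
  have h₄ := hadd (b := -(2 * r + 1)) (by simpa using continuousAt_mulLogSub_zero)
  simp only [← sub_eq_add_neg] at h₁ h₄
  exact ((((h₁.sub h₄).const_mul 3).add ((h₃.sub h₂).const_mul 3)).sub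
    ((h₂.sub h₁).const_mul (a : ℂ))).add (by fun_prop)

namespace IsSaddle

variable (hz : IsSaddle a r z) (hp : Admissible a r)
include hz hp

lemma phaseDeriv_two_mul_add_one_sub_mul {τ : ℝ} (hτ : 0 < τ) :
    phaseDeriv a r (2 * r + 1 - τ * z) =
      (-(3 * Real.log τ) : ℝ) + (regularPart a r (τ * z) - regularPart a r z) := by
  rw [phaseDeriv_two_mul_add_one_sub a r
    (by simpa using mul_neg_of_pos_of_neg hτ (hz.im_neg hp)),
    log_ofReal_mul hτ hz.ne_zero, hz.log_eq hp]
  push_cast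
  ring

lemma re_phaseDeriv_mul_neg_neg {τ : ℝ} (hτ : τ ∈ Ioo 0 1) :
    (phaseDeriv a r (2 * r + 1 - τ * z) * -z).re < 0 := by
  have h1 : 0 < 1 - τ := sub_pos.2 hτ.2
  have hz1 : ‖z‖ ≤ 1 := hz.norm_le_one
  have hτz : ‖τ * z‖ ≤ 1 := by
    rw [norm_mul, Complex.norm_of_nonneg hτ.1.le]
    exact mul_le_one₀ hτ.2.le (norm_nonneg z) hz1
  have hsub : ‖τ * z - z‖ = (1 - τ) * ‖z‖ := by
    rw [← norm_neg, show -(τ * z - z : ℂ) = (1 - τ : ℝ) * z by push_cast; ring, norm_mul,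
      Complex.norm_of_nonneg h1.le]
  have hlip : ((regularPart a r (τ * z) - regularPart a r z) * -z).re ≤
      1 / 50 * ((1 - τ) * ‖z‖) * ‖z‖ := by
    refine (re_le_norm _).trans ?_
    rw [norm_mul, norm_neg, ← hsub]
    gcongr
    exact norm_regularPart_sub_le hp (re_le_one_of_norm_le_one hτz) (re_le_one_of_norm_le_one hz1)
  have hlog : 3 * Real.log τ * z.re ≤ 3 * (τ - 1) * z.re := by
    gcongr
    exacts [(hz.re_pos hp).le, Real.log_le_sub_one_of_pos hτ.1]
  have hmain : (1 - τ) * (‖z‖ * ‖z‖) ≤ (1 - τ) * z.re :=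
    mul_le_mul_of_nonneg_left
      (by nlinarith [norm_nonneg z, hz.norm_le hp, hz.norm_le_three_mul_re hp]) h1.le
  have hpos : 0 < (1 - τ) * z.re := mul_pos h1 (hz.re_pos hp)
  rw [hz.phaseDeriv_two_mul_add_one_sub_mul hp hτ.1, add_mul, add_re, re_ofReal_mul, neg_re]
  linarith

lemma hasDerivAt_re_phase_ray {τ : ℝ} (hτ : 0 < τ) :
    HasDerivAt (fun τ : ℝ => (phase a r (2 * r + 1 - τ * z)).re)
      (phaseDeriv a r (2 * r + 1 - τ * z) * -z).re τ := by
  have h := hasDerivAt_re_comp_line (p := 2 * r + 1) (v := -z) (y := τ)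
    (hasDerivAt_phase a r (by simpa using mul_neg_of_pos_of_neg hτ (hz.im_neg hp)))
  simpa only [mul_neg, ← sub_eq_add_neg] using h

-- `Re phase` decreases along the ray from the branch point `2 * r + 1` to the saddle point.
lemma re_phase_lt : (phase a r (2 * r + 1 - z)).re < (phase a r (2 * r + 1)).re := by
  have hcont : ContinuousOn (fun τ : ℝ => (phase a r (2 * r + 1 - τ * z)).re) (Icc 0 1) := by
    intro τ hτ
    rcases hτ.1.eq_or_lt with rfl | h
    · have hray : ContinuousAt (fun τ : ℝ => (2 * r + 1 : ℂ) - τ * z) 0 := by fun_prop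
      have hphase : ContinuousAt (phase a r) (2 * r + 1 - (0 : ℝ) * z) := by
        simpa using continuousAt_phase_two_mul_add_one (a := a) hp.one_le
      exact (continuous_re.continuousAt.comp
        (ContinuousAt.comp (f := fun τ : ℝ => 2 * r + 1 - τ * z) hphase hray)).continuousWithinAt
    · exact (hz.hasDerivAt_re_phase_ray hp h).continuousAt.continuousWithinAt
  have hanti := strictAntiOn_of_hasDerivWithinAt_neg (convex_Icc 0 1) hcont
    (fun τ hτ => (hz.hasDerivAt_re_phase_ray hp (interior_Icc.subset hτ).1).hasDerivWithinAt)
    fun τ hτ => hz.re_phaseDeriv_mul_neg_neg hp (interior_Icc.subset hτ)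
  simpa using hanti (left_mem_Icc.2 zero_le_one) (right_mem_Icc.2 zero_le_one) one_pos

end IsSaddle

end RayThroughSaddle

section SaddleAmplitude

variable {a r : ℕ} {z : ℂ}

/-- The constant in the saddle point asymptotics at `2r + 1 - z`. -/
noncomputable def saddleAmplitude (a r : ℕ) (z : ℂ) : ℂ :=
  4 * π ^ 3 * I * (exp (logAmplitude a r (2 * r + 1 - z)) *
    (2 * π / phaseDeriv₂ a r (2 * r + 1 - z)) ^ (1 / 2 : ℂ))

/-- The function that equals `2 * logAmplitude a r (2r + 1 - z)` modulo `2πi` when `2r + 1 - z` is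
the saddle point; the singular term `3 log (-z)` is replaced by `regularPart`. -/
noncomputable def amplitudeExponent (a r : ℕ) (z : ℂ) : ℂ :=
  -(a + 3) * (log (2 * r - z) + log (2 * r + 2 - z)) + 3 * log (2 * (2 * r + 1) - z) +
    regularPart a r z

lemma abs_arg_le_two_mul_abs_im {w : ℂ} (hw : 1 ≤ w.re) : |arg w| ≤ 2 * |w.im| := by
  have hsin := Real.mul_abs_le_abs_sin
    (abs_arg_le_pi_div_two_iff.2 (zero_le_one.trans hw) : |arg w| ≤ π / 2)
  rw [sin_arg, abs_div, abs_norm] at hsin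
  have hle : 2 / π * |arg w| ≤ |w.im| :=
    hsin.trans (div_le_self (abs_nonneg _) (hw.trans (re_le_norm w)))
  rw [div_mul_eq_mul_div, div_le_iff₀ Real.pi_pos] at hle
  nlinarith [abs_nonneg w.im, Real.pi_le_four]

lemma exp_ne_ofReal_mul_of_re_le {g w : ℂ} {q : ℝ} (hq : 0 ≤ q) (hg : |g.im| ≤ 1 / 4)
    (hw : w.re ≤ 3 * w.im) : exp g ≠ q * w := by
  intro h
  have hre := congrArg re h
  have him := congrArg im h
  rw [re_ofReal_mul, exp_re] at hre
  rw [im_ofReal_mul, exp_im] at him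
  have hcos : 31 / 32 ≤ Real.cos g.im := by
    nlinarith [Real.one_sub_sq_div_two_le_cos (x := g.im), abs_nonneg g.im, sq_abs g.im]
  have hsin : Real.sin g.im ≤ 1 / 4 :=
    (le_abs_self _).trans (Real.abs_sin_le_abs.trans hg)
  nlinarith [Real.exp_pos g.re, mul_le_mul_of_nonneg_left hw hq]

namespace IsSaddle

lemma pow_three (hz : IsSaddle a r z) : z ^ 3 = -exp (regularPart a r z) :=
  calc z ^ 3 = exp ((regularPart a r z - π * I) / 3) ^ 3 := by rw [hz.exp_eq]
    _ = exp (regularPart a r z - π * I) := by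
      rw [← exp_nat_mul]
      congr 1
      push_cast
      ring
    _ = _ := by rw [exp_sub, exp_pi_mul_I, div_neg, div_one]

lemma exp_logAmplitude_sq (hz : IsSaddle a r z) :
    exp (logAmplitude a r (2 * r + 1 - z)) ^ 2 = exp (amplitudeExponent a r z) := by
  have hsplit : (2 : ℕ) * logAmplitude a r (2 * r + 1 - z) =
      -(a + 3) * (log (2 * r - z) + log (2 * r + 2 - z)) + 3 * log (2 * (2 * r + 1) - z) +
        (3 : ℕ) * log (-z) := by
    rw [logAmplitude, show (2 * r + 1 - z - 1 : ℂ) = 2 * r - z by ring,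
      show (2 * r + 1 - z - (2 * r + 1) : ℂ) = -z by ring,
      show (2 * r + 1 - z + (2 * r + 1) : ℂ) = 2 * (2 * r + 1) - z by ring,
      show (2 * r + 1 - z + 1 : ℂ) = 2 * r + 2 - z by ring]
    push_cast
    ring
  have hcube : (-z) ^ 3 = exp (regularPart a r z) := by
    rw [Odd.neg_pow (by decide), hz.pow_three, neg_neg]
  rw [← exp_nat_mul, hsplit, amplitudeExponent, exp_add, exp_add _ (regularPart a r z), exp_nat_mul,
    exp_log (neg_ne_zero.2 hz.ne_zero), hcube]

variable (hz : IsSaddle a r z) (hp : Admissible a r)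
include hz hp

lemma saddleAmplitude_sq_mul : saddleAmplitude a r z ^ 2 * phaseDeriv₂ a r (2 * r + 1 - z) =
    -(32 * π ^ 7 : ℝ) * exp (amplitudeExponent a r z) := by
  have hne : phaseDeriv₂ a r (2 * r + 1 - z) ≠ 0 := by
    intro h
    simpa [h] using hz.re_phaseDeriv₂_pos hp
  have hsqrt : ((2 * π / phaseDeriv₂ a r (2 * r + 1 - z) : ℂ) ^ (1 / 2 : ℂ)) ^ 2 =
      2 * π / phaseDeriv₂ a r (2 * r + 1 - z) := by
    rw [← cpow_nat_mul]
    norm_num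
  rw [saddleAmplitude, mul_pow, mul_pow (exp _), hz.exp_logAmplitude_sq, hsqrt, mul_pow, I_sq]
  push_cast
  field_simp
  ring

lemma abs_im_amplitudeExponent_le : |(amplitudeExponent a r z).im| ≤ 1 / 4 := by
  have hr : (100 : ℝ) ≤ r := by exact_mod_cast hp.hundred_le
  have hre := hz.re_le hp
  have harg {b : ℝ} (hb : 2 ≤ b) : |arg (b - z)| ≤ 2 * ‖z‖ := by
    refine (abs_arg_le_two_mul_abs_im (by simp; linarith)).trans ?_
    simpa using abs_im_le_norm z
  have h₁ := harg (b := 2 * r) (by linarith)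
  have h₂ := harg (b := 2 * r + 2) (by linarith)
  have h₃ := harg (b := 2 * (2 * r + 1)) (by linarith)
  push_cast at h₁ h₂ h₃
  have him : (amplitudeExponent a r z).im =
      -(a + 3) * (arg (2 * r - z) + arg (2 * r + 2 - z)) + 3 * arg (2 * (2 * r + 1) - z) +
        (regularPart a r z).im := by
    simp [amplitudeExponent, log_im]
  have hsum : |-(a + 3) * (arg (2 * r - z) + arg (2 * r + 2 - z))| ≤ 4 * (1 / 50) := by
    rw [abs_mul, abs_neg, abs_of_nonneg (by positivity : (0 : ℝ) ≤ a + 3)]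
    calc _ ≤ (a + 3) * (2 * ‖z‖ + 2 * ‖z‖) := by
          gcongr
          exact (abs_add_le _ _).trans (add_le_add h₁ h₂)
      _ ≤ _ := by linarith [hz.norm_mul_le hp]
  have hthree : |3 * arg (2 * (2 * r + 1) - z)| ≤ 1 / 50 := by
    rw [abs_mul, abs_of_nonneg (zero_le_three : (0 : ℝ) ≤ 3)]
    linarith [hz.norm_le hp]
  rw [him]
  linarith [abs_add_three (-(a + 3) * (arg (2 * r - z) + arg (2 * r + 2 - z)))
    (3 * arg (2 * (2 * r + 1) - z)) (regularPart a r z).im,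
    abs_im_regularPart_le hp hz.norm_le_one]

lemma re_phaseDeriv₂_le : (phaseDeriv₂ a r (2 * r + 1 - z)).re ≤
    3 * (phaseDeriv₂ a r (2 * r + 1 - z)).im := by
  have hnorm := norm_pos_iff.2 hz.ne_zero
  have hderiv := norm_regularPartDeriv_le hp (re_le_one_of_norm_le_one hz.norm_le_one)
  have hre : (z⁻¹).re ≤ ‖z‖⁻¹ := (re_le_norm _).trans_eq (norm_inv z)
  have him : ‖z‖⁻¹ / 2 ≤ (z⁻¹).im := by
    rw [inv_im, normSq_eq_norm_sq, le_div_iff₀ (by positivity)]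
    calc _ = ‖z‖ / 2 := by field_simp
      _ ≤ _ := by linarith [hz.norm_le_two_mul_neg_im hp]
  have hlarge : 10000 ≤ ‖z‖⁻¹ := by
    rw [le_inv_comm₀ (by norm_num) hnorm]
    linarith [hz.norm_le hp]
  have hre₃ : (3 * z⁻¹).re = 3 * (z⁻¹).re := re_ofReal_mul 3 _
  have him₃ : (3 * z⁻¹).im = 3 * (z⁻¹).im := im_ofReal_mul 3 _
  rw [phaseDeriv₂_two_mul_add_one_sub, sub_re, sub_im, hre₃, him₃]
  linarith [neg_le_of_abs_le ((abs_re_le_norm _).trans hderiv),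
    le_of_abs_le ((abs_im_le_norm _).trans hderiv)]

-- If `saddleAmplitude` were purely imaginary, `saddleAmplitude_sq_mul` would make `phaseDeriv₂` a
-- positive multiple of `exp amplitudeExponent`, which is too close to the real axis.
lemma re_saddleAmplitude_ne_zero : (saddleAmplitude a r z).re ≠ 0 := by
  intro h0
  have hsq := hz.saddleAmplitude_sq_mul hp
  have him : saddleAmplitude a r z = (saddleAmplitude a r z).im * I := by
    apply Complex.ext <;> simp [h0]
  rw [him, mul_pow, I_sq] at hsq
  refine exp_ne_ofReal_mul_of_re_le
    (q := (saddleAmplitude a r z).im ^ 2 / (32 * π ^ 7)) (by positivity)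
    (hz.abs_im_amplitudeExponent_le hp) (hz.re_phaseDeriv₂_le hp) ?_
  push_cast at hsq ⊢
  field_simp
  linear_combination hsq

end IsSaddle

end SaddleAmplitude

section LogFactorial

/-- The restriction of `mulLogSub` to the real axis, with `Real.log` in place of `Complex.log`. -/
noncomputable def mulLogSubReal (x : ℝ) : ℝ := x * Real.log x - x

lemma continuous_mulLogSubReal : Continuous mulLogSubReal :=
  Real.continuous_mul_log.sub continuous_id

lemma re_mulLogSub_ofReal (x : ℝ) : (mulLogSub x).re = mulLogSubReal x := by
  rw [mulLogSub, mulLogSubReal, sub_re, re_ofReal_mul, log_ofReal_re, ofReal_re]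

lemma mulLogSubReal_sub_le {v w : ℝ} (hw : 0 ≤ w) (hv : 0 < v) :
    mulLogSubReal v - mulLogSubReal w ≤ (v - w) * Real.log v := by
  rcases hw.eq_or_lt with rfl | hw
  · simpa [mulLogSubReal] using hv.le
  · have hlog := Real.log_le_sub_one_of_pos (div_pos hv hw)
    rw [Real.log_div hv.ne' hw.ne'] at hlog
    have hmul : w * (Real.log v - Real.log w) ≤ v - w :=
      calc _ ≤ w * (v / w - 1) := by gcongr
        _ = v - w := by field_simp
    unfold mulLogSubReal
    linarith

lemma mul_mulLogSubReal_div {x : ℝ} (hx : x ≠ 0) (w : ℝ) :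
    x * mulLogSubReal (w / x) = mulLogSubReal w - w * Real.log x := by
  rcases eq_or_ne w 0 with rfl | hw
  · simp [mulLogSubReal]
  · rw [mulLogSubReal, mulLogSubReal, Real.log_div hw hx]
    field_simp
    ring

lemma log_factorial_sub_mem_Icc (k : ℕ) :
    Real.log k.factorial - mulLogSubReal k ∈ Icc 0 (Real.log k / 2 + 1) := by
  rcases k with - | k
  · simp [mulLogSubReal]
  have hlower : 0 ≤ Real.log (Stirling.stirlingSeq (k + 1)) := by
    refine Real.log_nonneg (le_trans ?_ (Stirling.sqrt_pi_le_stirlingSeq k.succ_ne_zero))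
    exact Real.one_le_sqrt.2 (by linarith [Real.pi_gt_three])
  have hupper : Real.log (Stirling.stirlingSeq (k + 1)) ≤ 1 - Real.log 2 / 2 := by
    refine (Stirling.log_stirlingSeq'_antitone k.zero_le).trans_eq ?_
    rw [Function.comp_apply, Function.comp_apply, Stirling.stirlingSeq_one,
      Real.log_div (Real.exp_ne_zero 1) (by positivity), Real.log_exp, Real.log_sqrt zero_le_two]
  have hformula := Stirling.log_stirlingSeq_formula (k + 1)
  rw [Real.log_mul two_ne_zero (by positivity), Real.log_div (by positivity) (Real.exp_ne_zero 1),
    Real.log_exp] at hformula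
  unfold mulLogSubReal
  constructor <;> linarith [Real.log_nonneg one_le_two, Real.log_natCast_nonneg (k + 1)]

lemma abs_log_factorial_sub_le {k T : ℕ} (hk : k ≤ T) :
    |Real.log k.factorial - mulLogSubReal k| ≤ Real.log T + 1 := by
  obtain ⟨hlo, hhi⟩ := log_factorial_sub_mem_Icc k
  have hlog : Real.log k ≤ Real.log T := by
    rcases k.eq_zero_or_pos with rfl | h
    · simpa using Real.log_natCast_nonneg T
    · gcongr
  rw [abs_of_nonneg hlo]
  linarith [Real.log_natCast_nonneg k]

lemma abs_log_factorial_sub_succ_le {k T : ℕ} (hk : k + 1 ≤ T) :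
    |Real.log k.factorial - mulLogSubReal (k + 1)| ≤ 2 * (Real.log T + 1) := by
  have hfact := abs_le.1 (abs_log_factorial_sub_le hk)
  have hlog : Real.log (k + 1) ≤ Real.log T := by
    gcongr
    exact_mod_cast hk
  have hnonneg : 0 ≤ Real.log (k + 1) := by exact_mod_cast Real.log_natCast_nonneg (k + 1)
  push_cast [Nat.factorial_succ] at hfact
  rw [Real.log_mul (by positivity) (by positivity)] at hfact
  exact abs_le.2 (by constructor <;> linarith)

lemma poch_natCast_add_one (k m : ℕ) :
    poch ((k : ℝ) + 1) m = (k + m).factorial / k.factorial := by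
  rw [eq_div_iff (by positivity)]
  induction m with
  | zero => simp [poch]
  | succ m ih =>
    have hsucc : poch ((k : ℝ) + 1) (m + 1) = poch ((k : ℝ) + 1) m * (k + 1 + m) :=
      Finset.prod_range_succ _ _
    rw [hsucc, mul_right_comm, ih, ← add_assoc, Nat.factorial_succ]
    push_cast
    ring

end LogFactorial

section Summand

variable {a r n : ℕ}

/-- The exponential growth rate in `x` of the summand of `S a r n` at `t = n x`. -/
noncomputable def growthRate (a r : ℕ) (x : ℝ) : ℝ :=
  3 * (mulLogSubReal (x - 1) - mulLogSubReal (x - (2 * r + 1))) +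
    3 * (mulLogSubReal (x + (2 * r + 1)) - mulLogSubReal (x + 1)) -
    a * (mulLogSubReal (x + 1) - mulLogSubReal (x - 1)) + 2 * (a - 6 * r) * (Real.log 2 - 1)

/-- The summand of `S a r n`, with the factorial prefactor included. -/
noncomputable def summand (a r n : ℕ) (t : ℝ) : ℝ :=
  ((2 * n).factorial : ℝ) ^ (a - 6 * r) * Sfun a r n t

lemma S_eq_tsum (a r n : ℕ) : S a r n = ∑' m : ℕ, summand a r n (n + 1 + m : ℕ) := by
  simp only [S, summand, tsum_mul_left]
  push_cast
  rfl

lemma re_phase_ofReal_add (a r : ℕ) (x : ℝ) :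
    (phase a r x).re + 2 * (a - 6 * r) * (Real.log 2 - 1) = growthRate a r x := by
  have hsub (b : ℝ) := re_mulLogSub_ofReal (x - b)
  have hadd (b : ℝ) := re_mulLogSub_ofReal (x + b)
  have h₁ := hsub 1
  have h₂ := hadd 1
  have h₃ := hsub (2 * r + 1)
  have h₄ := hadd (2 * r + 1)
  push_cast at h₁ h₂ h₃ h₄
  simp [phase, rate, growthRate, h₁, h₂, h₃, h₄]

lemma continuous_growthRate (a r : ℕ) : Continuous (growthRate a r) := by
  have h := continuous_mulLogSubReal
  unfold growthRate
  fun_prop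

lemma natCast_mul_growthRate_div (hn : n ≠ 0) (t : ℝ) : n * growthRate a r (t / n) =
    3 * (mulLogSubReal (t - n) - mulLogSubReal (t - (2 * r + 1) * n)) +
      3 * (mulLogSubReal (t + (2 * r + 1) * n) - mulLogSubReal (t + n)) -
      a * (mulLogSubReal (t + n) - mulLogSubReal (t - n)) +
      (a - 6 * r) * mulLogSubReal (2 * n) := by
  have hn' : (n : ℝ) ≠ 0 := Nat.cast_ne_zero.2 hn
  have hsub (b : ℝ) := mul_mulLogSubReal_div hn' (t - b * n)
  have hadd (b : ℝ) := mul_mulLogSubReal_div hn' (t + b * n)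
  simp only [sub_div, add_div, mul_div_cancel_right₀ _ hn'] at hsub hadd
  have h₁ := hsub 1
  have h₂ := hadd 1
  rw [one_mul] at h₁ h₂
  have htwo : mulLogSubReal (2 * n) = 2 * n * Real.log n + 2 * n * (Real.log 2 - 1) := by
    rw [mulLogSubReal, Real.log_mul two_ne_zero hn']
    ring
  rw [growthRate, htwo]
  linear_combination (3 + a) * h₁ - 3 * hsub (2 * r + 1) + 3 * hadd (2 * r + 1) - (3 + a) * h₂

lemma summand_add (a r n m : ℕ) : summand a r n ((2 * r + 1) * n + 1 + m : ℕ) =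
    ((2 * n).factorial : ℝ) ^ (a - 6 * r) *
      (((m + 2 * r * n).factorial / m.factorial : ℝ) ^ 3 *
        ((2 * r * n + m + (2 * n + 1) + 2 * r * n).factorial /
          (2 * r * n + m + (2 * n + 1)).factorial : ℝ) ^ 3 /
        ((2 * r * n + m + (2 * n + 1)).factorial / (2 * r * n + m).factorial : ℝ) ^ a) := by
  have h₁ : (((2 * r + 1) * n + 1 + m : ℕ) : ℝ) - ((2 * r + 1) * n : ℕ) = (m : ℕ) + 1 := by
    push_cast
    ring
  have h₂ : (((2 * r + 1) * n + 1 + m : ℕ) : ℝ) + (n : ℕ) + 1 =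
      (2 * r * n + m + (2 * n + 1) : ℕ) + 1 := by
    push_cast
    ring
  have h₃ : (((2 * r + 1) * n + 1 + m : ℕ) : ℝ) - (n : ℕ) = (2 * r * n + m : ℕ) + 1 := by
    push_cast
    ring
  rw [summand, Sfun, h₁, h₂, h₃, poch_natCast_add_one, poch_natCast_add_one, poch_natCast_add_one]

lemma summand_pos {t : ℕ} (ht : (2 * r + 1) * n < t) : 0 < summand a r n t := by
  obtain ⟨m, rfl⟩ := Nat.exists_eq_add_of_le (Nat.succ_le_of_lt ht)
  rw [Nat.succ_eq_add_one, summand_add]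
  positivity

lemma summand_eq_zero {t : ℕ} (hnt : n < t) (ht : t ≤ (2 * r + 1) * n) : summand a r n t = 0 := by
  have hpoch : poch ((t : ℝ) - ((2 * r + 1) * n : ℕ)) (2 * r * n) = 0 := by
    refine Finset.prod_eq_zero (i := (2 * r + 1) * n - t) ?_ ?_
    · rw [Finset.mem_range]
      lia
    · rw [Nat.cast_sub ht]
      ring
  rw [summand, Sfun, hpoch]
  simp

lemma summand_nonneg {t : ℕ} (hnt : n < t) : 0 ≤ summand a r n t := by
  rcases le_or_gt t ((2 * r + 1) * n) with ht | ht
  · rw [summand_eq_zero hnt ht]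
  · exact (summand_pos ht).le

lemma log_summand_add (ha : 6 * r ≤ a) (n m : ℕ) :
    Real.log (summand a r n ((2 * r + 1) * n + 1 + m : ℕ)) =
      3 * (Real.log (2 * r * n + m).factorial - Real.log m.factorial) +
      3 * (Real.log (2 * r * n + m + (2 * n + 1) + 2 * r * n).factorial -
        Real.log (2 * r * n + m + (2 * n + 1)).factorial) -
      a * (Real.log (2 * r * n + m + (2 * n + 1)).factorial -
        Real.log (2 * r * n + m).factorial) +
      (a - 6 * r) * Real.log (2 * n).factorial := by
  rw [summand_add, add_comm m, Real.log_mul (by positivity) (by positivity),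
    Real.log_div (by positivity) (by positivity), Real.log_mul (by positivity) (by positivity),
    Real.log_pow, Real.log_pow, Real.log_pow, Real.log_pow,
    Real.log_div (by positivity) (by positivity), Real.log_div (by positivity) (by positivity),
    Real.log_div (by positivity) (by positivity), Nat.cast_sub ha]
  push_cast
  ring

lemma abs_log_summand_sub_le (ha : 6 * r ≤ a) (hn : n ≠ 0) {t : ℕ} (ht : (2 * r + 1) * n < t) :
    |Real.log (summand a r n t) - n * growthRate a r (t / n)| ≤
      (6 * a + 24) * (Real.log (3 * t) + 1) := by
  obtain ⟨m, rfl⟩ := Nat.exists_eq_add_of_le (Nat.succ_le_of_lt ht)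
  rw [Nat.succ_eq_add_one, natCast_mul_growthRate_div hn, log_summand_add ha]
  set t := (2 * r + 1) * n + 1 + m with ht'
  have := Nat.pos_of_ne_zero hn
  have h₁ := abs_log_factorial_sub_succ_le (k := 2 * r * n + m) (T := 3 * t) (by lia)
  have h₂ := abs_log_factorial_sub_succ_le (k := m) (T := 3 * t) (by lia)
  have h₃ := abs_log_factorial_sub_le (k := 2 * r * n + m + (2 * n + 1) + 2 * r * n) (T := 3 * t)
    (by lia)
  have h₄ := abs_log_factorial_sub_le (k := 2 * r * n + m + (2 * n + 1)) (T := 3 * t) (by lia)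
  have h₅ := abs_log_factorial_sub_le (k := 2 * n) (T := 3 * t) (by lia)
  rw [show ((2 * r * n + m : ℕ) : ℝ) + 1 = t - n by push_cast [ht']; ring] at h₁
  rw [show (m : ℝ) + 1 = t - (2 * r + 1) * n by push_cast [ht']; ring] at h₂
  rw [show ((2 * r * n + m + (2 * n + 1) + 2 * r * n : ℕ) : ℝ) = t + (2 * r + 1) * n by
    push_cast [ht']; ring] at h₃
  rw [show ((2 * r * n + m + (2 * n + 1) : ℕ) : ℝ) = t + n by push_cast [ht']; ring] at h₄
  push_cast at h₁ h₂ h₃ h₄ h₅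
  set Λ := Real.log (3 * t) + 1
  have hΛ : 0 ≤ Λ := (abs_nonneg _).trans h₃
  have hr : (0 : ℝ) ≤ a - 6 * r := sub_nonneg.2 (by exact_mod_cast ha)
  have hmul {c x b : ℝ} (hc : 0 ≤ c) (hx : |x| ≤ b) : |c * x| ≤ c * b := by
    rw [abs_mul, abs_of_nonneg hc]
    gcongr
  have b₁ := abs_le.1 (hmul (c := 3 + a) (by positivity) h₁)
  have b₂ := abs_le.1 h₂
  have b₃ := abs_le.1 h₃
  have b₄ := abs_le.1 (hmul (c := 3 + a) (by positivity) h₄)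
  have b₅ := abs_le.1 (hmul hr h₅)
  have haΛ : 0 ≤ a * Λ := by positivity
  have hrΛ : 0 ≤ r * Λ := by positivity
  exact abs_le.2 (by constructor <;> linarith [haΛ, hrΛ])

end Summand

section GrowthMaximum

variable {a r : ℕ} {x : ℝ}

lemma growthRate_le (hr : 0 < r) (hx : 2 * r + 1 ≤ x) :
    growthRate a r x ≤ 6 * r * Real.log 2 + 3 + 2 * (a - 6 * r) * (Real.log 2 - 1) -
      2 * (a - 6 * r) * Real.log (x - 1) := by
  have hr' : (1 : ℝ) ≤ r := by exact_mod_cast hr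
  have hsub := mulLogSubReal_sub_le (w := x - (2 * r + 1)) (v := x - 1) (by linarith) (by linarith)
  have hadd := mulLogSubReal_sub_le (w := x + 1) (v := x + (2 * r + 1)) (by linarith) (by linarith)
  have hden := mul_le_mul_of_nonneg_left
    (mulLogSubReal_sub_le (w := x + 1) (v := x - 1) (by linarith) (by linarith)) a.cast_nonneg'
  have hlog : Real.log (x + (2 * r + 1)) ≤ Real.log 2 + Real.log (x - 1) + 1 / (2 * r) :=
    calc Real.log (x + (2 * r + 1)) ≤ Real.log (2 * (x - 1) * (x / (x - 1))) := by
          rw [mul_assoc, mul_div_cancel₀ _ (by linarith)]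
          gcongr <;> linarith
      _ = Real.log 2 + Real.log (x - 1) + Real.log (x / (x - 1)) := by
          rw [Real.log_mul (by nlinarith) (div_pos _ _).ne', Real.log_mul] <;> linarith
      _ ≤ Real.log 2 + Real.log (x - 1) + (x / (x - 1) - 1) := by
          gcongr
          exact Real.log_le_sub_one_of_pos (div_pos (by linarith) (by linarith))
      _ = Real.log 2 + Real.log (x - 1) + 1 / (x - 1) := by
          rw [div_sub_one (by linarith)]
          ring
      _ ≤ _ := by
          gcongr
          linarith
  have hmul : 6 * r * Real.log (x + (2 * r + 1)) ≤ 6 * r * (Real.log 2 + Real.log (x - 1)) + 3 :=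
    calc _ ≤ 6 * r * (Real.log 2 + Real.log (x - 1) + 1 / (2 * r)) := by gcongr
      _ = _ := by
        field_simp
        ring
  unfold growthRate
  linarith

lemma Admissible.exists_growthRate_le_sub_log (hp : Admissible a r) :
    ∃ K, ∀ x : ℝ, 2 * r + 1 ≤ x → growthRate a r x ≤ K - Real.log x := by
  have hr : (100 : ℝ) ≤ r := by exact_mod_cast hp.hundred_le
  have ha : (100 * r : ℝ) ≤ a := by exact_mod_cast hp.hundred_mul_le
  refine ⟨6 * r * Real.log 2 + 3 + 2 * (a - 6 * r) * (Real.log 2 - 1) + Real.log 2, fun x hx => ?_⟩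
  have hle := growthRate_le (a := a) hp.one_le hx
  have hlog : Real.log x ≤ Real.log 2 + Real.log (x - 1) := by
    rw [← Real.log_mul two_ne_zero (by linarith)]
    gcongr <;> linarith
  have hmul : Real.log (x - 1) ≤ 2 * (a - 6 * r) * Real.log (x - 1) :=
    le_mul_of_one_le_left (Real.log_nonneg (by linarith)) (by linarith)
  linarith

lemma Admissible.exists_forall_growthRate_le (hp : Admissible a r) :
    ∃ x₁ : ℝ, 2 * r + 1 ≤ x₁ ∧ ∀ x : ℝ, 2 * r + 1 ≤ x → growthRate a r x ≤ growthRate a r x₁ := by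
  obtain ⟨K, hK⟩ := hp.exists_growthRate_le_sub_log
  have hfar : ∀ᶠ x in cocompact ℝ ⊓ 𝓟 (Ici (2 * r + 1 : ℝ)),
      growthRate a r x ≤ growthRate a r (2 * r + 1) := by
    rw [eventually_inf_principal]
    filter_upwards [(tendsto_norm_cocompact_atTop (E := ℝ)).eventually_ge_atTop
      (Real.exp (K - growthRate a r (2 * r + 1)))] with x hx hxr
    rw [← Real.le_log_iff_exp_le ((Real.exp_pos _).trans_le hx), Real.norm_eq_abs,
      Real.log_abs] at hx
    linarith [hK x hxr]
  obtain ⟨x₁, hx₁, hmax⟩ :=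
    (continuous_growthRate a r).continuousOn.exists_isMaxOn' isClosed_Ici self_mem_Ici hfar
  exact ⟨x₁, hx₁, fun x hx => hmax hx⟩

end GrowthMaximum

section SeriesGrowth

variable {a r n t : ℕ}

lemma tendsto_add_log_div {f : ℕ → ℝ} {L : ℝ} (hf : Tendsto f atTop (𝓝 L)) (b c : ℝ) :
    Tendsto (fun n : ℕ => f n + (b * Real.log n + c) / n) atTop (𝓝 L) := by
  have hlog : Tendsto (fun n : ℕ => Real.log n / n) atTop (𝓝 0) :=
    Real.isLittleO_log_id_atTop.tendsto_div_nhds_zero.comp tendsto_natCast_atTop_atTop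
  have hone : Tendsto (fun n : ℕ => c / (n : ℝ)) atTop (𝓝 0) :=
    tendsto_const_div_atTop_nhds_zero_nat c
  simpa [add_div, mul_div_assoc] using hf.add ((hlog.const_mul b).add hone)

lemma mul_le_mul_add_mul {n c g M L : ℝ} (hc : 0 ≤ c) (hcn : c ≤ n) (hM : g ≤ M)
    (hL : g ≤ M + L) : n * g ≤ n * M + c * L := by
  have h₁ := mul_le_mul_of_nonneg_left hM (sub_nonneg.2 hcn)
  have h₂ := mul_le_mul_of_nonneg_left hL hc
  linarith

lemma Admissible.exists_summand_le (hp : Admissible a r) {M : ℝ}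
    (hM : ∀ x : ℝ, 2 * r + 1 ≤ x → growthRate a r x ≤ M) :
    ∃ B, ∀ n t : ℕ, 6 * a + 26 ≤ n → n < t → summand a r n t ≤
      Real.exp (n * M + ((6 * a + 26) * Real.log n + B)) * (1 / (t : ℝ) ^ 2) := by
  obtain ⟨K, hK⟩ := hp.exists_growthRate_le_sub_log
  have ha : 6 * r ≤ a := by linarith [hp.hundred_mul_le]
  refine ⟨(6 * a + 26) * (K - M) + (6 * a + 24) * (Real.log 3 + 1), fun n t hn hnt => ?_⟩
  rcases le_or_gt t ((2 * r + 1) * n) with ht | ht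
  · rw [summand_eq_zero hnt ht]
    positivity
  have hn₀ : 0 < n := by lia
  have hn' : (0 : ℝ) < n := by exact_mod_cast hn₀
  have ht₀ : (0 : ℝ) < t := by exact_mod_cast hn₀.trans hnt
  have hx : 2 * r + 1 ≤ (t / n : ℝ) := by
    rw [le_div_iff₀ hn']
    exact_mod_cast ht.le
  have hKx := hK _ hx
  rw [Real.log_div ht₀.ne' hn'.ne'] at hKx
  have hgrowth := mul_le_mul_add_mul (n := n) (c := 6 * a + 26)
    (L := Real.log n + (K - M) - Real.log t) (by positivity) (by exact_mod_cast hn) (hM _ hx)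
    (by linarith)
  have hlog := (abs_le.1 (abs_log_summand_sub_le ha hn₀.ne' ht)).2
  rw [Real.log_mul three_ne_zero ht₀.ne'] at hlog
  rw [← Real.log_le_log_iff (summand_pos ht) (by positivity),
    Real.log_mul (by positivity) (by positivity), Real.log_exp, one_div, Real.log_inv, Real.log_pow]
  push_cast
  linarith

lemma summable_one_div_natCast_add_one_sq : Summable fun m : ℕ => 1 / ((m : ℝ) + 1) ^ 2 := by
  exact_mod_cast (summable_nat_add_iff 1).2 (Real.summable_one_div_nat_pow.2 one_lt_two)

lemma Admissible.exists_S_le (hp : Admissible a r) {M : ℝ}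
    (hM : ∀ x : ℝ, 2 * r + 1 ≤ x → growthRate a r x ≤ M) :
    ∃ B, ∀ n : ℕ, 6 * a + 26 ≤ n → Summable (fun m : ℕ => summand a r n (n + 1 + m : ℕ)) ∧
      S a r n ≤ Real.exp (n * M + ((6 * a + 26) * Real.log n + B)) := by
  obtain ⟨B, hB⟩ := hp.exists_summand_le hM
  set Z := ∑' m : ℕ, 1 / ((m : ℝ) + 1) ^ 2 with hZ
  refine ⟨B + Z, fun n hn => ?_⟩
  set E := n * M + ((6 * a + 26) * Real.log n + B) with hE
  have hle (m : ℕ) :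
      summand a r n (n + 1 + m : ℕ) ≤ Real.exp E * (1 / ((m : ℝ) + 1) ^ 2) := by
    refine (hB n (n + 1 + m) hn (by lia)).trans ?_
    gcongr
    push_cast
    linarith [n.cast_nonneg (α := ℝ)]
  have hsummable := summable_one_div_natCast_add_one_sq.mul_left (Real.exp E)
  have hsum : Summable fun m : ℕ => summand a r n (n + 1 + m : ℕ) :=
    hsummable.of_nonneg_of_le (fun m => summand_nonneg (by lia)) hle
  refine ⟨hsum, ?_⟩
  calc S a r n ≤ Real.exp E * Z := by
        rw [S_eq_tsum, hZ, ← tsum_mul_left]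
        exact hsum.tsum_le_tsum hle hsummable
    _ ≤ Real.exp E * Real.exp Z := by
        gcongr
        linarith [Real.add_one_le_exp Z]
    _ = _ := by
        rw [← Real.exp_add, hE]
        ring_nf

lemma Admissible.summand_le_S (hp : Admissible a r) (hn : 6 * a + 26 ≤ n) (hnt : n < t) :
    summand a r n t ≤ S a r n := by
  obtain ⟨x₁, -, hmax⟩ := hp.exists_forall_growthRate_le
  obtain ⟨B, hB⟩ := hp.exists_S_le hmax
  obtain ⟨j, rfl⟩ := Nat.exists_eq_add_of_lt hnt
  rw [S_eq_tsum, add_right_comm]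
  exact (hB n hn).1.le_tsum j fun m _ => summand_nonneg (by lia)

lemma Admissible.S_pos (hp : Admissible a r) (hn : 6 * a + 26 ≤ n) : 0 < S a r n :=
  (summand_pos (Nat.lt_succ_self _)).trans_le (hp.summand_le_S hn (by lia))

lemma Admissible.le_log_S (hp : Admissible a r) {x : ℝ} (hx : 2 * r + 1 ≤ x)
    (hn : 6 * a + 26 ≤ n) :
    n * growthRate a r ((⌊x * n⌋₊ + 1 : ℕ) / n) -
      (6 * a + 24) * (Real.log n + (Real.log (3 * (x + 1)) + 1)) ≤ Real.log (S a r n) := by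
  have ha : 6 * r ≤ a := by linarith [hp.hundred_mul_le]
  have hn' : (1 : ℝ) ≤ n := by exact_mod_cast (show 1 ≤ n by lia)
  have hx₀ : 0 ≤ x := le_trans (by positivity) hx
  have ht : (2 * r + 1) * n < ⌊x * n⌋₊ + 1 := by
    refine Nat.lt_succ_of_le (Nat.le_floor ?_)
    push_cast
    gcongr
  set t := ⌊x * n⌋₊ + 1 with ht'
  have htn : (t : ℝ) ≤ n * (x + 1) := by
    push_cast [ht']
    linarith [Nat.floor_le (show 0 ≤ x * n by positivity)]
  have hlogt : Real.log (3 * t) ≤ Real.log n + Real.log (3 * (x + 1)) := by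
    rw [← Real.log_mul (by positivity) (by positivity)]
    exact Real.log_le_log (by positivity) (by linarith)
  have hlower := (abs_le.1 (abs_log_summand_sub_le ha (by lia) ht)).1
  calc _ ≤ n * growthRate a r (t / n) - (6 * a + 24) * (Real.log (3 * t) + 1) := by
        gcongr _ - _ * ?_
        linarith
    _ ≤ Real.log (summand a r n t) := by linarith
    _ ≤ _ := Real.log_le_log (summand_pos ht) (hp.summand_le_S hn (by nlinarith))

lemma tendsto_natFloor_mul_add_one_div {x : ℝ} (hx : 0 ≤ x) :
    Tendsto (fun n : ℕ => ((⌊x * n⌋₊ + 1 : ℕ) : ℝ) / n) atTop (𝓝 x) := by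
  have hfloor : Tendsto (fun n : ℕ => (⌊x * n⌋₊ : ℝ) / n) atTop (𝓝 x) :=
    (tendsto_nat_floor_mul_div_atTop hx).comp tendsto_natCast_atTop_atTop
  simpa [add_div] using tendsto_add_log_div hfloor 0 1

lemma Admissible.tendsto_log_S_div (hp : Admissible a r) {x₁ : ℝ} (hx₁ : 2 * r + 1 ≤ x₁)
    (hmax : ∀ x : ℝ, 2 * r + 1 ≤ x → growthRate a r x ≤ growthRate a r x₁) :
    Tendsto (fun n : ℕ => Real.log (S a r n) / n) atTop (𝓝 (growthRate a r x₁)) := by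
  obtain ⟨B, hB⟩ := hp.exists_S_le hmax
  have hlower := tendsto_add_log_div
    (((continuous_growthRate a r).tendsto x₁).comp
      (tendsto_natFloor_mul_add_one_div (le_trans (by positivity) hx₁)))
    (-(6 * a + 24)) (-(6 * a + 24) * (Real.log (3 * (x₁ + 1)) + 1))
  have hupper := tendsto_add_log_div (tendsto_const_nhds (x := growthRate a r x₁)) (6 * a + 26) B
  refine tendsto_of_tendsto_of_tendsto_of_le_of_le' hlower hupper ?_ ?_
  · filter_upwards [eventually_ge_atTop (6 * a + 26)] with n hn
    have hn' : (0 : ℝ) < n := by exact_mod_cast (show 0 < n by lia)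
    rw [le_div_iff₀ hn', add_mul, div_mul_cancel₀ _ hn'.ne']
    refine le_trans (le_of_eq ?_) (hp.le_log_S hx₁ hn)
    simp only [Function.comp_apply]
    ring
  · filter_upwards [eventually_ge_atTop (6 * a + 26)] with n hn
    have hn' : (0 : ℝ) < n := by exact_mod_cast (show 0 < n by lia)
    rw [div_le_iff₀ hn', add_mul, div_mul_cancel₀ _ hn'.ne', mul_comm _ (n : ℝ),
      Real.log_le_iff_le_exp (hp.S_pos hn)]
    exact (hB n hn).2

end SeriesGrowth

section Oscillation

lemma re_exp_mul_I_mul (C : ℂ) (θ : ℝ) : (exp (θ * I) * C).re = ‖C‖ * Real.cos (θ + arg C) := by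
  have hpolar : exp (θ * I) * C = ‖C‖ * exp ((θ + arg C : ℝ) * I) := by
    conv_lhs => rw [← norm_mul_exp_arg_mul_I C]
    push_cast
    rw [add_mul, exp_add]
    ring
  rw [hpolar, re_ofReal_mul, exp_ofReal_mul_I_re]

lemma arg_ne_pi_div_two_add_int_mul_pi {C : ℂ} (hC : C.re ≠ 0) (m : ℤ) :
    arg C ≠ π / 2 + m * π := by
  intro harg
  rw [← norm_mul_cos_arg C, harg, Real.cos_add_int_mul_pi, Real.cos_pi_div_two] at hC
  simp at hC

lemma exists_re_eq_mul_cos_add {P C : ℂ} (hC : C ≠ 0) {M : ℕ → ℝ} {J : ℕ → ℂ}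
    (h : Tendsto (fun n : ℕ => (√n : ℂ)⁻¹ * exp (-(M n + n * P)) * J n) atTop (𝓝 C)) :
    ∃ w : ℕ → ℝ, Tendsto w atTop (𝓝 0) ∧ ∀ n : ℕ, 0 < n →
      (J n).re = Real.exp (M n) * √n * Real.exp (n * P.re) * ‖C‖ *
        (Real.cos (n * P.im + arg C) + w n) := by
  have := norm_pos_iff.2 hC
  set T : ℕ → ℂ := fun n => (√n : ℂ)⁻¹ * exp (-(M n + n * P)) * J n with hT
  refine ⟨fun n => (exp ((n * P.im : ℝ) * I) * (T n - C)).re / ‖C‖, ?_, fun n hn => ?_⟩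
  · have hdiv : Tendsto (fun n => ‖T n - C‖ / ‖C‖) atTop (𝓝 0) := by
      simpa using (tendsto_iff_norm_sub_tendsto_zero.1 h).div_const ‖C‖
    refine squeeze_zero_norm (fun n => ?_) hdiv
    rw [norm_div, norm_norm]
    gcongr
    refine (abs_re_le_norm _).trans_eq ?_
    rw [norm_mul, norm_exp_ofReal_mul_I, one_mul]
  · have hsqrt : (√n : ℂ) ≠ 0 := by
      exact_mod_cast (Real.sqrt_pos.2 (Nat.cast_pos.2 hn)).ne'
    have hexp : exp (M n + n * P) =
        exp (M n) * exp (n * P.re : ℝ) * exp ((n * P.im : ℝ) * I) := by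
      rw [← exp_add, ← exp_add]
      nth_rw 1 [← re_add_im P]
      push_cast
      ring_nf
    have hJ : J n = (Real.exp (M n) * √n * Real.exp (n * P.re) : ℝ) *
        (exp ((n * P.im : ℝ) * I) * C + exp ((n * P.im : ℝ) * I) * (T n - C)) := by
      have hTn : J n = √n * exp (M n + n * P) * T n := by
        simp only [hT, exp_neg]
        field_simp
      rw [hTn, hexp]
      push_cast
      ring
    rw [hJ, re_ofReal_mul, add_re, re_exp_mul_I_mul]
    field_simp

lemma exists_tendsto_zero_eq_exp_rpow {X : ℕ → ℝ} {L : ℝ} (hL : L ≠ 0)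
    (hX : ∀ᶠ n in atTop, 0 < X n)
    (h : Tendsto (fun n : ℕ => Real.log (X n) / n) atTop (𝓝 L)) :
    ∃ u : ℕ → ℝ, Tendsto u atTop (𝓝 0) ∧
      ∀ᶠ n : ℕ in atTop, X n = Real.exp L ^ ((n : ℝ) * (1 + u n)) := by
  refine ⟨fun n => Real.log (X n) / n / L - 1, ?_, ?_⟩
  · simpa [hL] using (h.div_const L).sub_const 1
  · filter_upwards [hX, eventually_gt_atTop 0] with n hXn hn
    have hn' : (n : ℝ) ≠ 0 := by exact_mod_cast hn.ne'
    rw [← Real.exp_mul, ← Real.exp_log hXn, Real.log_exp]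
    congr 1
    field_simp
    ring

end Oscillation

section DerivedSeries

variable {a r : ℕ} {z : ℂ}

/-- The non-oscillating part of the asymptotics of `Sder a r n`, for the saddle `2r + 1 - z`. -/
noncomputable def derPrefactor (a r : ℕ) (z : ℂ) (n : ℕ) : ℝ :=
  1 / π * ((2 * n).factorial : ℝ) ^ (a - 6 * r) * (Real.exp (logScale a r n) * √n *
    Real.exp (n * (phase a r (2 * r + 1 - z)).re) * ‖saddleAmplitude a r z‖)

lemma tendsto_log_factorial_two_mul_div_sub :
    Tendsto (fun n : ℕ => Real.log (2 * n).factorial / n - 2 * Real.log n) atTop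
      (𝓝 (2 * (Real.log 2 - 1))) := by
  refine tendsto_of_tendsto_of_tendsto_of_le_of_le' tendsto_const_nhds
    (tendsto_add_log_div tendsto_const_nhds (1 / 2) (Real.log 2 / 2 + 1)) ?_ ?_
  all_goals
    filter_upwards [eventually_gt_atTop 0] with n hn
    have hn' : (0 : ℝ) < n := by exact_mod_cast hn
    have hfact := log_factorial_sub_mem_Icc (2 * n)
    push_cast [mulLogSubReal] at hfact
    rw [Real.log_mul two_ne_zero hn'.ne'] at hfact
  · rw [le_sub_iff_add_le, le_div_iff₀ hn']
    linarith [hfact.1]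
  · rw [sub_le_iff_le_add, div_le_iff₀ hn', add_mul, add_mul, div_mul_cancel₀ _ hn'.ne']
    linarith [hfact.2]

lemma derPrefactor_pos (hz : saddleAmplitude a r z ≠ 0) {n : ℕ} (hn : 0 < n) :
    0 < derPrefactor a r z n := by
  rw [derPrefactor]
  positivity

lemma tendsto_log_derPrefactor_div (ha : 6 * r ≤ a) (hz : saddleAmplitude a r z ≠ 0) :
    Tendsto (fun n : ℕ => Real.log (derPrefactor a r z n) / n) atTop
      (𝓝 ((phase a r (2 * r + 1 - z)).re + 2 * (a - 6 * r) * (Real.log 2 - 1))) := by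
  have h := tendsto_add_log_div
    ((tendsto_log_factorial_two_mul_div_sub.const_mul (a - 6 * r : ℝ)).const_add
      (phase a r (2 * r + 1 - z)).re)
    (1 / 2 - a) (Real.log ‖saddleAmplitude a r z‖ - Real.log π)
  rw [mul_left_comm, ← mul_assoc] at h
  refine h.congr' ?_
  filter_upwards [eventually_gt_atTop 0] with n hn
  have hn' : (0 : ℝ) < n := by exact_mod_cast hn
  rw [derPrefactor, logScale, Real.log_mul (by positivity) (by positivity),
    Real.log_mul (by positivity) (by positivity), Real.log_mul (by positivity) (by positivity),
    Real.log_mul (by positivity) (by positivity), Real.log_mul (by positivity) (by positivity),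
    Real.log_exp, Real.log_exp, Real.log_pow, Real.log_sqrt hn'.le,
    one_div π, Real.log_inv, Nat.cast_sub ha]
  push_cast
  field_simp
  ring

lemma IsSaddle.saddleAmplitude_ne_zero (hz : IsSaddle a r z) (hp : Admissible a r) :
    saddleAmplitude a r z ≠ 0 := fun h => hz.re_saddleAmplitude_ne_zero hp (by simp [h])

lemma IsSaddle.tendsto_integral_Ioi_lineIntegrand (hz : IsSaddle a r z) (hp : Admissible a r) :
    Tendsto (fun n : ℕ => (√n : ℂ)⁻¹ *
        exp (-(logScale a r n + n * phase a r (2 * r + 1 - z))) *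
        ∫ s in Ioi 0, lineIntegrand a r (2 * r + 1 - z.re) n s) atTop
      (𝓝 (saddleAmplitude a r z)) := by
  have hr : (100 : ℝ) ≤ r := by exact_mod_cast hp.hundred_le
  have ha : 6 * r + 2 ≤ a := by linarith [hp.hundred_le, hp.hundred_mul_le]
  obtain ⟨η, hη, hdec⟩ := hz.exists_re_phase_le_sub_mul_sq hp
  have hre := hz.re_le hp
  have him := neg_abs_le z.im
  have him' := hz.abs_im_le hp
  have hsaddle := two_mul_add_one_sub_re_add_neg_im_mul_I r z
  have h := OddZeta.tendsto_integral_Ioi_lineIntegrand (c := 2 * r + 1 - z.re) (y₀ := -z.im)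
    (y₂ := 12 * r) ha (by linarith) (by linarith [hz.im_neg hp]) (by linarith)
    (by nlinarith [Real.pi_gt_three]) (by rw [hsaddle]; exact hz.phaseDeriv_eq_zero hp)
    (by rw [hsaddle]; exact hz.re_phaseDeriv₂_pos hp) hη hdec
  rwa [hsaddle] at h

lemma IsSaddle.exists_abs_Sder_eq (hz : IsSaddle a r z) (hp : Admissible a r) :
    ∃ w : ℕ → ℝ, Tendsto w atTop (𝓝 0) ∧ ∀ n : ℕ, 0 < n →
      |Sder a r n| = derPrefactor a r z n *
        |Real.cos (n * (phase a r (2 * r + 1 - z)).im + arg (saddleAmplitude a r z)) + w n| := by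
  have hr : (100 : ℝ) ≤ r := by exact_mod_cast hp.hundred_le
  have ha : 6 * r + 2 ≤ a := by linarith [hp.hundred_le, hp.hundred_mul_le]
  have hne := hz.saddleAmplitude_ne_zero hp
  obtain ⟨w, hw, hcos⟩ := exists_re_eq_mul_cos_add hne (hz.tendsto_integral_Ioi_lineIntegrand hp)
  refine ⟨w, hw, fun n hn => ?_⟩
  have hn' : (1 : ℝ) ≤ n := by exact_mod_cast hn
  have hre := hz.re_le hp
  have hSder : Sder a r n = -(1 / π) * ((2 * n).factorial : ℝ) ^ (a - 6 * r) *
      (∫ s in Ioi 0, lineIntegrand a r (2 * r + 1 - z.re) n s).re := by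
    refine Sder_eq_integral ha (Nat.le_floor (by nlinarith)) (Nat.floor_le_of_le ?_)
    push_cast
    gcongr
    linarith [hz.re_pos hp]
  rw [← abs_of_pos (derPrefactor_pos hne hn), ← abs_mul, ← abs_neg, hSder, hcos n hn, derPrefactor]
  congr 1
  ring

end DerivedSeries

section Bounds

variable {a r : ℕ}

lemma Admissible.exp_growthRate_le (hp : Admissible a r) {x : ℝ} (hx : 2 * r + 1 ≤ x) :
    Real.exp (growthRate a r x) ≤ (2 : ℝ) ^ (6 * (r + 1)) / (r : ℝ) ^ (2 * (a - 6 * r)) := by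
  have hr : (100 : ℝ) ≤ r := by exact_mod_cast hp.hundred_le
  have ha : 6 * r ≤ a := by linarith [hp.hundred_mul_le]
  have ha' : (0 : ℝ) ≤ a - 6 * r := sub_nonneg.2 (by exact_mod_cast ha)
  have hlog : Real.log 2 + Real.log r ≤ Real.log (x - 1) := by
    rw [← Real.log_mul two_ne_zero (by positivity)]
    exact Real.log_le_log (by positivity) (by linarith)
  have hmul := mul_le_mul_of_nonneg_left hlog (mul_nonneg zero_le_two ha')
  rw [← Real.le_log_iff_exp_le (by positivity), Real.log_div (by positivity) (by positivity),
    Real.log_pow, Real.log_pow]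
  push_cast [Nat.cast_sub ha]
  linarith [growthRate_le (a := a) hp.one_le hx, Real.log_two_gt_d9]

lemma Admissible.two_pow_div_pow_lt_one (hp : Admissible a r) :
    (2 : ℝ) ^ (6 * (r + 1)) / (r : ℝ) ^ (2 * (a - 6 * r)) < 1 := by
  have hr : (2 : ℝ) ≤ r := by exact_mod_cast le_trans (by norm_num) hp.hundred_le
  rw [div_lt_one (by positivity)]
  calc (2 : ℝ) ^ (6 * (r + 1)) < 2 ^ (2 * (a - 6 * r)) :=
        pow_lt_pow_right₀ one_lt_two (by have := hp.hundred_le; have := hp.hundred_mul_le; lia)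
    _ ≤ (r : ℝ) ^ (2 * (a - 6 * r)) := by gcongr

end Bounds

section Conclusion

variable {a r : ℕ}

lemma IsSaddle.re_phase_add_lt_growthRate {z : ℂ} (hz : IsSaddle a r z) (hp : Admissible a r)
    {x₁ : ℝ} (hmax : ∀ x : ℝ, 2 * r + 1 ≤ x → growthRate a r x ≤ growthRate a r x₁) :
    (phase a r (2 * r + 1 - z)).re + 2 * (a - 6 * r) * (Real.log 2 - 1) < growthRate a r x₁ := by
  have hbranch := re_phase_ofReal_add a r (2 * r + 1)
  push_cast at hbranch
  linarith [hz.re_phase_lt hp, hmax (2 * r + 1) le_rfl]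

end Conclusion

end OddZeta

open OddZeta Filter Topology in
theorem stmt18_general {a r : ℕ} (hp : Admissible a r) :
    ∃ εa εa'' ωa φa : ℝ,
      0 < εa'' ∧ εa'' < εa ∧
      εa ≤ (2 : ℝ) ^ (6 * (r + 1)) / (r : ℝ) ^ (2 * (a - 6 * r)) ∧
      (2 : ℝ) ^ (6 * (r + 1)) / (r : ℝ) ^ (2 * (a - 6 * r)) < 1 ∧
      (∀ m : ℤ, φa ≠ Real.pi / 2 + m * Real.pi) ∧
      ∃ u v w : ℕ → ℝ,
        Tendsto u atTop (𝓝 0) ∧ Tendsto v atTop (𝓝 0) ∧ Tendsto w atTop (𝓝 0) ∧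
        ∃ N : ℕ, ∀ n : ℕ, N ≤ n →
          |S a r n| = εa ^ ((n : ℝ) * (1 + u n)) ∧
          |Sder a r n| = εa'' ^ ((n : ℝ) * (1 + v n)) * |Real.cos ((n : ℝ) * ωa + φa) + w n| := by
  obtain ⟨x₁, hx₁, hmax⟩ := hp.exists_forall_growthRate_le
  obtain ⟨z, hz⟩ := exists_isSaddle hp
  have hbound := hp.exp_growthRate_le hx₁
  have hone := hp.two_pow_div_pow_lt_one
  have hL₁ : growthRate a r x₁ < 0 := Real.exp_lt_one_iff.1 (hbound.trans_lt hone)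
  have hL₂ := hz.re_phase_add_lt_growthRate hp hmax
  have hne := hz.saddleAmplitude_ne_zero hp
  have hSpos : ∀ᶠ n in atTop, 0 < S a r n := eventually_atTop.2 ⟨_, fun n hn => hp.S_pos hn⟩
  have hPpos : ∀ᶠ n in atTop, 0 < derPrefactor a r z n :=
    eventually_atTop.2 ⟨1, fun n hn => derPrefactor_pos hne hn⟩
  obtain ⟨u, hu, hS⟩ :=
    exists_tendsto_zero_eq_exp_rpow hL₁.ne hSpos (hp.tendsto_log_S_div hx₁ hmax)
  obtain ⟨v, hv, hP⟩ := exists_tendsto_zero_eq_exp_rpow (hL₂.trans hL₁).ne hPpos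
    (tendsto_log_derPrefactor_div (by linarith [hp.hundred_mul_le]) hne)
  obtain ⟨w, hw, hSder⟩ := hz.exists_abs_Sder_eq hp
  refine ⟨_, _, (phase a r (2 * r + 1 - z)).im, (saddleAmplitude a r z).arg, Real.exp_pos _,
    Real.exp_lt_exp.2 hL₂, hbound, hone,
    arg_ne_pi_div_two_add_int_mul_pi (hz.re_saddleAmplitude_ne_zero hp), u, v, w, hu, hv, hw,
    eventually_atTop.1 ?_⟩
  filter_upwards [hSpos, hS, hP, eventually_gt_atTop 0] with n hn hSn hPn hn'
  exact ⟨by rw [abs_of_pos hn, hSn], by rw [hSder n hn', hPn]⟩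

/-- Asymptotics of |S_n| and |S″_n|: for all sufficiently large odd a, with
r = ⌊a·exp(−√(log a))⌋, there are ε_a, ε″_a, ω_a, φ_a with
0 < ε″_a < ε_a ≤ 2^{6(r+1)}/r^{2(a−6r)} < 1 and φ_a ≢ π/2 (mod π) such that
|S_n| = ε_a^{n(1+o(1))} and |S″_n| = ε″_a^{n(1+o(1))}·|cos(nω_a+φ_a)+o(1)|. -/
theorem stmt18 :
    ∃ A : ℕ, ∀ a : ℕ, Odd a → A ≤ a →
      ∀ r : ℕ, r = ⌊(a : ℝ) * Real.exp (-Real.sqrt (Real.log a))⌋₊ →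
        ∃ εa εa'' ωa φa : ℝ,
          0 < εa'' ∧ εa'' < εa ∧
          εa ≤ (2 : ℝ) ^ (6 * (r + 1)) / (r : ℝ) ^ (2 * (a - 6 * r)) ∧
          (2 : ℝ) ^ (6 * (r + 1)) / (r : ℝ) ^ (2 * (a - 6 * r)) < 1 ∧
          (∀ m : ℤ, φa ≠ Real.pi / 2 + m * Real.pi) ∧
          ∃ u v w : ℕ → ℝ,
            Filter.Tendsto u Filter.atTop (nhds 0) ∧
            Filter.Tendsto v Filter.atTop (nhds 0) ∧
            Filter.Tendsto w Filter.atTop (nhds 0) ∧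
            ∃ N : ℕ, ∀ n : ℕ, N ≤ n →
              |S a r n| = εa ^ ((n : ℝ) * (1 + u n)) ∧
              |Sder a r n| = εa'' ^ ((n : ℝ) * (1 + v n)) *
                |Real.cos ((n : ℝ) * ωa + φa) + w n| := by
  obtain ⟨A, hA⟩ := OddZeta.exists_forall_admissible
  exact ⟨A, fun a _ ha r hr => stmt18_general (hA a ha r hr)⟩
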